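/- arXiv:2209.00418 — 2 statements merged into one kernel-verified Lean document; each statement's English description precedes it below -/
import Mathlib

section
/- For every n ≥ 1, the Tamari lattice Tam_n contains exactly (1/(n+1))·binomial(2n,n) linear intervals of height 0, exactly binomial(2n−1, n−2) linear intervals of height 1, exactly 2·binomial(2n−k, n−k−1) linear intervals of height k for each 2 ≤ k < n, and none of height k ≥ n; in total, Tam_n contains (1/(n+1))·binomial(2n,n) + binomial(2n−1, n−2) + 2·binomial(2n−1, n+2) linear intervals. -/
/-!
Common definitions.  A letter of a word is a `Bool`: `true` is an up step `u`,
`false` is a down step `d`.  Positions in words are 0-based.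
-/

/-- A (possibly empty) Dyck word: as many `u`'s as `d`'s, and every
prefix has at least as many `u`'s as `d`'s. -/
def IsDyckPath (w : List Bool) : Prop :=
  w.count true = w.count false ∧ ∀ p, p <+: w → p.count false ≤ p.count true

/-- A Dyck word of size `n`: `n` up steps, `n` down steps, every prefix has
at least as many `u`'s as `d`'s. -/
def IsDyckWord (n : ℕ) (w : List Bool) : Prop :=
  w.count true = n ∧ w.count false = n ∧ ∀ p, p <+: w → p.count false ≤ p.count true

/-- The set of Dyck words of size `n`. -/
def DyckSet (n : ℕ) : Set (List Bool) := {w | IsDyckWord n w}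

/-- An increment function: a `{0,1}`-valued function (the paper's `δ : {1,…,n} → {0,1}`;
only the values on `{1,…,n}` are ever used). -/
def IsIncFun (δ : ℕ → ℤ) : Prop := ∀ i, δ i = 0 ∨ δ i = 1

/-- The 0-based position in `w` of the `i`-th up step `u_i` (`i` is 1-based). -/
def upPos (w : List Bool) (i : ℕ) : ℕ :=
  ((List.range w.length).filter fun q => w.getD q false = true).getD (i - 1) 0

/-- `h_i(w)`: the (1-based, between 1 and 2n) position of the up step `u_i` in `w`. -/
def hpos (w : List Bool) (i : ℕ) : ℕ := upPos w i + 1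

/-- The change of δ-altitude produced by the letter at position `q` of `w`:
the up step `u_i` contributes `δ i`, a down step contributes `-1`. -/
def stepVal (δ : ℕ → ℤ) (w : List Bool) (q : ℕ) : ℤ :=
  if w.getD q false = true then δ ((w.take (q + 1)).count true) else -1

/-- The δ-elevation of the factor of `w` occupying positions `a, …, b-1`. -/
def elev (δ : ℕ → ℤ) (w : List Bool) (a b : ℕ) : ℤ :=
  ∑ q ∈ Finset.Ico a b, stepVal δ w q

/-- `C` is the δ-excursion of the up step of `w` at position `p`:
the smallest (nonempty) factor of `w` starting at `p` whose δ-elevation is `0`. -/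
def IsDeltaExcAt (δ : ℕ → ℤ) (w : List Bool) (p : ℕ) (C : List Bool) : Prop :=
  w.getD p false = true ∧
  ∃ m, 0 < m ∧ p + m ≤ w.length ∧ C = (w.drop p).take m ∧
    elev δ w p (p + m) = 0 ∧ ∀ m', 0 < m' → m' < m → elev δ w p (p + m') ≠ 0

/-- `C` is the excursion of the up step of `w` at position `p`: the smallest factor
of `w` starting at `p` that is itself a Dyck word. -/
def IsExcursionAt (w : List Bool) (p : ℕ) (C : List Bool) : Prop :=
  w.getD p false = true ∧
  ∃ m, 0 < m ∧ p + m ≤ w.length ∧ C = (w.drop p).take m ∧ IsDyckPath C ∧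
    ∀ m', 0 < m' → m' < m → ¬ IsDyckPath ((w.drop p).take m')

/-- `ℓ_i(w; δ)`: the length of the δ-excursion of `u_i` in `w`. -/
noncomputable def excLen (δ : ℕ → ℤ) (w : List Bool) (i : ℕ) : ℕ :=
  sInf {m | 0 < m ∧ elev δ w (upPos w i) (upPos w i + m) = 0}

/-- `Q` is the δ-rotation of `P` at some up step: `P = A d C B` with `d u_i` a valley
and `C` the δ-excursion of `u_i`, and `Q = A C d B`. -/
def DeltaRot (δ : ℕ → ℤ) (P Q : List Bool) : Prop :=
  ∃ A C B, P = A ++ false :: (C ++ B) ∧ Q = A ++ (C ++ false :: B) ∧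
    IsDeltaExcAt δ P (A.length + 1) C

/-- The alt-Tamari order `Tam^δ`: reflexive transitive closure of δ-rotations. -/
def altLE (δ : ℕ → ℤ) : List Bool → List Bool → Prop :=
  Relation.ReflTransGen (DeltaRot δ)

/-- The Tamari order: the alt-Tamari order for `δ ≡ 1` (the δ-excursion of any up step
is then its excursion). -/
def tamLE : List Bool → List Bool → Prop := altLE fun _ => 1

/-- The height (number of `u`'s minus number of `d`'s) of the length-`j` prefix of `w`. -/
def prefHeight (w : List Bool) (j : ℕ) : ℤ :=
  ((w.take j).count true : ℤ) - ((w.take j).count false : ℤ)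

/-- The Dyck (inclusion) order: every prefix height of `P` is at most that of `Q`. -/
def dyckLE (P Q : List Bool) : Prop := ∀ j, prefHeight P j ≤ prefHeight Q j

/-- Strict version of a relation `le`. -/
def ltOf (le : List Bool → List Bool → Prop) (P Q : List Bool) : Prop :=
  le P Q ∧ ¬ le Q P

/-- There is a strict chain `P = c 0 < c 1 < ⋯ < c k = Q` inside `S`. -/
def HasChainIn (S : Set (List Bool)) (le : List Bool → List Bool → Prop)
    (P Q : List Bool) (k : ℕ) : Prop :=
  ∃ c : ℕ → List Bool, c 0 = P ∧ c k = Q ∧ (∀ i ≤ k, c i ∈ S) ∧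
    ∀ i < k, ltOf le (c i) (c (i + 1))

/-- The interval `[P,Q]` of the poset `(S, le)` has height `k`: `k` is the maximal
length of a chain from `P` to `Q`. -/
def IntervalHeight (S : Set (List Bool)) (le : List Bool → List Bool → Prop)
    (P Q : List Bool) (k : ℕ) : Prop :=
  HasChainIn S le P Q k ∧ ∀ m, HasChainIn S le P Q m → m ≤ k

/-- The interval `[P,Q]` of the poset `(S, le)` is linear: it is totally ordered. -/
def LinearInterval (S : Set (List Bool)) (le : List Bool → List Bool → Prop)
    (P Q : List Bool) : Prop :=
  P ∈ S ∧ Q ∈ S ∧ le P Q ∧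
  ∀ R R', R ∈ S → R' ∈ S → le P R → le R Q → le P R' → le R' Q → le R R' ∨ le R' R

/-- `Q` covers `P` in the poset `(S, le)`. -/
def CovIn (S : Set (List Bool)) (le : List Bool → List Bool → Prop)
    (P Q : List Bool) : Prop :=
  P ∈ S ∧ Q ∈ S ∧ ltOf le P Q ∧ ∀ R ∈ S, ¬ (ltOf le P R ∧ ltOf le R Q)

/-- The number of valleys (factors `du`) of `w`. -/
def valleys (w : List Bool) : ℕ :=
  ((List.range w.length).filter fun q => !w.getD q true && w.getD (q + 1) false).length

/-!
Recording where the excursions of a Dyck word end identifies the Tamari lattice with the bracket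
vectors, ordered componentwise. In a linear interval `[x, y]` the entries of `x` that change all
have the same value `m`. If the first of them is raised to `x m` exactly, then `y` is obtained from
`x` by raising the first `k` entries equal to `m` to `x m`: the interval is a right interval.
Otherwise only one entry changes, and the mirror image of the interval is a right interval of
height at least `2`. The two cases exclude each other for `k ≥ 2`, as right intervals of height `k`
change `k` entries; so mirroring doubles the count for `k ≥ 2`.

Right intervals of height `k` correspond to factorizations `X dᵏ u Y` of Dyck words. Reversing `X`
turns `X` and `Y` into paths from heights `a + k` and `a + 1` down to `0`, and by first passage
such pairs are single paths from height `2a + k + 2` to `0`. Their numbers are differences of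
binomial coefficients, which telescope over `a` to `binom (2n-k) (n+1)`.
-/

section Intervals

variable {α : Type*} [Preorder α] {x y : α} {k : ℕ}

/-- The interval `[x, y]` is nonempty and totally ordered. -/
def IsLinearInterval (x y : α) : Prop :=
  x ≤ y ∧ IsChain (· ≤ ·) (Set.Icc x y)

/-- The interval `[x, y]` has height `k`: the longest strict chains from `x` to `y` have
length `k`. -/
def HasIntervalHeight (x y : α) (k : ℕ) : Prop :=
  IsGreatest {l | ∃ p : LTSeries α, p.head = x ∧ p.last = y ∧ p.length = l} k

theorem hasIntervalHeight_zero_iff : HasIntervalHeight x y 0 ↔ x = y := by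
  constructor
  · rintro ⟨⟨p, rfl, rfl, hp⟩, -⟩
    exact congrArg p (Fin.ext (by simp [hp]))
  · rintro rfl
    refine ⟨⟨RelSeries.singleton _ x, rfl, rfl, rfl⟩, ?_⟩
    rintro l ⟨p, hx, hy, rfl⟩
    by_contra hl
    have hlt : p.head < p.last := p.strictMono (Fin.lt_def.mpr (not_le.mp hl))
    exact (hx ▸ hy ▸ hlt).false

theorem HasIntervalHeight.ne (h : HasIntervalHeight x y k) (hk : 0 < k) : x ≠ y :=
  fun hxy => hk.ne (IsGreatest.unique (hasIntervalHeight_zero_iff.mpr hxy) h)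

theorem isLinearInterval_self {α : Type*} [PartialOrder α] (x : α) : IsLinearInterval x x :=
  ⟨le_rfl, by simp [Set.Icc_self]⟩

theorem IsLinearInterval.of_strictMonoOn {u : ℕ → α} (hu : StrictMonoOn u (Set.Iic k))
    (h : Set.Icc (u 0) (u k) ⊆ u '' Set.Iic k) : IsLinearInterval (u 0) (u k) := by
  refine ⟨hu.monotoneOn (Nat.zero_le k) Set.self_mem_Iic (Nat.zero_le k), fun a ha b hb _ => ?_⟩
  obtain ⟨i, hi, rfl⟩ := h ha
  obtain ⟨j, hj, rfl⟩ := h hb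
  exact (le_total i j).imp (hu.monotoneOn hi hj) (hu.monotoneOn hj hi)

theorem HasIntervalHeight.of_strictMonoOn {u : ℕ → α} (hu : StrictMonoOn u (Set.Iic k))
    (h : Set.Icc (u 0) (u k) ⊆ u '' Set.Iic k) : HasIntervalHeight (u 0) (u k) k := by
  refine ⟨⟨⟨k, fun i => u i, fun i => hu (Set.mem_Iic.mpr i.castSucc.is_le)
      (Set.mem_Iic.mpr i.succ.is_le) (by simp)⟩,
    rfl, rfl, rfl⟩, ?_⟩
  rintro l ⟨p, hx, hy, rfl⟩
  have hmem (i) : p i ∈ u '' Set.Iic k :=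
    h ⟨hx ▸ p.strictMono.monotone (Fin.zero_le i), hy ▸ p.strictMono.monotone (Fin.le_last i)⟩
  have hcard := Set.ncard_le_ncard (Set.range_subset_iff.mpr hmem) ((Set.finite_Iic k).image u)
  rw [← Set.image_univ, Set.ncard_image_of_injective _ p.strictMono.injective,
    Set.ncard_univ, Nat.card_fin] at hcard
  have := hcard.trans (Set.ncard_image_le (Set.finite_Iic k))
  rw [← Finset.coe_Iic, Set.ncard_coe_finset, Nat.card_Iic] at this
  omega

section AntitoneInvolution

variable {σ : α → α} (hσ : Antitone σ) (hinv : Function.Involutive σ)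
include hσ hinv

theorem IsLinearInterval.antitone_involutive (h : IsLinearInterval x y) :
    IsLinearInterval (σ y) (σ x) := by
  refine ⟨hσ h.1, fun a ha b hb hab => ?_⟩
  have hmem {c} (hc : c ∈ Set.Icc (σ y) (σ x)) : σ c ∈ Set.Icc x y :=
    ⟨(hinv x).symm.trans_le (hσ hc.2), (hσ hc.1).trans_eq (hinv y)⟩
  rw [← hinv a, ← hinv b]
  exact (h.2 (hmem hb) (hmem ha) (hinv.injective.ne hab.symm)).imp (@hσ _ _) (@hσ _ _)

theorem HasIntervalHeight.antitone_involutive (h : HasIntervalHeight x y k) :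
    HasIntervalHeight (σ y) (σ x) k := by
  have hstrict : StrictAnti σ := fun a b hab =>
    lt_of_le_not_ge (hσ hab.le) fun hba => hab.not_ge (by simpa only [hinv _] using hσ hba)
  have hrev (p : LTSeries α) :
      ∃ q : LTSeries α, q.head = σ p.last ∧ q.last = σ p.head ∧ q.length = p.length :=
    ⟨⟨p.length, fun i => σ (p i.rev), fun i => hstrict (p.strictMono (by simp))⟩,
      by simp [RelSeries.head, RelSeries.last], by simp [RelSeries.head, RelSeries.last], rfl⟩
  obtain ⟨⟨p, rfl, rfl, rfl⟩, hmax⟩ := h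
  refine ⟨hrev p, ?_⟩
  rintro l ⟨q, hq, hq', rfl⟩
  obtain ⟨r, hr, hr', hl⟩ := hrev q
  exact hmax ⟨r, by rw [hr, hq', hinv], by rw [hr', hq, hinv], hl⟩

end AntitoneInvolution

theorem ncard_isLinearInterval_eq_sum [Finite α] {N : ℕ}
    (h : ∀ x y : α, IsLinearInterval x y → ∃ k < N, HasIntervalHeight x y k) :
    {p : α × α | IsLinearInterval p.1 p.2}.ncard = ∑ k ∈ Finset.range N,
      {p : α × α | IsLinearInterval p.1 p.2 ∧ HasIntervalHeight p.1 p.2 k}.ncard := by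
  have hunion : {p : α × α | IsLinearInterval p.1 p.2} = ⋃ k ∈ Finset.range N,
      {p : α × α | IsLinearInterval p.1 p.2 ∧ HasIntervalHeight p.1 p.2 k} := by
    ext p
    simp only [Set.mem_ofPred_eq, Set.mem_iUnion, Finset.mem_range, exists_prop]
    exact ⟨fun hp => (h _ _ hp).imp fun k hk => ⟨hk.1, hp, hk.2⟩, fun ⟨_, _, hp, _⟩ => hp⟩
  rw [hunion, ← Finset.set_biUnion_coe, (Finset.finite_toSet _).ncard_biUnion
    (fun _ _ => Set.toFinite _), finsum_mem_coe_finset]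
  exact fun k _ l _ hkl => Set.disjoint_left.mpr fun p hk hl => hkl (hk.2.unique hl.2)

end Intervals

section Transfer

theorem ncard_pairs_congr {α : Type*} {S : Set (List Bool)} {E : S ≃ α}
    {p : List Bool → List Bool → Prop} {r : α → α → Prop}
    (hp : ∀ P Q, p P Q → P ∈ S ∧ Q ∈ S) (h : ∀ P Q : S, p P Q ↔ r (E P) (E Q)) :
    {x : List Bool × List Bool | p x.1 x.2}.ncard = {x : α × α | r x.1 x.2}.ncard := by
  have himage : {x : List Bool × List Bool | p x.1 x.2} =
      Prod.map (Subtype.val ∘ E.symm) (Subtype.val ∘ E.symm) '' {x : α × α | r x.1 x.2} := by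
    ext ⟨P, Q⟩
    constructor
    · intro hPQ
      obtain ⟨hP, hQ⟩ := hp P Q hPQ
      exact ⟨(E ⟨P, hP⟩, E ⟨Q, hQ⟩), (h ⟨P, hP⟩ ⟨Q, hQ⟩).mp hPQ, by simp⟩
    · rintro ⟨⟨a, b⟩, hab, hPQ⟩
      obtain ⟨rfl, rfl⟩ := Prod.mk.inj hPQ
      exact (h _ _).mpr (by simpa using hab)
  have hinj := Subtype.val_injective.comp E.symm.injective
  rw [himage, Set.ncard_image_of_injective _ (hinj.prodMap hinj)]

variable {α : Type*} [Preorder α] {S : Set (List Bool)} {le : List Bool → List Bool → Prop}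
  {E : S ≃ α} (hE : ∀ P Q : S, le P Q ↔ E P ≤ E Q)
include hE

theorem linearInterval_iff_isLinearInterval (P Q : S) :
    LinearInterval S le P Q ↔ IsLinearInterval (E P) (E Q) := by
  constructor
  · rintro ⟨-, -, hPQ, h⟩
    refine ⟨(hE P Q).mp hPQ, fun a ha b hb _ => ?_⟩
    obtain ⟨R, rfl⟩ := E.surjective a
    obtain ⟨R', rfl⟩ := E.surjective b
    simp only [Set.mem_Icc, ← hE] at ha hb ⊢
    exact h R R' R.2 R'.2 ha.1 ha.2 hb.1 hb.2
  · rintro ⟨hPQ, h⟩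
    refine ⟨P.2, Q.2, (hE P Q).mpr hPQ, fun R R' hR hR' h₁ h₂ h₃ h₄ => ?_⟩
    lift R to S using hR
    lift R' to S using hR'
    rw [hE] at h₁ h₂ h₃ h₄ ⊢
    rw [hE]
    exact h.total ⟨h₁, h₂⟩ ⟨h₃, h₄⟩

theorem hasChainIn_iff_exists_ltSeries (P Q : S) (k : ℕ) :
    HasChainIn S le P Q k ↔
      ∃ p : LTSeries α, p.head = E P ∧ p.last = E Q ∧ p.length = k := by
  have hlt (R R' : S) : ltOf le R R' ↔ E R < E R' := by
    rw [ltOf, hE, hE, lt_iff_le_not_ge]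
  constructor
  · rintro ⟨c, h0, hk, hS, hc⟩
    refine ⟨⟨k, fun i => E ⟨c i, hS i i.is_le⟩, fun i => (hlt _ _).mp (hc i i.is_lt)⟩, ?_, ?_, rfl⟩
    · exact congrArg E (Subtype.ext h0)
    · exact congrArg E (Subtype.ext hk)
  · rintro ⟨p, h0, hk, rfl⟩
    refine ⟨fun i => E.symm (p ⟨min i p.length, by omega⟩), ?_, ?_, fun _ _ => Subtype.prop _,
      fun i hi => (hlt _ _).mpr ?_⟩
    · exact congrArg Subtype.val (E.symm_apply_eq.mpr ((congrArg p (Fin.ext (by simp))).trans h0))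
    · exact congrArg Subtype.val (E.symm_apply_eq.mpr ((congrArg p (Fin.ext (by simp))).trans hk))
    · simp only [E.apply_symm_apply]
      exact p.strictMono (Fin.mk_lt_mk.mpr (by omega))

theorem intervalHeight_iff_hasIntervalHeight (P Q : S) (k : ℕ) :
    IntervalHeight S le P Q k ↔ HasIntervalHeight (E P) (E Q) k := by
  simp only [IntervalHeight, hasChainIn_iff_exists_ltSeries hE]
  rfl

end Transfer

section BracketVectors

variable {n m k : ℕ} {e f g : ℕ → ℕ}

/-- The bracket vectors of size `n`, which encode the Dyck words of size `n`: the up steps of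
the excursion of `u_{j+1}` are `u_{j+1}, …, u_{e j}`. The entries `e j` with `n ≤ j` carry no
information and are normalized to `j + 1`. -/
structure IsBracketVector (n : ℕ) (e : ℕ → ℕ) : Prop where
  lt_apply : ∀ j, j < e j
  apply_le : ∀ j < n, e j ≤ n
  apply_of_le : ∀ j, n ≤ j → e j = j + 1
  apply_le_apply : ∀ i j, i ≤ j → j < e i → e j ≤ e i

/-- The poset of bracket vectors of size `n`, ordered componentwise: it is isomorphic to the
Tamari lattice. -/
abbrev BracketVector (n : ℕ) : Type := {e : ℕ → ℕ // IsBracketVector n e}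

instance : Finite (BracketVector n) := by
  refine Finite.of_injective (β := Fin n → Fin (n + 1))
    (fun x j => ⟨x.1 j, Nat.lt_succ_of_le (x.2.apply_le j j.is_lt)⟩)
    fun x y hxy => Subtype.ext (funext fun j => ?_)
  rcases lt_or_ge j n with hj | hj
  · exact congrArg Fin.val (congrFun hxy ⟨j, hj⟩)
  · rw [x.2.apply_of_le j hj, y.2.apply_of_le j hj]

/-- The vector `e` with the `k` outermost (that is, leftmost) excursions ending at `m` extended
by the excursion that starts there. On Dyck words this replaces a factor `dᵏ C` by `C dᵏ`, where
`C` is the excursion of `u_{m+1}`; for `k = 1` it is a rotation. -/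
def raiseFirst (e : ℕ → ℕ) (m k j : ℕ) : ℕ :=
  if e j = m ∧ Nat.count (e · = m) j < k then e m else e j

theorem raiseFirst_of_lt_count {j : ℕ} (hj : e j = m) (hk : Nat.count (e · = m) j < k) :
    raiseFirst e m k j = e m :=
  if_pos ⟨hj, hk⟩

theorem raiseFirst_of_le_count {j : ℕ} (hk : k ≤ Nat.count (e · = m) j) :
    raiseFirst e m k j = e j :=
  if_neg fun h => hk.not_gt h.2

theorem raiseFirst_of_ne {j : ℕ} (hj : e j ≠ m) : raiseFirst e m k j = e j :=
  if_neg fun h => hj h.1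

@[simp]
theorem raiseFirst_zero (e : ℕ → ℕ) (m : ℕ) : raiseFirst e m 0 = e :=
  funext fun _ => raiseFirst_of_le_count (Nat.zero_le _)

theorem raiseFirst_mono (hm : m ≤ e m) : Monotone (raiseFirst e m) := by
  intro k l hkl j
  unfold raiseFirst
  grind

theorem le_raiseFirst (hm : m ≤ e m) (k : ℕ) : e ≤ raiseFirst e m k :=
  (raiseFirst_zero e m).symm.trans_le (raiseFirst_mono hm (Nat.zero_le k))

theorem exists_count_eq_of_lt_count {p : ℕ → Prop} [DecidablePred p] {l n : ℕ}
    (h : l < Nat.count p n) : ∃ j < n, p j ∧ Nat.count p j = l := by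
  induction n with
  | zero => simp at h
  | succ n ih =>
    rw [Nat.count_succ] at h
    by_cases hl : l < Nat.count p n
    · obtain ⟨j, hj, hpj⟩ := ih hl
      exact ⟨j, hj.trans n.lt_succ_self, hpj⟩
    · exact ⟨n, n.lt_succ_self, by grind⟩

theorem raiseFirst_strictMonoOn (hm : m < e m) :
    StrictMonoOn (raiseFirst e m) (Set.Iic (Nat.count (e · = m) m)) := by
  intro k _ l hl hkl
  obtain ⟨j, -, hj, hcount⟩ := exists_count_eq_of_lt_count (hkl.trans_le hl)
  refine lt_of_le_of_ne (raiseFirst_mono hm.le hkl.le) fun h => hm.ne ?_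
  rw [← raiseFirst_of_lt_count hj (hcount.trans_lt hkl), ← h, raiseFirst_of_le_count hcount.ge, hj]

theorem isBracketVector_raiseFirst (he : IsBracketVector n e) (hm : m < n) (k : ℕ) :
    IsBracketVector n (raiseFirst e m k) where
  lt_apply j := (he.lt_apply j).trans_le (le_raiseFirst (he.lt_apply m).le k j)
  apply_le j hj := by
    unfold raiseFirst
    split_ifs
    exacts [he.apply_le m hm, he.apply_le j hj]
  apply_of_le j hj := by
    have := he.apply_of_le j hj
    rw [raiseFirst_of_ne (by omega), this]
  apply_le_apply i j hij hj := by
    have hm' := he.lt_apply m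
    have hcount : Nat.count (e · = m) i ≤ Nat.count (e · = m) j := Nat.count_monotone _ hij
    have := he.lt_apply j
    have := he.apply_le_apply i j hij
    have := he.apply_le_apply m j
    have := he.apply_le_apply i m
    unfold raiseFirst at hj ⊢
    grind

namespace IsBracketVector

theorem raiseFirst_le (he : IsBracketVector n e) (hf : IsBracketVector n f) (hef : e ≤ f) {j : ℕ}
    (hj : e j < f j) : raiseFirst e (e j) (Nat.count (e · = e j) j + 1) ≤ f := by
  intro i
  by_cases hi : e i = e j ∧ Nat.count (e · = e j) i < Nat.count (e · = e j) j + 1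
  · rw [raiseFirst_of_lt_count hi.1 hi.2]
    have hij : i ≤ j := by
      by_contra! hji
      exact hi.2.not_ge (Nat.count_strict_mono rfl hji)
    have hjfi : f j ≤ f i :=
      hf.apply_le_apply i j hij ((he.lt_apply j).trans_le (hi.1.symm.trans_le (hef i)))
    calc e (e j) ≤ f (e j) := hef _
      _ ≤ f i := hf.apply_le_apply i (e j) (hij.trans (he.lt_apply j).le) (hj.trans_le hjfi)
  · exact (if_neg hi).trans_le (hef i)

theorem eq_raiseFirst_of_le (he : IsBracketVector n e) (hg : IsBracketVector n g) (heg : e ≤ g)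
    (h : g ≤ raiseFirst e m k) : ∃ l ≤ k, g = raiseFirst e m l := by
  induction k with
  | zero => exact ⟨0, le_rfl, h.antisymm (by simpa using heg)⟩
  | succ k ih =>
    by_cases hk : g ≤ raiseFirst e m k
    · obtain ⟨l, hl, rfl⟩ := ih hk
      exact ⟨l, hl.trans k.le_succ, rfl⟩
    · obtain ⟨j, hj⟩ : ∃ j, raiseFirst e m k j < g j := by
        simpa only [Pi.le_def, not_forall, not_le] using hk
      have hlt := hj.trans_le (h j)
      obtain ⟨rfl, hcount⟩ : e j = m ∧ Nat.count (e · = m) j = k := by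
        unfold raiseFirst at hlt
        grind
      rw [raiseFirst_of_le_count hcount.ge] at hj
      exact ⟨k + 1, le_rfl, h.antisymm (hcount ▸ he.raiseFirst_le hg heg hj)⟩

end IsBracketVector

variable {x y : BracketVector n}

/-- The right intervals of the paper, `[X dᵏ C B, X C dᵏ B]` with `C` an excursion: they are
obtained by performing `k` rotations at the same up step `u_{m+1}`. -/
def IsRightInterval (k : ℕ) (x y : BracketVector n) : Prop :=
  ∃ m < n, k ≤ Nat.count (x.1 · = m) m ∧ y.1 = raiseFirst x.1 m k

namespace IsRightInterval

theorem lt_size (h : IsRightInterval k x y) : k < n := by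
  obtain ⟨m, hm, hk, -⟩ := h
  exact (hk.trans (Nat.count_le _)).trans_lt hm

theorem exists_strictMonoOn (h : IsRightInterval k x y) : ∃ u : ℕ → BracketVector n,
    StrictMonoOn u (Set.Iic k) ∧ Set.Icc (u 0) (u k) ⊆ u '' Set.Iic k ∧ u 0 = x ∧ u k = y := by
  obtain ⟨m, hm, hk, hy⟩ := h
  refine ⟨fun l => ⟨raiseFirst x.1 m l, isBracketVector_raiseFirst x.2 hm l⟩, ?_, ?_,
    Subtype.ext (raiseFirst_zero _ _), Subtype.ext hy.symm⟩
  · exact fun i hi j hj => raiseFirst_strictMonoOn (x.2.lt_apply m)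
      (Set.Iic_subset_Iic.mpr hk hi) (Set.Iic_subset_Iic.mpr hk hj)
  · rintro z ⟨hz, hz'⟩
    have hxz : x.1 ≤ z.1 := (raiseFirst_zero x.1 m).symm.trans_le hz
    obtain ⟨l, hl, hzl⟩ := x.2.eq_raiseFirst_of_le z.2 hxz hz'
    exact ⟨l, hl, Subtype.ext hzl.symm⟩

theorem isLinearInterval (h : IsRightInterval k x y) : IsLinearInterval x y := by
  obtain ⟨u, hu, hIcc, rfl, rfl⟩ := h.exists_strictMonoOn
  exact .of_strictMonoOn hu hIcc

theorem hasIntervalHeight (h : IsRightInterval k x y) : HasIntervalHeight x y k := by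
  obtain ⟨u, hu, hIcc, rfl, rfl⟩ := h.exists_strictMonoOn
  exact .of_strictMonoOn hu hIcc

end IsRightInterval

end BracketVectors

section Classification

variable {n : ℕ} {e f : ℕ → ℕ} {x y : BracketVector n}

namespace IsBracketVector

theorem apply_lt_size_of_lt (he : IsBracketVector n e) (hf : IsBracketVector n f) {j : ℕ}
    (hj : e j < f j) : e j < n := by
  have hjn : j < n := by
    by_contra! h
    exact hj.ne (by rw [he.apply_of_le j h, hf.apply_of_le j h])
  exact hj.trans_le (hf.apply_le j hjn)

theorem apply_apply_le_of_lt (he : IsBracketVector n e) (hf : IsBracketVector n f) (hef : e ≤ f)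
    {j : ℕ} (hj : e j < f j) : e (e j) ≤ f j :=
  (hef _).trans (hf.apply_le_apply j (e j) (he.lt_apply j).le hj)

theorem update (he : IsBracketVector n e) (hf : IsBracketVector n f) (hef : e ≤ f) {a : ℕ}
    (ha : ∀ i < a, f i = e i) : IsBracketVector n (Function.update e a (f a)) where
  lt_apply j := by
    obtain rfl | h := eq_or_ne j a
    · simpa using hf.lt_apply j
    · simpa [h] using he.lt_apply j
  apply_le j hj := by
    obtain rfl | h := eq_or_ne j a
    · simpa using hf.apply_le j hj
    · simpa [h] using he.apply_le j hj
  apply_of_le j hj := by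
    obtain rfl | h := eq_or_ne j a
    · simpa using hf.apply_of_le j hj
    · simpa [h] using he.apply_of_le j hj
  apply_le_apply i j hij hj := by
    have := hef j
    have := he.apply_le_apply i j hij
    have := hf.apply_le_apply i j hij
    simp only [Function.update_apply] at hj ⊢
    grind

end IsBracketVector

namespace IsLinearInterval

theorem le_or_le (h : IsLinearInterval x y) {u v : ℕ → ℕ} (hu : IsBracketVector n u)
    (hv : IsBracketVector n v) (hxu : x.1 ≤ u) (huy : u ≤ y.1) (hxv : x.1 ≤ v) (hvy : v ≤ y.1) :
    u ≤ v ∨ v ≤ u :=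
  h.2.total (x := ⟨u, hu⟩) (y := ⟨v, hv⟩) ⟨hxu, huy⟩ ⟨hxv, hvy⟩

theorem apply_eq_apply (h : IsLinearInterval x y) {i j : ℕ} (hi : x.1 i < y.1 i)
    (hj : x.1 j < y.1 j) : x.1 i = x.1 j := by
  by_contra hij
  have hraise {i j : ℕ} (hij : x.1 i ≠ x.1 j) :
      ¬ raiseFirst x.1 (x.1 i) (Nat.count (x.1 · = x.1 i) i + 1) ≤
        raiseFirst x.1 (x.1 j) (Nat.count (x.1 · = x.1 j) j + 1) := fun hle => by
    have := hle i
    rw [raiseFirst_of_lt_count rfl (Nat.lt_succ_self _), raiseFirst_of_ne hij] at this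
    exact this.not_gt (x.2.lt_apply _)
  obtain hle | hle := h.le_or_le
    (isBracketVector_raiseFirst x.2 (x.2.apply_lt_size_of_lt y.2 hi) _)
    (isBracketVector_raiseFirst x.2 (x.2.apply_lt_size_of_lt y.2 hj) _)
    (le_raiseFirst (x.2.lt_apply _).le _) (x.2.raiseFirst_le y.2 h.1 hi)
    (le_raiseFirst (x.2.lt_apply _).le _) (x.2.raiseFirst_le y.2 h.1 hj)
  exacts [hraise hij hle, hraise (Ne.symm hij) hle]

theorem exists_isRightInterval (h : IsLinearInterval x y) {a : ℕ} (ha : x.1 a < y.1 a)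
    (hmin : ∀ i < a, y.1 i = x.1 i) (hya : y.1 a = x.1 (x.1 a)) :
    ∃ k, IsRightInterval k x y := by
  have hle : y.1 ≤ raiseFirst x.1 (x.1 a) (Nat.count (x.1 · = x.1 a) (x.1 a)) := fun i => by
    obtain hi | hi := (h.1 i).eq_or_lt
    · exact hi.symm.trans_le (le_raiseFirst (x.2.lt_apply _).le _ i)
    · have hia := h.apply_eq_apply hi ha
      have hai : a ≤ i := not_lt.mp fun h' => hi.ne (hmin i h').symm
      have hlt : i < x.1 a := (x.2.lt_apply i).trans_eq hia
      rw [raiseFirst_of_lt_count hia (Nat.count_strict_mono hia hlt), ← hya]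
      exact y.2.apply_le_apply a i hai (hlt.trans ha)
  obtain ⟨k, hk, hy⟩ := x.2.eq_raiseFirst_of_le y.2 h.1 hle
  exact ⟨k, _, x.2.apply_lt_size_of_lt y.2 ha, hk, hy⟩

theorem apply_eq_of_ne (h : IsLinearInterval x y) {a : ℕ} (hmin : ∀ i < a, y.1 i = x.1 i)
    (ha : x.1 (x.1 a) < y.1 a) {i : ℕ} (hia : i ≠ a) : y.1 i = x.1 i := by
  by_contra! hne
  have hai : a ≤ i := not_lt.mp fun h' => hne (hmin i h')
  have hi : x.1 i < y.1 i := (h.1 i).lt_of_ne' hne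
  have hxia : x.1 a = x.1 i := h.apply_eq_apply ((x.2.lt_apply _).trans ha) hi
  obtain hle | hle := h.le_or_le (x.2.update y.2 h.1 hmin)
    (isBracketVector_raiseFirst x.2 (x.2.apply_lt_size_of_lt y.2 hi) _)
    (le_update_iff.mpr ⟨h.1 a, fun _ _ => le_rfl⟩)
    (update_le_iff.mpr ⟨le_rfl, fun j _ => h.1 j⟩)
    (le_raiseFirst (x.2.lt_apply _).le _) (x.2.raiseFirst_le y.2 h.1 hi)
  · have hle_a := hle a
    rw [Function.update_self, raiseFirst_of_lt_count hxia
      (Nat.lt_succ_of_le (Nat.count_monotone _ hai)), ← hxia] at hle_a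
    exact hle_a.not_gt ha
  · have hle_i := hle i
    rw [Function.update_of_ne hia, raiseFirst_of_lt_count rfl (Nat.lt_succ_self _)] at hle_i
    exact hle_i.not_gt (x.2.lt_apply _)

theorem isRightInterval_or (h : IsLinearInterval x y) (hxy : x ≠ y) :
    (∃ k, IsRightInterval k x y) ∨
      ∃ a, x.1 (x.1 a) < y.1 a ∧ ∀ i, i ≠ a → y.1 i = x.1 i := by
  obtain ⟨a, ha, hmin⟩ : ∃ a, y.1 a ≠ x.1 a ∧ ∀ i < a, y.1 i = x.1 i := by
    have hex : ∃ a, y.1 a ≠ x.1 a := Function.ne_iff.mp (Subtype.coe_ne_coe.mpr hxy.symm)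
    exact ⟨Nat.find hex, Nat.find_spec hex, fun i hi => not_not.mp (Nat.find_min hex hi)⟩
  have hlt := (h.1 a).lt_of_ne' ha
  obtain hya | hya := (x.2.apply_apply_le_of_lt y.2 h.1 hlt).eq_or_lt
  · exact .inl (h.exists_isRightInterval hlt hmin hya.symm)
  · exact .inr ⟨a, hya, fun i => h.apply_eq_of_ne hmin hya⟩

end IsLinearInterval

end Classification

section Duality

variable {n k m l : ℕ} {e f : ℕ → ℕ} {x y : BracketVector n}

/-- The least `i` such that the excursions of `u_{i+1}, …, u_m` do not extend beyond `u_m`.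
Read from right to left, `leftEnd` plays the role of a bracket vector. -/
noncomputable def leftEnd (e : ℕ → ℕ) (m : ℕ) : ℕ :=
  sInf {i | ∀ l, i ≤ l → l < m → e l ≤ m}

theorem leftEnd_le_of_forall {i : ℕ} (h : ∀ l, i ≤ l → l < m → e l ≤ m) : leftEnd e m ≤ i :=
  Nat.sInf_le h

theorem leftEnd_le (e : ℕ → ℕ) (m : ℕ) : leftEnd e m ≤ m :=
  leftEnd_le_of_forall fun _ hml hlm => absurd hlm hml.not_gt

theorem apply_le_of_leftEnd_le (h : leftEnd e m ≤ l) (hl : l < m) : e l ≤ m :=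
  Nat.sInf_mem (s := {i | ∀ l, i ≤ l → l < m → e l ≤ m})
    ⟨m, fun _ hml hlm => absurd hlm hml.not_gt⟩ l h hl

theorem lt_leftEnd {j : ℕ} (hjl : j ≤ l) (hlm : l < m) (h : m < e l) : j < leftEnd e m := by
  by_contra! hj
  exact h.not_ge (apply_le_of_leftEnd_le (hj.trans hjl) hlm)

theorem lt_apply_leftEnd_sub_one (h : 0 < leftEnd e m) : m < e (leftEnd e m - 1) := by
  by_contra! hle
  have : leftEnd e m ≤ leftEnd e m - 1 := leftEnd_le_of_forall fun l hl hlm => by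
    obtain rfl | hlt := hl.eq_or_lt
    · exact hle
    · exact apply_le_of_leftEnd_le (by omega) hlm
  omega

theorem leftEnd_eq {i : ℕ} (him : i ≤ m) (h : ∀ l, i ≤ l → l < m → e l ≤ m)
    (h' : 0 < i → m < e (i - 1)) : leftEnd e m = i := by
  refine (leftEnd_le_of_forall h).antisymm ?_
  obtain rfl | hi := Nat.eq_zero_or_pos i
  · exact Nat.zero_le _
  · have := lt_leftEnd le_rfl (by omega) (h' hi)
    omega

theorem leftEnd_mono (h : e ≤ f) (m : ℕ) : leftEnd e m ≤ leftEnd f m :=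
  leftEnd_le_of_forall fun l hl hlm => (h l).trans (apply_le_of_leftEnd_le hl hlm)

theorem leftEnd_raiseFirst_of_ne (he : IsBracketVector n e) (hl : l ≠ m) :
    leftEnd (raiseFirst e m k) l = leftEnd e l := by
  refine (leftEnd_le_of_forall fun i hi hil => ?_).antisymm
    (leftEnd_mono (le_raiseFirst (he.lt_apply m).le k) l)
  have hle := apply_le_of_leftEnd_le hi hil
  unfold raiseFirst
  split_ifs with h
  · have := he.lt_apply i
    exact apply_le_of_leftEnd_le (by omega) (by omega)
  · exact hle

theorem leftEnd_le_of_apply_le (he : IsBracketVector n e) {j : ℕ} (hj : e j ≤ m)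
    (h : ∀ l, e j ≤ l → l < m → e l ≤ m) : leftEnd e m ≤ j :=
  leftEnd_le_of_forall fun l hjl hlm => by
    obtain hl | hl := lt_or_ge l (e j)
    · exact (he.apply_le_apply j l hjl hl).trans hj
    · exact h l hl hlm

/-- The mirror image of a bracket vector, which records the excursions read from right to
left. -/
noncomputable def mirror (n : ℕ) (e : ℕ → ℕ) (i : ℕ) : ℕ :=
  if i < n then n - leftEnd e (n - 1 - i) else i + 1

theorem mirror_of_lt {i : ℕ} (hi : i < n) : mirror n e i = n - leftEnd e (n - 1 - i) :=
  if_pos hi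

theorem mirror_of_le {i : ℕ} (hi : n ≤ i) : mirror n e i = i + 1 :=
  if_neg hi.not_gt

theorem isBracketVector_mirror (n : ℕ) (e : ℕ → ℕ) : IsBracketVector n (mirror n e) where
  lt_apply j := by
    have := leftEnd_le e (n - 1 - j)
    unfold mirror
    split_ifs <;> omega
  apply_le j hj := by simp [mirror_of_lt hj]
  apply_of_le _ := mirror_of_le
  apply_le_apply i j hij hj := by
    obtain hi | hi := le_or_gt n i
    · rw [mirror_of_le hi] at hj
      rw [show j = i by omega]
    rw [mirror_of_lt hi] at hj ⊢
    rw [mirror_of_lt (by omega)]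
    refine Nat.sub_le_sub_left ?_ n
    by_contra! hlt
    have hlt' := lt_apply_leftEnd_sub_one ((Nat.zero_le _).trans_lt hlt)
    have := apply_le_of_leftEnd_le (e := e) (Nat.le_sub_one_of_lt hlt) (by omega)
    omega

theorem mirror_antitone (n : ℕ) : Antitone (mirror n) := by
  intro e f h j
  unfold mirror
  split_ifs
  · exact Nat.sub_le_sub_left (leftEnd_mono h _) n
  · exact le_rfl

theorem leftEnd_mirror (he : IsBracketVector n e) {j : ℕ} (hj : j < n) :
    leftEnd (mirror n e) (n - 1 - j) = n - e j := by
  have hlt := he.lt_apply j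
  have hle := he.apply_le j hj
  refine leftEnd_eq (by omega) (fun l hl hlj => ?_) fun hpos => ?_
  · have : j < leftEnd e (n - 1 - l) := lt_leftEnd le_rfl (by omega) (by omega)
    rw [mirror_of_lt (by omega)]
    omega
  · have : leftEnd e (e j) ≤ j := leftEnd_le_of_apply_le he le_rfl fun l hl hl' => by omega
    rw [mirror_of_lt (by omega), show n - 1 - (n - e j - 1) = e j by omega]
    omega

theorem mirror_mirror (he : IsBracketVector n e) : mirror n (mirror n e) = e := by
  funext j
  obtain hj | hj := lt_or_ge j n
  · rw [mirror_of_lt hj, leftEnd_mirror he hj, Nat.sub_sub_self (he.apply_le j hj)]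
  · rw [mirror_of_le hj, he.apply_of_le j hj]

theorem mirror_raiseFirst_of_ne (he : IsBracketVector n e) {i : ℕ} (hi : n - 1 - i ≠ m) :
    mirror n (raiseFirst e m k) i = mirror n e i := by
  simp only [mirror, leftEnd_raiseFirst_of_ne he hi]

theorem mirror_ne_of_leftEnd_ne (he : leftEnd e m ≤ l) (hf : l < leftEnd f m) (hm : m < n) :
    mirror n e (n - 1 - m) ≠ mirror n f (n - 1 - m) := by
  have := leftEnd_le f m
  rw [mirror_of_lt (by omega), mirror_of_lt (by omega), show n - 1 - (n - 1 - m) = m by omega]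
  omega

theorem exists_mirror_ne_of_apply_apply_lt (he : IsBracketVector n e) (hf : IsBracketVector n f)
    {j : ℕ} (hj : e (e j) < f j) :
    ∃ a b, a ≠ b ∧ mirror n e a ≠ mirror n f a ∧ mirror n e b ≠ mirror n f b := by
  have hlt := he.lt_apply j
  have hlt' := he.lt_apply (e j)
  have hn : f j ≤ n := by
    obtain h | h := lt_or_ge j n
    · exact hf.apply_le j h
    · have := hf.apply_of_le j h
      omega
  refine ⟨n - 1 - e j, n - 1 - e (e j), by omega,
    mirror_ne_of_leftEnd_ne (leftEnd_le_of_apply_le he le_rfl fun l hl hl' => by omega)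
      (lt_leftEnd le_rfl hlt (by omega)) (by omega),
    mirror_ne_of_leftEnd_ne (leftEnd_le_of_apply_le he hlt'.le fun l hl hl' =>
      he.apply_le_apply (e j) l hl hl') (lt_leftEnd le_rfl (by omega) hj) (by omega)⟩

/-- The mirror image as an anti-automorphism of the poset of bracket vectors. -/
noncomputable def BracketVector.dual (x : BracketVector n) : BracketVector n :=
  ⟨mirror n x.1, isBracketVector_mirror n x.1⟩

open BracketVector

theorem BracketVector.dual_antitone : Antitone (dual (n := n)) :=
  fun _ _ h => mirror_antitone n h

theorem BracketVector.dual_involutive : Function.Involutive (dual (n := n)) :=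
  fun x => Subtype.ext (mirror_mirror x.2)

theorem isLinearInterval_dual_iff :
    IsLinearInterval (dual y) (dual x) ↔ IsLinearInterval x y := by
  refine ⟨fun h => ?_, .antitone_involutive dual_antitone dual_involutive⟩
  simpa only [dual_involutive _] using h.antitone_involutive dual_antitone dual_involutive

theorem hasIntervalHeight_dual_iff :
    HasIntervalHeight (dual y) (dual x) k ↔ HasIntervalHeight x y k := by
  refine ⟨fun h => ?_, .antitone_involutive dual_antitone dual_involutive⟩
  simpa only [dual_involutive _] using h.antitone_involutive dual_antitone dual_involutive

namespace IsRightInterval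

theorem exists_dual_eq_of_ne (h : IsRightInterval k x y) :
    ∃ a, ∀ i, i ≠ a → (dual y).1 i = (dual x).1 i := by
  obtain ⟨m, hm, -, hy⟩ := h
  refine ⟨n - 1 - m, fun i hi => ?_⟩
  obtain hin | hin := lt_or_ge i n
  · simp only [dual, hy]
    exact mirror_raiseFirst_of_ne x.2 (by omega)
  · rw [(dual y).2.apply_of_le i hin, (dual x).2.apply_of_le i hin]

theorem two_le_iff (h : IsRightInterval k x y) :
    2 ≤ k ↔ ∃ a b, a ≠ b ∧ y.1 a ≠ x.1 a ∧ y.1 b ≠ x.1 b := by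
  obtain ⟨m, -, hk, hy⟩ := h
  have hne {j : ℕ} : y.1 j ≠ x.1 j ↔ x.1 j = m ∧ Nat.count (x.1 · = m) j < k := by
    have := x.2.lt_apply m
    rw [hy, raiseFirst]
    grind
  simp only [hne]
  constructor
  · intro hk2
    obtain ⟨a, -, ha, hca⟩ := exists_count_eq_of_lt_count (hk2.trans hk)
    obtain ⟨b, -, hb, hcb⟩ := exists_count_eq_of_lt_count
      (zero_lt_one.trans (hk2.trans hk))
    exact ⟨a, b, by rintro rfl; omega, ⟨ha, by omega⟩, hb, by omega⟩
  · rintro ⟨a, b, hab, ⟨ha, hca⟩, hb, hcb⟩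
    obtain hlt | hlt := hab.lt_or_gt
    · have := Nat.count_strict_mono (p := (x.1 · = m)) ha hlt
      omega
    · have := Nat.count_strict_mono (p := (x.1 · = m)) hb hlt
      omega

theorem not_dual (hk : 2 ≤ k) (h : IsRightInterval k x y) :
    ¬ IsRightInterval k (dual y) (dual x) := by
  intro h'
  obtain ⟨a, b, hab, ha, hb⟩ := h.two_le_iff.mp hk
  obtain ⟨c, hc⟩ := h'.exists_dual_eq_of_ne
  simp only [dual_involutive _] at hc
  obtain rfl := not_not.mp fun hac => ha (hc a hac).symm
  exact hb (hc b hab.symm).symm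

end IsRightInterval

namespace IsLinearInterval

theorem isRightInterval_or_dual (h : IsLinearInterval x y) (hxy : x ≠ y) :
    ∃ k, IsRightInterval k x y ∨ 2 ≤ k ∧ IsRightInterval k (dual y) (dual x) := by
  obtain ⟨k, hk⟩ | ⟨j, hj, -⟩ := h.isRightInterval_or hxy
  · exact ⟨k, .inl hk⟩
  have hne : ∃ a b, a ≠ b ∧ (dual x).1 a ≠ (dual y).1 a ∧ (dual x).1 b ≠ (dual y).1 b :=
    exists_mirror_ne_of_apply_apply_lt x.2 y.2 hj
  obtain ⟨k, hk⟩ | ⟨c, -, hc⟩ := (isLinearInterval_dual_iff.mpr h).isRightInterval_or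
    (dual_involutive.injective.ne hxy.symm)
  · exact ⟨k, .inr ⟨hk.two_le_iff.mpr hne, hk⟩⟩
  · obtain ⟨a, b, hab, ha, hb⟩ := hne
    obtain rfl := not_not.mp fun hac => ha (hc a hac)
    exact absurd (hc b hab.symm) hb

theorem exists_hasIntervalHeight_lt (hn : 0 < n) (h : IsLinearInterval x y) :
    ∃ k < n, HasIntervalHeight x y k := by
  obtain rfl | hxy := eq_or_ne x y
  · exact ⟨0, hn, hasIntervalHeight_zero_iff.mpr rfl⟩
  obtain ⟨k, hk | ⟨-, hk⟩⟩ := h.isRightInterval_or_dual hxy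
  · exact ⟨k, hk.lt_size, hk.hasIntervalHeight⟩
  · exact ⟨k, hk.lt_size, hasIntervalHeight_dual_iff.mp hk.hasIntervalHeight⟩

end IsLinearInterval

theorem isLinearInterval_and_hasIntervalHeight_one_iff :
    IsLinearInterval x y ∧ HasIntervalHeight x y 1 ↔ IsRightInterval 1 x y := by
  refine ⟨fun ⟨hl, hh⟩ => ?_, fun h => ⟨h.isLinearInterval, h.hasIntervalHeight⟩⟩
  obtain ⟨k, hk | ⟨hk, h⟩⟩ := hl.isRightInterval_or_dual (hh.ne one_pos)
  · rwa [hh.unique hk.hasIntervalHeight]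
  · have := hh.unique (hasIntervalHeight_dual_iff.mp h.hasIntervalHeight)
    omega

theorem isLinearInterval_and_hasIntervalHeight_iff (hk : 0 < k) :
    IsLinearInterval x y ∧ HasIntervalHeight x y k ↔
      IsRightInterval k x y ∨ IsRightInterval k (dual y) (dual x) := by
  constructor
  · rintro ⟨hl, hh⟩
    obtain ⟨l, hl | ⟨-, hl⟩⟩ := hl.isRightInterval_or_dual (hh.ne hk)
    · rw [hh.unique hl.hasIntervalHeight]
      exact .inl hl
    · rw [hh.unique (hasIntervalHeight_dual_iff.mp hl.hasIntervalHeight)]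
      exact .inr hl
  · rintro (h | h)
    · exact ⟨h.isLinearInterval, h.hasIntervalHeight⟩
    · exact ⟨isLinearInterval_dual_iff.mp h.isLinearInterval,
        hasIntervalHeight_dual_iff.mp h.hasIntervalHeight⟩

end Duality

section BallotSequences

variable {n m j l : ℕ} {d d' e f : ℕ → ℕ} {x y : BracketVector n}

/-- The sequences `d` for which some Dyck word of size `n` has `d m` down steps before
`u_{m+1}`, and `n` down steps in total, which we read as the value of `d` at all `m ≥ n`. -/
structure IsBallot (n : ℕ) (d : ℕ → ℕ) : Prop where
  monotone : Monotone d
  apply_le : ∀ m < n, d m ≤ m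
  apply_of_le : ∀ m, n ≤ m → d m = n

/-- The bracket vector of the Dyck word with ballot sequence `d`: the excursion of `u_{j+1}`
ends before `u_{m+1}` as soon as the height `m - d m` there is at most the height `j - d j`
before `u_{j+1}`. -/
noncomputable def excEnd (n : ℕ) (d : ℕ → ℕ) (j : ℕ) : ℕ :=
  if j < n then sInf {m | j < m ∧ m + d j ≤ j + d m} else j + 1

theorem excEnd_of_le (hj : n ≤ j) : excEnd n d j = j + 1 :=
  if_neg hj.not_gt

theorem excEnd_le (hj : j < n) (hjm : j < m) (h : m + d j ≤ j + d m) : excEnd n d j ≤ m :=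
  (if_pos hj).trans_le (Nat.sInf_le ⟨hjm, h⟩)

theorem lt_of_lt_excEnd (hj : j < n) (hjm : j < m) (h : m < excEnd n d j) :
    j + d m < m + d j := by
  by_contra! hle
  exact h.not_ge (excEnd_le hj hjm hle)

namespace IsBallot

theorem excEnd_le_size (hd : IsBallot n d) (hj : j < n) : excEnd n d j ≤ n := by
  refine excEnd_le hj hj ?_
  have := hd.apply_le j hj
  have := hd.apply_of_le n le_rfl
  omega

theorem excEnd_mem (hd : IsBallot n d) (hj : j < n) :
    j < excEnd n d j ∧ excEnd n d j + d j ≤ j + d (excEnd n d j) := by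
  rw [excEnd, if_pos hj]
  refine Nat.sInf_mem (s := {m | j < m ∧ m + d j ≤ j + d m}) ⟨n, hj, ?_⟩
  have := hd.apply_le j hj
  have := hd.apply_of_le n le_rfl
  omega

theorem excEnd_eq (hd : IsBallot n d) (hj : j < n) (hjm : j < m) (h : m + d j ≤ j + d m)
    (h' : ∀ l, j < l → l < m → j + d l < l + d j) : excEnd n d j = m := by
  refine (excEnd_le hj hjm h).antisymm ?_
  by_contra! hlt
  obtain ⟨hj', hle⟩ := hd.excEnd_mem hj
  exact hle.not_gt (h' _ hj' hlt)

theorem isBracketVector_excEnd (hd : IsBallot n d) : IsBracketVector n (excEnd n d) where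
  lt_apply j := by
    obtain hj | hj := lt_or_ge j n
    · exact (hd.excEnd_mem hj).1
    · exact j.lt_succ_self.trans_eq (excEnd_of_le hj).symm
  apply_le j hj := hd.excEnd_le_size hj
  apply_of_le j := excEnd_of_le
  apply_le_apply i j hij hj := by
    obtain rfl | hij := hij.eq_or_lt
    · exact le_rfl
    obtain hi | hi := lt_or_ge i n
    · have := lt_of_lt_excEnd hi hij hj
      have := (hd.excEnd_mem hi).2
      exact excEnd_le (hj.trans_le (hd.excEnd_le_size hi)) hj (by omega)
    · rw [excEnd_of_le hi] at hj
      omega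

theorem exists_excEnd_le_lt (hd : IsBallot n d) (hd' : IsBallot n d') (h : ∀ l < m, d l = d' l)
    (hm : d m < d' m) : ∃ j, excEnd n d' j ≤ m ∧ m < excEnd n d j := by
  have hmn : m < n := by
    by_contra! hle
    rw [hd.apply_of_le m hle, hd'.apply_of_le m hle] at hm
    exact hm.false
  have hm' := hd'.apply_le m hmn
  obtain ⟨j, hjm, hj, hgt⟩ : ∃ j < m, j + d' m ≤ m + d j ∧
      ∀ l, j < l → l ≤ m → m + d l < l + d' m := by
    let p (l : ℕ) : Prop := l + d' m ≤ m + d l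
    have hp : p 0 := by simp only [p]; omega
    have hlt : Nat.findGreatest p m < m :=
      (Nat.findGreatest_le m).lt_of_ne fun h => by
        have : p m := h ▸ Nat.findGreatest_spec (Nat.zero_le m) hp
        simp only [p] at this
        omega
    exact ⟨Nat.findGreatest p m, hlt, Nat.findGreatest_spec (Nat.zero_le m) hp,
      fun l hjl hlm => not_le.mp (Nat.findGreatest_is_greatest (P := p) hjl hlm)⟩
  have hj' := hgt (j + 1) j.lt_succ_self hjm
  have hmono : d j ≤ d (j + 1) := hd.monotone j.le_succ
  refine ⟨j, excEnd_le (hjm.trans hmn) hjm (by rw [← h j hjm]; omega), ?_⟩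
  by_contra! hle
  obtain ⟨hlt, hspec⟩ := hd.excEnd_mem (hjm.trans hmn)
  have := hgt _ hlt hle
  omega

theorem excEnd_injOn (n : ℕ) : Set.InjOn (excEnd n) {d | IsBallot n d} := by
  intro d hd d' hd' hdd'
  by_contra hne
  have hex := Function.ne_iff.mp hne
  have hagree (l : ℕ) (hl : l < Nat.find hex) : d l = d' l := not_not.mp (Nat.find_min hex hl)
  obtain hlt | hlt := lt_or_gt_of_ne (Nat.find_spec hex)
  · obtain ⟨j, hj, hj'⟩ := exists_excEnd_le_lt hd hd' hagree hlt
    exact (hj.trans_lt hj').ne (congrFun hdd' j).symm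
  · obtain ⟨j, hj, hj'⟩ := exists_excEnd_le_lt hd' hd (fun l hl => (hagree l hl).symm) hlt
    exact (hj.trans_lt hj').ne (congrFun hdd' j)

end IsBallot

/-- The ballot sequence of the Dyck word with bracket vector `e`: the down steps before `u_{m+1}`
are the ends of the excursions that end there or earlier. -/
def ballotOf (n : ℕ) (e : ℕ → ℕ) (m : ℕ) : ℕ := Nat.count (e · ≤ m) n

theorem count_eq_of_forall_not {p : ℕ → Prop} [DecidablePred p] {a b : ℕ} (hab : a ≤ b)
    (h : ∀ j, a ≤ j → ¬ p j) : Nat.count p b = Nat.count p a := by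
  obtain ⟨c, rfl⟩ := Nat.exists_eq_add_of_le hab
  rw [Nat.count_add, Nat.count_iff_forall_not.mpr fun j _ => h (a + j) (Nat.le_add_right a j),
    add_zero]

theorem count_le_succ (e : ℕ → ℕ) (m k : ℕ) :
    Nat.count (e · ≤ m + 1) k = Nat.count (e · ≤ m) k + Nat.count (e · = m + 1) k := by
  induction k with
  | zero => rfl
  | succ k ih =>
    simp only [Nat.count_succ, ih]
    grind

namespace IsBracketVector

theorem ballotOf_eq_count (he : IsBracketVector n e) (hm : m ≤ n) :
    ballotOf n e m = Nat.count (e · ≤ m) m :=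
  count_eq_of_forall_not hm fun j hj => (hj.trans_lt (he.lt_apply j)).not_ge

theorem isBallot_ballotOf (he : IsBracketVector n e) : IsBallot n (ballotOf n e) where
  monotone _ _ hab := Nat.count_mono_left fun _ _ hj => hj.trans hab
  apply_le _ hm := (he.ballotOf_eq_count hm.le).trans_le (Nat.count_le _)
  apply_of_le _ hm := Nat.count_iff_forall.mpr fun j hj => (he.apply_le j hj).trans hm

theorem ballotOf_succ (he : IsBracketVector n e) (hm : m < n) :
    ballotOf n e (m + 1) = ballotOf n e m + Nat.count (e · = m + 1) (m + 1) := by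
  rw [ballotOf, ballotOf, count_le_succ, count_eq_of_forall_not (p := (e · = m + 1)) hm]
  exact fun j hj => (hj.trans_lt (he.lt_apply j)).ne'

theorem apply_add_ballotOf_le (he : IsBracketVector n e) (hj : j < n) :
    e j + ballotOf n e j ≤ j + ballotOf n e (e j) := by
  obtain ⟨c, hc⟩ := Nat.exists_eq_add_of_le (he.lt_apply j).le
  have hinside : Nat.count (fun i => e (j + i) ≤ e j) c = c :=
    Nat.count_iff_forall.mpr fun i hi => he.apply_le_apply j (j + i) (by omega) (by omega)
  have hbefore : Nat.count (e · ≤ j) j ≤ Nat.count (e · ≤ e j) j :=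
    Nat.count_mono_left fun i _ hi => hi.trans (he.lt_apply j).le
  have hsplit : Nat.count (e · ≤ e j) (e j) = Nat.count (e · ≤ e j) j + c := by
    conv_lhs => rw [hc, Nat.count_add, ← hc, hinside]
  rw [he.ballotOf_eq_count hj.le, he.ballotOf_eq_count (he.apply_le j hj), hsplit]
  omega

theorem ballotOf_lt (he : IsBracketVector n e) (hj : j < n) (hjm : j < m) (hm : m < e j) :
    j + ballotOf n e m < m + ballotOf n e j := by
  obtain ⟨c, rfl⟩ := Nat.exists_eq_add_of_le (show j + 1 ≤ m from hjm)
  have hinside : Nat.count (fun i => e (j + 1 + i) ≤ j + 1 + c) c ≤ c := Nat.count_le _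
  have hbefore : Nat.count (e · ≤ j + 1 + c) j ≤ Nat.count (e · ≤ j) j :=
    Nat.count_mono_left fun i hi hic => by
      by_contra! hji
      exact hm.not_ge ((he.apply_le_apply i j hi.le hji).trans hic)
  rw [he.ballotOf_eq_count hj.le, he.ballotOf_eq_count (hm.le.trans (he.apply_le j hj)),
    Nat.count_add, Nat.count_succ, if_neg hm.not_ge]
  omega

theorem excEnd_ballotOf (he : IsBracketVector n e) : excEnd n (ballotOf n e) = e := by
  funext j
  obtain hj | hj := lt_or_ge j n
  · exact he.isBallot_ballotOf.excEnd_eq hj (he.lt_apply j) (he.apply_add_ballotOf_le hj)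
      fun l => he.ballotOf_lt hj
  · rw [excEnd_of_le hj, he.apply_of_le j hj]

end IsBracketVector

theorem IsBallot.ballotOf_excEnd (hd : IsBallot n d) : ballotOf n (excEnd n d) = d :=
  excEnd_injOn n hd.isBracketVector_excEnd.isBallot_ballotOf hd
    hd.isBracketVector_excEnd.excEnd_ballotOf

theorem count_raiseFirst_le (hm : m < e m) (k N : ℕ) :
    Nat.count (raiseFirst e m k · ≤ l) N +
        (if m ≤ l ∧ l < e m then min k (Nat.count (e · = m) N) else 0) =
      Nat.count (e · ≤ l) N := by
  induction N with
  | zero => simp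
  | succ N ih =>
    have hN : raiseFirst e m k N =
        if e N = m ∧ Nat.count (e · = m) N < k then e m else e N := rfl
    simp only [Nat.count_succ]
    grind

theorem ballotOf_raiseFirst_one (hm : m < e m) (hmn : m < n) (h : 0 < Nat.count (e · = m) m) :
    ballotOf n (raiseFirst e m 1) l + (if m ≤ l ∧ l < e m then 1 else 0) = ballotOf n e l := by
  rw [ballotOf, ballotOf, ← count_raiseFirst_le hm 1 n,
    min_eq_left (h.trans_le (Nat.count_monotone _ hmn.le))]

theorem le_iff_reflTransGen_isRightInterval_one :
    x ≤ y ↔ Relation.ReflTransGen (IsRightInterval 1) x y := by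
  constructor
  · induction x using WellFoundedGT.induction with
    | ind x ih =>
      intro hxy
      obtain rfl | hne := eq_or_ne x y
      · exact .refl
      obtain ⟨j, hj⟩ := Function.ne_iff.mp (Subtype.coe_ne_coe.mpr hne)
      have hlt : x.1 j < y.1 j := (hxy j).lt_of_ne hj
      have hcount : 0 < Nat.count (x.1 · = x.1 j) (x.1 j) :=
        (Nat.zero_le _).trans_lt (Nat.count_strict_mono rfl (x.2.lt_apply j))
      have hm := x.2.apply_lt_size_of_lt y.2 hlt
      let z : BracketVector n := ⟨raiseFirst x.1 (x.1 j) 1, isBracketVector_raiseFirst x.2 hm 1⟩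
      have hxz : x < z := (raiseFirst_zero x.1 (x.1 j)).symm.trans_lt
        (raiseFirst_strictMonoOn (x.2.lt_apply _) (Nat.zero_le _) hcount one_pos)
      have hzy : z ≤ y := (raiseFirst_mono (x.2.lt_apply _).le (by omega)).trans
        (x.2.raiseFirst_le y.2 hxy hlt)
      exact .head ⟨x.1 j, hm, hcount, rfl⟩ (ih z hxz hzy)
  · intro h
    induction h with
    | refl => exact le_rfl
    | tail _ hyz ih => exact ih.trans hyz.isLinearInterval.1

end BallotSequences

section DownStepCounts

variable {n m k l : ℕ} {w w' : List Bool}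

/-- The number of down steps before `u_{m+1}`, or in the whole word if it has at most `m` up
steps. -/
def dBefore : List Bool → ℕ → ℕ
  | [], _ => 0
  | false :: w, m => dBefore w m + 1
  | true :: _, 0 => 0
  | true :: w, m + 1 => dBefore w m

theorem dBefore_append_of_lt (A B : List Bool) (hm : m < A.count true) :
    dBefore (A ++ B) m = dBefore A m := by
  induction A generalizing m with
  | nil => simp at hm
  | cons a A ih =>
    cases a
    · exact congrArg (· + 1) (ih (by simpa using hm))
    · cases m with
      | zero => rfl
      | succ m => exact ih (by simpa using hm)

theorem dBefore_append_of_le (A B : List Bool) (hm : A.count true ≤ m) :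
    dBefore (A ++ B) m = A.count false + dBefore B (m - A.count true) := by
  induction A generalizing m with
  | nil => simp
  | cons a A ih =>
    cases a
    · have := ih (m := m) (by simpa using hm)
      simp only [List.cons_append, dBefore, List.count_cons_self, this]
      simp only [List.count_cons, beq_iff_eq, reduceCtorEq, if_false, add_zero]
      omega
    · cases m with
      | zero => simp at hm
      | succ m => simpa [dBefore] using ih (m := m) (by simpa using hm)

theorem dBefore_of_count_le (hm : w.count true ≤ m) : dBefore w m = w.count false := by
  simpa [dBefore] using dBefore_append_of_le w [] hm

theorem dBefore_mono (w : List Bool) : Monotone (dBefore w) := by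
  refine monotone_nat_of_le_succ fun m => ?_
  induction w generalizing m with
  | nil => exact le_rfl
  | cons a w ih =>
    cases a
    · exact Nat.succ_le_succ (ih m)
    · cases m with
      | zero => exact Nat.zero_le _
      | succ m => exact ih m

theorem dBefore_le_count_false (w : List Bool) (m : ℕ) : dBefore w m ≤ w.count false :=
  (dBefore_mono w (le_max_left m _)).trans_eq (dBefore_of_count_le (le_max_right m _))

theorem eq_of_dBefore_eq (hc : w.count true = w'.count true) (h : dBefore w = dBefore w') :
    w = w' := by
  induction w generalizing w' with
  | nil =>
    obtain _ | ⟨_ | _, w'⟩ := w'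
    · rfl
    · simpa [dBefore] using congrFun h 0
    · simp at hc
  | cons a w ih =>
    obtain _ | ⟨b, w'⟩ := w'
    · cases a
      · simpa [dBefore] using congrFun h 0
      · simp at hc
    · cases a <;> cases b
      · rw [ih (by simpa using hc) (funext fun m => by simpa [dBefore] using congrFun h m)]
      · simpa [dBefore] using congrFun h 0
      · simpa [dBefore] using congrFun h 0
      · rw [ih (by simpa using hc) (funext fun m => congrFun h (m + 1))]

theorem exists_eq_append_cons_true (hm : m < w.count true) :
    ∃ A Y, w = A ++ true :: Y ∧ A.count true = m ∧ A.count false = dBefore w m := by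
  induction w generalizing m with
  | nil => simp at hm
  | cons a w ih =>
    cases a
    · obtain ⟨A, Y, rfl, h, h'⟩ := ih (m := m) (by simpa using hm)
      exact ⟨false :: A, Y, rfl, by simpa using h, by simpa [dBefore] using h'⟩
    · cases m with
      | zero => exact ⟨[], w, rfl, rfl, rfl⟩
      | succ m =>
        obtain ⟨A, Y, rfl, h, h'⟩ := ih (m := m) (by simpa using hm)
        exact ⟨true :: A, Y, rfl, by simpa using h, by simpa [dBefore] using h'⟩

theorem exists_dBefore_eq {d : ℕ → ℕ} (hd : Monotone d) (N : ℕ) :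
    ∃ w : List Bool, w.count true = N ∧ ∀ m ≤ N, dBefore w m = d m := by
  induction N with
  | zero =>
    refine ⟨List.replicate (d 0) false, by simp [List.count_replicate], fun m hm => ?_⟩
    rw [dBefore_of_count_le (by simp [List.count_replicate]), List.count_replicate_self,
      Nat.le_zero.mp hm]
  | succ N ih =>
    obtain ⟨w, rfl, h⟩ := ih
    set N := w.count true
    have hf : w.count false = d N := by rw [← h N le_rfl, dBefore_of_count_le le_rfl]
    let D : List Bool := List.replicate (d (N + 1) - d N) false
    have hD : D.count true = 0 := by simp [D, List.count_replicate]
    refine ⟨w ++ true :: D, by simp [hD, N], fun m hm => ?_⟩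
    obtain hlt | rfl | hlt := lt_trichotomy m N
    · rw [dBefore_append_of_lt _ _ hlt, h m hlt.le]
    · rw [dBefore_append_of_le _ _ le_rfl, Nat.sub_self, dBefore, hf, add_zero]
    · obtain rfl : m = N + 1 := by omega
      rw [dBefore_append_of_le _ _ hlt.le, Nat.add_sub_cancel_left, dBefore,
        dBefore_of_count_le hD.le, List.count_replicate_self, hf,
        Nat.add_sub_cancel' (hd N.le_succ)]

theorem isDyckWord_iff : IsDyckWord n w ↔ w.count true = n ∧ IsBallot n (dBefore w) := by
  refine and_congr_right fun htrue => ⟨fun ⟨hfalse, h⟩ => ⟨dBefore_mono w, fun m hm => ?_,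
    fun m hm => (dBefore_of_count_le (htrue.trans_le hm)).trans hfalse⟩, fun hd => ⟨?_, ?_⟩⟩
  · obtain ⟨A, Y, rfl, rfl, h'⟩ := exists_eq_append_cons_true (hm.trans_eq htrue.symm)
    exact h'.symm.trans_le (h A (List.prefix_append _ _))
  · rw [← dBefore_of_count_le htrue.le, hd.apply_of_le n le_rfl]
  · rintro p ⟨s, rfl⟩
    have hsplit := dBefore_append_of_le p s le_rfl
    obtain hlt | hle := lt_or_ge (p.count true) n
    · have := hd.apply_le _ hlt
      omega
    · have := hd.apply_of_le _ hle
      omega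

theorem dBefore_add_le_dBefore_succ_iff (hm : m + 1 < w.count true) :
    dBefore w m + k ≤ dBefore w (m + 1) ↔
      ∃ X Y, w = X ++ (List.replicate k false ++ true :: Y) ∧ X.count true = m + 1 := by
  constructor
  · intro h
    obtain ⟨A, W, rfl, hA, hA'⟩ := exists_eq_append_cons_true (m.lt_succ_self.trans hm)
    obtain ⟨D, Y, rfl, hD, hD'⟩ := exists_eq_append_cons_true (w := W) (m := 0) (by
      simp only [List.count_append, List.count_cons_self] at hm
      omega)
    have hrep : List.replicate (D.count false) false = D :=
      List.replicate_count_eq_of_count_eq_length (by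
        rw [← List.count_true_add_count_false D, hD, zero_add])
    have hk : k ≤ D.count false := by
      have hsucc := dBefore_append_of_le A (true :: (D ++ true :: Y)) (m := m + 1) (by omega)
      rw [hA, Nat.add_sub_cancel_left] at hsucc
      simp only [dBefore] at hsucc
      omega
    refine ⟨A ++ true :: List.replicate (D.count false - k) false, Y, ?_, ?_⟩
    · conv_lhs => rw [← hrep, ← Nat.sub_add_cancel hk, List.replicate_add]
      simp only [List.append_assoc, List.cons_append]
    · simp [hA, List.count_replicate]
  · rintro ⟨X, Y, rfl, hX⟩
    have := dBefore_le_count_false X m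
    have hzero : (List.replicate k false).count true = 0 := by simp [List.count_replicate]
    rw [dBefore_append_of_lt _ _ (by omega), dBefore_append_of_le _ _ hX.le, hX, Nat.sub_self,
      dBefore_append_of_le _ _ hzero.le, List.count_replicate_self, Nat.zero_sub, dBefore]
    omega

end DownStepCounts

section Rotations

variable {n m : ℕ} {A B C W P Q : List Bool}

theorem prefHeight_append (A B : List Bool) {j : ℕ} (hj : j ≤ A.length) :
    prefHeight (A ++ B) j = prefHeight A j := by
  rw [prefHeight, prefHeight, List.take_append_of_le_length hj]

theorem prefHeight_succ {j : ℕ} (hj : j < W.length) :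
    prefHeight W (j + 1) = prefHeight W j + if W.getD j false = true then 1 else -1 := by
  rw [prefHeight, prefHeight, List.take_add_one, List.getD_eq_getElem?_getD,
    List.getElem?_eq_getElem hj]
  cases W[j] <;> simp <;> ring

theorem elev_one {p m : ℕ} (h : p + m ≤ W.length) :
    elev (fun _ => 1) W p (p + m) = prefHeight (W.drop p) m := by
  induction m with
  | zero => simp [elev, prefHeight]
  | succ m ih =>
    have hm := ih (by omega)
    rw [elev] at hm ⊢
    rw [← add_assoc, Finset.sum_Ico_succ_top (Nat.le_add_right p m), hm,
      prefHeight_succ (by rw [List.length_drop]; omega)]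
    simp [stepVal]

/-- A primitive Dyck word: a nonempty Dyck word that returns to height `0` only at its end.
The excursions of up steps are the factors of this form. -/
structure IsPrimitive (C : List Bool) : Prop where
  ne_nil : C ≠ []
  prefHeight_length : prefHeight C C.length = 0
  prefHeight_pos : ∀ j, 0 < j → j < C.length → 0 < prefHeight C j

theorem exists_isPrimitive_append (h0 : W.getD 0 false = true)
    (h : W.count true ≤ W.count false) : ∃ C B, W = C ++ B ∧ IsPrimitive C := by
  have hlen : 0 < W.length := by
    by_contra! hle
    rw [List.length_eq_zero_iff.mp (Nat.le_zero.mp hle)] at h0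
    simp at h0
  have hex : ∃ L, 0 < L ∧ prefHeight W L ≤ 0 :=
    ⟨W.length, hlen, by rw [prefHeight, List.take_length]; omega⟩
  obtain ⟨j, hj⟩ : ∃ j, Nat.find hex = j + 1 :=
    Nat.exists_eq_succ_of_ne_zero (Nat.find_spec hex).1.ne'
  have hmin (i : ℕ) (hi : 0 < i) (hij : i < j + 1) : 0 < prefHeight W i := by
    by_contra! hle
    exact Nat.find_min hex (hij.trans_eq hj.symm) ⟨hi, hle⟩
  have hle : j + 1 ≤ W.length :=
    hj.symm.trans_le (Nat.find_min' hex ⟨hlen, by rw [prefHeight, List.take_length]; omega⟩)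
  have hzero : prefHeight W (j + 1) = 0 := by
    have hnonpos : prefHeight W (j + 1) ≤ 0 := hj ▸ (Nat.find_spec hex).2
    have hstep := prefHeight_succ (W := W) (j := j) hle
    obtain rfl | hj0 := j.eq_zero_or_pos
    · have hstart : prefHeight W 0 = 0 := rfl
      rw [hstart, if_pos h0] at hstep
      omega
    · have := hmin j hj0 j.lt_succ_self
      split_ifs at hstep <;> omega
  obtain ⟨C, B, hW, hC⟩ : ∃ C B, W = C ++ B ∧ C.length = j + 1 :=
    ⟨_, _, (List.take_append_drop (j + 1) W).symm, List.length_take_of_le hle⟩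
  refine ⟨C, B, hW, List.ne_nil_of_length_pos (hC ▸ j.succ_pos), ?_, fun i hi hiC => ?_⟩
  · rw [← prefHeight_append C B le_rfl, ← hW, hC, hzero]
  · rw [← prefHeight_append C B hiC.le, ← hW]
    exact hmin i hi (hiC.trans_eq hC)

namespace IsPrimitive

theorem exists_eq_cons (hC : IsPrimitive C) : ∃ C', C = true :: C' := by
  obtain _ | ⟨_ | _, C'⟩ := C
  · exact absurd rfl hC.ne_nil
  · have hlen := hC.prefHeight_length
    have hpos := hC.prefHeight_pos 1 one_pos
    obtain _ | ⟨a, C''⟩ := C'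
    · simp [prefHeight] at hlen
    · simp [prefHeight] at hpos
  · exact ⟨C', rfl⟩

theorem count_eq (hC : IsPrimitive C) : C.count true = C.count false := by
  have h := hC.prefHeight_length
  rw [prefHeight, List.take_length] at h
  omega

theorem count_true_pos (hC : IsPrimitive C) : 0 < C.count true := by
  obtain ⟨C', rfl⟩ := hC.exists_eq_cons
  simp

theorem dBefore_zero (hC : IsPrimitive C) : dBefore C 0 = 0 := by
  obtain ⟨C', rfl⟩ := hC.exists_eq_cons
  rfl

theorem dBefore_lt (hC : IsPrimitive C) (hm : 0 < m) (hmC : m < C.count true) :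
    dBefore C m < m := by
  obtain ⟨X, Y, rfl, rfl, h⟩ := exists_eq_append_cons_true hmC
  have hpos := hC.prefHeight_pos X.length
    (List.length_pos_of_mem (List.count_pos_iff.mp hm)) (by simp)
  rw [prefHeight, List.take_left] at hpos
  omega

end IsPrimitive

theorem isDeltaExcAt_one_iff :
    IsDeltaExcAt (fun _ => 1) (A ++ (C ++ B)) A.length C ↔ IsPrimitive C := by
  have helev {m : ℕ} (hm : m ≤ (C ++ B).length) :
      elev (fun _ => 1) (A ++ (C ++ B)) A.length (A.length + m) = prefHeight (C ++ B) m := by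
    rw [elev_one (by rw [List.length_append]; omega), List.drop_left]
  have hCB : C.length ≤ (C ++ B).length := by simp
  constructor
  · rintro ⟨h0, m, hm, hle, hC, hz, hne⟩
    have hmC : C.length = m := by
      rw [hC, List.drop_left, List.length_take]
      rw [List.length_append] at hle
      omega
    subst hmC
    rw [helev hCB, prefHeight_append C B le_rfl] at hz
    rw [prefHeight, List.take_length] at hz
    rw [List.getD_append_right _ _ _ _ le_rfl, Nat.sub_self, List.getD_append _ _ _ _ hm] at h0
    -- The first return of `C` to height `0` can only be its end.
    obtain ⟨C₁, C₂, rfl, hC₁⟩ := exists_isPrimitive_append h0 (by omega)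
    obtain rfl | hC₂ := eq_or_ne C₂ []
    · rwa [List.append_nil]
    have hlt : C₁.length < (C₁ ++ C₂).length := by
      simpa using List.length_pos_of_ne_nil hC₂
    refine absurd ?_ (hne C₁.length (List.length_pos_of_ne_nil hC₁.ne_nil) hlt)
    rw [helev (hlt.le.trans hCB), prefHeight_append _ _ hlt.le, prefHeight_append _ _ le_rfl,
      hC₁.prefHeight_length]
  · intro hC
    obtain ⟨C', hC'⟩ := hC.exists_eq_cons
    refine ⟨by simp [hC'], C.length, List.length_pos_of_ne_nil hC.ne_nil, by simp,
      by rw [List.drop_left, List.take_left], ?_, fun j hj hjC => ?_⟩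
    · rw [helev hCB, prefHeight_append C B le_rfl, hC.prefHeight_length]
    · rw [helev (hjC.le.trans hCB), prefHeight_append C B hjC.le]
      exact (hC.prefHeight_pos j hj hjC).ne'

theorem deltaRot_one_iff : DeltaRot (fun _ => 1) P Q ↔
    ∃ A C B, P = A ++ false :: (C ++ B) ∧ Q = A ++ (C ++ false :: B) ∧ IsPrimitive C := by
  refine exists_congr fun A => exists_congr fun C => exists_congr fun B =>
    and_congr_right fun hP => and_congr_right fun _ => ?_
  rw [hP, ← isDeltaExcAt_one_iff (A := A ++ [false]) (B := B)]
  simp only [List.append_assoc, List.singleton_append, List.length_append, List.length_singleton]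

theorem IsPrimitive.excEnd_dBefore (hC : IsPrimitive C)
    (hP : IsDyckWord n (A ++ (C ++ B))) :
    excEnd n (dBefore (A ++ (C ++ B))) (A.count true) = A.count true + C.count true := by
  obtain ⟨hcount, hd⟩ := isDyckWord_iff.mp hP
  have hle {l : ℕ} (hl : l < C.count true) :
      dBefore (A ++ (C ++ B)) (A.count true + l) = A.count false + dBefore C l := by
    rw [dBefore_append_of_le _ _ (Nat.le_add_right _ l), Nat.add_sub_cancel_left,
      dBefore_append_of_lt _ _ hl]
  have hstart := hle hC.count_true_pos
  rw [add_zero, hC.dBefore_zero, add_zero] at hstart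
  have hend : A.count false + C.count false ≤
      dBefore (A ++ (C ++ B)) (A.count true + C.count true) := by
    rw [dBefore_append_of_le _ _ (Nat.le_add_right _ _), Nat.add_sub_cancel_left,
      dBefore_append_of_le _ _ le_rfl]
    omega
  have hCpos := hC.count_true_pos
  have hCeq := hC.count_eq
  simp only [List.count_append] at hcount
  refine hd.excEnd_eq (by omega) (by omega) (by omega) fun l hl hlC => ?_
  obtain ⟨i, rfl⟩ := Nat.exists_eq_add_of_le hl.le
  have := hle (l := i) (by omega)
  have := hC.dBefore_lt (m := i) (by omega) (by omega)
  omega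

theorem dBefore_rotate (A B C : List Bool) (l : ℕ) :
    dBefore (A ++ (C ++ false :: B)) l +
        (if A.count true ≤ l ∧ l < A.count true + C.count true then 1 else 0) =
      dBefore (A ++ false :: (C ++ B)) l := by
  obtain hl | hl := lt_or_ge l (A.count true)
  · rw [dBefore_append_of_lt _ _ hl, dBefore_append_of_lt _ _ hl, if_neg (by omega), add_zero]
  rw [dBefore_append_of_le _ _ hl, dBefore_append_of_le _ _ hl, dBefore]
  obtain hlC | hlC := lt_or_ge l (A.count true + C.count true)
  · rw [dBefore_append_of_lt _ _ (by omega), dBefore_append_of_lt _ _ (by omega),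
      if_pos ⟨hl, hlC⟩, add_assoc]
  · rw [dBefore_append_of_le _ _ (by omega), dBefore_append_of_le _ _ (by omega), dBefore,
      if_neg (by omega)]
    omega

end Rotations

section TamariOrder

variable {n m k : ℕ}

/-- The identification of Dyck words with bracket vectors: entry `j` of the vector of `w` is `m`
if the excursion of `u_{j+1}` in `w` contains the up steps `u_{j+1}, …, u_m`. -/
noncomputable def bracketEquiv (n : ℕ) : DyckSet n ≃ BracketVector n :=
  Equiv.ofBijective
    (fun w => ⟨excEnd n (dBefore w), (isDyckWord_iff.mp w.2).2.isBracketVector_excEnd⟩) <| by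
    refine ⟨fun ⟨w, hw⟩ ⟨w', hw'⟩ h => ?_, fun ⟨e, he⟩ => ?_⟩
    · obtain ⟨hcount, hd⟩ := isDyckWord_iff.mp hw
      obtain ⟨hcount', hd'⟩ := isDyckWord_iff.mp hw'
      exact Subtype.ext (eq_of_dBefore_eq (hcount.trans hcount'.symm)
        (IsBallot.excEnd_injOn n hd hd' (congrArg Subtype.val h)))
    · have hd := he.isBallot_ballotOf
      obtain ⟨w, hcount, h⟩ := exists_dBefore_eq hd.monotone n
      have hw : dBefore w = ballotOf n e := by
        funext m
        obtain hm | hm := le_total m n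
        · exact h m hm
        · rw [dBefore_of_count_le (hcount.trans_le hm), ← dBefore_of_count_le hcount.le,
            h n le_rfl, hd.apply_of_le n le_rfl, hd.apply_of_le m hm]
      refine ⟨⟨w, isDyckWord_iff.mpr ⟨hcount, hw ▸ hd⟩⟩, Subtype.ext ?_⟩
      change excEnd n (dBefore w) = e
      rw [hw, he.excEnd_ballotOf]

theorem coe_bracketEquiv (w : DyckSet n) : (bracketEquiv n w).1 = excEnd n (dBefore w) := rfl

theorem ballotOf_bracketEquiv (w : DyckSet n) : ballotOf n (bracketEquiv n w).1 = dBefore w :=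
  (isDyckWord_iff.mp w.2).2.ballotOf_excEnd

theorem le_count_bracketEquiv_iff (w : DyckSet n) (hk : 0 < k) :
    m < n ∧ k ≤ Nat.count ((bracketEquiv n w).1 · = m) m ↔
      ∃ X Y, w.1 = X ++ (List.replicate k false ++ true :: Y) ∧ X.count true = m := by
  have he := (bracketEquiv n w).2
  obtain ⟨hcount, hd⟩ := isDyckWord_iff.mp w.2
  obtain _ | m := m
  · refine iff_of_false (fun h => (hk.trans_le h.2).ne (Nat.count_zero _).symm) ?_
    rintro ⟨X, Y, hw, hX⟩
    have hn : 0 < n := by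
      rw [← hcount, hw]
      simp
    have hzero := hd.apply_le 0 hn
    rw [hw, dBefore_append_of_le _ _ hX.le,
      dBefore_append_of_le _ _ (by simp [List.count_replicate]),
      List.count_replicate_self] at hzero
    omega
  by_cases hm : m + 1 < n
  · rw [and_iff_right hm, ← dBefore_add_le_dBefore_succ_iff (hm.trans_eq hcount.symm),
      ← ballotOf_bracketEquiv, he.ballotOf_succ (m.lt_succ_self.trans hm), Nat.add_le_add_iff_left]
  · refine iff_of_false (fun h => hm h.1) ?_
    rintro ⟨X, Y, hw, hX⟩
    rw [← hcount, hw, ← hX] at hm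
    simp at hm

theorem IsPrimitive.one_le_count_bracketEquiv {A B C : List Bool} (hC : IsPrimitive C)
    (hP : A ++ false :: (C ++ B) ∈ DyckSet n) :
    A.count true < n ∧
      1 ≤ Nat.count ((bracketEquiv n ⟨_, hP⟩).1 · = A.count true) (A.count true) := by
  obtain ⟨C', rfl⟩ := hC.exists_eq_cons
  exact (le_count_bracketEquiv_iff _ one_pos).mpr ⟨A, C' ++ B, rfl, rfl⟩

theorem IsPrimitive.bracketEquiv_rotate {A B C : List Bool} (hC : IsPrimitive C)
    (hP : A ++ false :: (C ++ B) ∈ DyckSet n) : ∃ hQ : A ++ (C ++ false :: B) ∈ DyckSet n,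
      (bracketEquiv n ⟨_, hQ⟩).1 = raiseFirst (bracketEquiv n ⟨_, hP⟩).1 (A.count true) 1 := by
  obtain ⟨hm, hcount⟩ := hC.one_le_count_bracketEquiv hP
  set x := bracketEquiv n ⟨_, hP⟩ with hx
  set m := A.count true
  have hend : x.1 m = m + C.count true := by
    have hP' : A ++ [false] ++ (C ++ B) ∈ DyckSet n := by simpa using hP
    simpa [hx, m, coe_bracketEquiv] using hC.excEnd_dBefore hP'
  have hf := isBracketVector_raiseFirst x.2 hm 1
  have hballot : ballotOf n (raiseFirst x.1 m 1) = dBefore (A ++ (C ++ false :: B)) := by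
    funext l
    have hraise := ballotOf_raiseFirst_one (l := l) (x.2.lt_apply m) hm hcount
    rw [hend, hx, ballotOf_bracketEquiv, ← dBefore_rotate A B C l] at hraise
    exact Nat.add_right_cancel hraise
  have hQ : A ++ (C ++ false :: B) ∈ DyckSet n := by
    refine isDyckWord_iff.mpr ⟨?_, hballot ▸ hf.isBallot_ballotOf⟩
    rw [← hP.1]
    simp
  exact ⟨hQ, by rw [coe_bracketEquiv, ← hballot, hf.excEnd_ballotOf]⟩

theorem DeltaRot.mem_dyckSet {P Q : List Bool} (h : DeltaRot (fun _ => 1) P Q)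
    (hP : P ∈ DyckSet n) : Q ∈ DyckSet n := by
  obtain ⟨A, C, B, rfl, rfl, hC⟩ := deltaRot_one_iff.mp h
  exact (hC.bracketEquiv_rotate hP).1

theorem deltaRot_iff_isRightInterval_one (P Q : DyckSet n) :
    DeltaRot (fun _ => 1) P Q ↔ IsRightInterval 1 (bracketEquiv n P) (bracketEquiv n Q) := by
  rw [deltaRot_one_iff]
  constructor
  · rintro ⟨A, C, B, hP, hQ, hC⟩
    obtain ⟨P, hPn⟩ := P
    obtain ⟨Q, hQn⟩ := Q
    subst hP hQ
    obtain ⟨hm, hcount⟩ := hC.one_le_count_bracketEquiv hPn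
    exact ⟨_, hm, hcount, (hC.bracketEquiv_rotate hPn).2⟩
  · rintro ⟨m, hm, hcount, hQ⟩
    obtain ⟨A, Y, hP, rfl⟩ := (le_count_bracketEquiv_iff P one_pos).mp ⟨hm, hcount⟩
    have hle : (true :: Y).count true ≤ (true :: Y).count false := by
      obtain ⟨htrue, hfalse, hprefix⟩ := P.2
      have := hprefix (A ++ [false]) ⟨true :: Y, by simp [hP]⟩
      rw [hP] at htrue hfalse
      simp only [List.replicate_one, List.count_append, List.count_cons_self, List.count_nil, ne_eq,
        reduceCtorEq, not_false_eq_true, List.count_cons_of_ne] at htrue hfalse this ⊢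
      omega
    obtain ⟨C, B, hY, hC⟩ := exists_isPrimitive_append (W := true :: Y) rfl hle
    rw [hY] at hP
    obtain ⟨P, hPn⟩ := P
    subst hP
    obtain ⟨hR, hR'⟩ := hC.bracketEquiv_rotate hPn
    have hQR : Q = ⟨_, hR⟩ := (bracketEquiv n).injective (Subtype.ext (hQ.trans hR'.symm))
    exact ⟨A, C, B, rfl, congrArg Subtype.val hQR, hC⟩

theorem tamLE_iff (P Q : DyckSet n) : tamLE P Q ↔ bracketEquiv n P ≤ bracketEquiv n Q := by
  rw [le_iff_reflTransGen_isRightInterval_one]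
  constructor
  · intro h
    suffices ∀ R : List Bool, tamLE P R → ∃ hR : R ∈ DyckSet n,
        Relation.ReflTransGen (IsRightInterval 1) (bracketEquiv n P) (bracketEquiv n ⟨R, hR⟩) from
      (this Q h).2
    intro R hPR
    induction hPR with
    | refl => exact ⟨P.2, .refl⟩
    | tail _ hRR' ih =>
      obtain ⟨hR, hPR⟩ := ih
      have hR' := hRR'.mem_dyckSet hR
      exact ⟨hR', hPR.tail ((deltaRot_iff_isRightInterval_one ⟨_, hR⟩ ⟨_, hR'⟩).mp hRR')⟩
  · intro h
    have hlift : tamLE ((bracketEquiv n).symm (bracketEquiv n P))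
        ((bracketEquiv n).symm (bracketEquiv n Q)) :=
      h.lift (fun x => ((bracketEquiv n).symm x : List Bool))
        fun x y hxy => (deltaRot_iff_isRightInterval_one _ _).mpr (by simpa using hxy)
    simpa only [Equiv.symm_apply_apply] using hlift

end TamariOrder

section DescendingPaths

open Finset.HasAntidiagonal (antidiagonal)

variable {n a b h L k : ℕ} {w X Y : List Bool}

/-- `w` describes a path from height `h` to height `0` that never goes below height `0`. -/
def DescendsFrom : ℕ → List Bool → Prop
  | h, [] => h = 0
  | h, true :: w => DescendsFrom (h + 1) w
  | 0, false :: _ => False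
  | h + 1, false :: w => DescendsFrom h w

theorem descendsFrom_iff : DescendsFrom h w ↔
    h + w.count true = w.count false ∧ ∀ p, p <+: w → p.count false ≤ h + p.count true := by
  have hcons (a : Bool) (w : List Bool) (q : List Bool → Prop) :
      (∀ p, p <+: a :: w → q p) ↔ q [] ∧ ∀ p, p <+: w → q (a :: p) := by
    simp only [List.prefix_cons_iff]
    grind
  induction w generalizing h with
  | nil => simp [DescendsFrom]
  | cons a w ih =>
    obtain _ | _ := a
    · obtain _ | h := h
      · simp only [DescendsFrom, hcons, false_iff]
        exact fun hw => absurd (hw.2.2 [] List.nil_prefix) (by decide)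
      · simp only [DescendsFrom, ih, hcons]
        grind
    · simp only [DescendsFrom, ih, hcons]
      grind

theorem DescendsFrom.height_unique (ha : DescendsFrom a w) (hb : DescendsFrom b w) : a = b := by
  have := (descendsFrom_iff.mp ha).1
  have := (descendsFrom_iff.mp hb).1
  omega

theorem DescendsFrom.le_length (ha : DescendsFrom a w) : a ≤ w.length := by
  have := (descendsFrom_iff.mp ha).1
  have := w.count_true_add_count_false
  omega

theorem isDyckWord_iff_descendsFrom : IsDyckWord n w ↔ DescendsFrom 0 w ∧ w.length = 2 * n := by
  rw [descendsFrom_iff, ← List.count_true_add_count_false]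
  simp only [IsDyckWord, zero_add]
  grind

/-- The path of `w` traversed backwards: the letters are in reverse order, with up and down steps
exchanged. -/
def reverseWord (w : List Bool) : List Bool := (w.map not).reverse

theorem reverseWord_involutive : Function.Involutive reverseWord := fun w => by
  simp [reverseWord, List.map_reverse, Function.comp_def]

theorem length_reverseWord (w : List Bool) : (reverseWord w).length = w.length := by
  simp [reverseWord]

theorem descendsFrom_zero_append (X Z : List Bool) :
    DescendsFrom 0 (X ++ Z) ↔ ∃ a, DescendsFrom a (reverseWord X) ∧ DescendsFrom a Z := by
  induction X using List.reverseRecOn generalizing Z with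
  | nil => simp [reverseWord, DescendsFrom]
  | append_singleton X x ih =>
    have hr : reverseWord (X ++ [x]) = (!x) :: reverseWord X := by simp [reverseWord]
    rw [List.append_assoc, List.singleton_append, ih, hr]
    cases x
    · constructor
      · rintro ⟨_ | a, hX, hZ⟩
        · exact hZ.elim
        · exact ⟨a, hX, hZ⟩
      · rintro ⟨a, hX, hZ⟩
        exact ⟨a + 1, hX, hZ⟩
    · constructor
      · rintro ⟨a, hX, hZ⟩
        exact ⟨a + 1, hX, hZ⟩
      · rintro ⟨_ | a, hX, hZ⟩
        · exact hX.elim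
        · exact ⟨a, hX, hZ⟩

theorem descendsFrom_replicate_append :
    DescendsFrom a (List.replicate k false ++ w) ↔ ∃ g, a = g + k ∧ DescendsFrom g w := by
  induction k generalizing a with
  | zero => simp
  | succ k ih =>
    rw [List.replicate_succ, List.cons_append]
    obtain _ | a := a
    · refine iff_of_false id ?_
      rintro ⟨g, h, -⟩
      omega
    · exact ih.trans (exists_congr fun g => and_congr_left' (by omega))

/-- The paths of length `L` from height `h` to height `0` that never go below height `0`. -/
def descents : ℕ → ℕ → Finset (List Bool)
  | h, 0 => if h = 0 then {[]} else ∅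
  | 0, L + 1 => (descents 1 L).image (List.cons true)
  | h + 1, L + 1 =>
    (descents (h + 2) L).image (List.cons true) ∪ (descents h L).image (List.cons false)

theorem mem_descents : w ∈ descents h L ↔ w.length = L ∧ DescendsFrom h w := by
  induction L generalizing h w with
  | zero =>
    rw [descents, List.length_eq_zero_iff]
    split_ifs with hh
    · subst hh
      exact Finset.mem_singleton.trans ⟨fun h => ⟨h, h ▸ rfl⟩, fun h => h.1⟩
    · refine iff_of_false (Finset.notMem_empty w) ?_
      rintro ⟨rfl, h⟩
      exact hh h
  | succ L ih =>
    cases h <;> rcases w with _ | ⟨_ | _, w⟩ <;> simp [descents, ih, DescendsFrom]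

theorem card_descents_zero_succ (L : ℕ) : (descents 0 (L + 1)).card = (descents 1 L).card := by
  rw [descents, Finset.card_image_of_injective _ List.cons_injective]

theorem card_descents_succ_succ (h L : ℕ) :
    (descents (h + 1) (L + 1)).card = (descents (h + 2) L).card + (descents h L).card := by
  rw [descents, Finset.card_union_of_disjoint,
    Finset.card_image_of_injective _ List.cons_injective,
    Finset.card_image_of_injective _ List.cons_injective]
  simp only [Finset.disjoint_left, Finset.mem_image]
  rintro _ ⟨v, -, rfl⟩ ⟨v', -, h⟩
  exact absurd (List.cons.inj h).1 (by decide)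

-- A path from height `a + b + 1` to `0` splits uniquely at the down step that first reaches `b`.
theorem sum_antidiagonal_card_descents (a b L : ℕ) :
    ∑ ij ∈ antidiagonal L, (descents a ij.1).card * (descents b ij.2).card =
      (descents (a + b + 1) (L + 1)).card := by
  induction L generalizing a with
  | zero =>
    rw [card_descents_succ_succ]
    cases a <;> cases b <;> simp [descents]
  | succ L ih =>
    rw [Finset.Nat.sum_antidiagonal_succ, card_descents_succ_succ]
    obtain _ | a := a
    · simp only [card_descents_zero_succ, ih]
      simp only [descents, if_true, Finset.card_singleton, one_mul, zero_add]
      rw [add_comm, add_comm 1 b]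
    · have hzero : (descents (a + 1) 0).card = 0 := by simp [descents]
      simp only [card_descents_succ_succ a, add_mul, Finset.sum_add_distrib, ih, hzero, zero_mul,
        zero_add]
      congr 3 <;> omega

theorem card_descents_add_choose {r s : ℕ} (h : L + r = 2 * s) :
    (descents r L).card + L.choose (s + 1) = L.choose s := by
  induction L generalizing r s with
  | zero =>
    obtain _ | s := s
    · simp [descents, show r = 0 by omega]
    · simp [descents, show r ≠ 0 by omega]
  | succ L ih =>
    obtain ⟨t, rfl⟩ : ∃ t, s = t + 1 := ⟨s - 1, by omega⟩
    rw [Nat.choose_succ_succ' L (t + 1), Nat.choose_succ_succ' L t]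
    obtain _ | r := r
    · rw [card_descents_zero_succ]
      have hup := ih (r := 1) (s := t + 1) (by omega)
      have hsymm : L.choose t = L.choose (t + 1) := Nat.choose_symm_of_eq_add (by omega)
      omega
    · rw [card_descents_succ_succ]
      have hup := ih (r := r + 2) (s := t + 1) (by omega)
      have hdown := ih (r := r) (s := t) (by omega)
      omega

theorem sum_card_descents {r s : ℕ} (N : ℕ) (h : L + r = 2 * s) :
    ∑ g ∈ Finset.range N, (descents (r + 2 * g) L).card + L.choose (s + N) = L.choose s := by
  induction N with
  | zero => simp
  | succ N ih =>
    have := card_descents_add_choose (L := L) (r := r + 2 * N) (s := s + N) (by omega)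
    rw [Finset.sum_range_succ, ← ih, ← this]
    ring_nf

theorem coe_descents_zero (n : ℕ) : (descents 0 (2 * n) : Set (List Bool)) = DyckSet n := by
  ext w
  rw [Finset.mem_coe, mem_descents, and_comm, ← isDyckWord_iff_descendsFrom]
  rfl

theorem ncard_dyckSet (n : ℕ) : (DyckSet n).ncard = (2 * n).choose n / (n + 1) := by
  rw [← coe_descents_zero, Set.ncard_coe_finset]
  have hcard := card_descents_add_choose (L := 2 * n) (r := 0) (s := n) rfl
  have hsucc := Nat.choose_succ_right_eq (2 * n) n
  rw [two_mul, Nat.add_sub_cancel, ← two_mul] at hsucc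
  refine (Nat.div_eq_of_eq_mul_left n.succ_pos ?_).symm
  nlinarith

theorem append_mem_dyckSet_iff : X ++ (List.replicate k false ++ true :: Y) ∈ DyckSet n ↔
    X.length + Y.length + (k + 1) = 2 * n ∧
      ∃ g, DescendsFrom (g + k) (reverseWord X) ∧ DescendsFrom (g + 1) Y := by
  have hlen : (X ++ (List.replicate k false ++ true :: Y)).length =
      X.length + Y.length + (k + 1) := by
    simp only [List.length_append, List.length_replicate, List.length_cons]
    omega
  rw [DyckSet, Set.mem_ofPred_eq, isDyckWord_iff_descendsFrom, hlen, and_comm,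
    descendsFrom_zero_append]
  refine and_congr_right fun _ => ?_
  simp only [descendsFrom_replicate_append, DescendsFrom]
  grind

/-- The pairs `(X, Y)` for which `X d^k u Y` is a Dyck word of size `n`. -/
def markedWords (n k : ℕ) : Set (List Bool × List Bool) :=
  {p | p.1 ++ (List.replicate k false ++ true :: p.2) ∈ DyckSet n}

theorem markedWords_eq_image (hk : k < n) : markedWords n k =
    Prod.map reverseWord id '' ((Finset.range (2 * n) ×ˢ
      antidiagonal (2 * n - k - 1)).biUnion fun t =>
        descents (t.1 + k) t.2.1 ×ˢ descents (t.1 + 1) t.2.2 : Finset (List Bool × List Bool)) := by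
  have hinv : Function.Involutive (Prod.map reverseWord (id : List Bool → List Bool)) :=
    fun p => Prod.ext (reverseWord_involutive p.1) rfl
  rw [Set.image_eq_preimage_of_inverse hinv.leftInverse hinv.rightInverse]
  ext ⟨X, Y⟩
  simp only [markedWords, Set.mem_ofPred_eq, append_mem_dyckSet_iff, Set.mem_preimage,
    Prod.map_apply, id_eq, Finset.mem_coe, Finset.mem_biUnion, Finset.mem_product,
    Finset.mem_range, Finset.HasAntidiagonal.mem_antidiagonal, mem_descents, length_reverseWord]
  constructor
  · rintro ⟨hlen, g, hX, hY⟩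
    have := hY.le_length
    exact ⟨(g, X.length, Y.length), ⟨by omega, by dsimp only; omega⟩, ⟨rfl, hX⟩, rfl, hY⟩
  · rintro ⟨⟨g, i, j⟩, ⟨-, hij⟩, ⟨hX, hX'⟩, hY, hY'⟩
    exact ⟨by dsimp only at hij hX hY; omega, g, hX', hY'⟩

theorem ncard_markedWords (hk : k < n) : (markedWords n k).ncard = (2 * n - k).choose (n + 1) := by
  rw [markedWords_eq_image hk, Set.ncard_image_of_injective _
    (reverseWord_involutive.injective.prodMap Function.injective_id), Set.ncard_coe_finset,
    Finset.card_biUnion]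
  · simp only [Finset.card_product, Finset.sum_product, sum_antidiagonal_card_descents]
    have h := sum_card_descents (L := 2 * n - k) (r := k + 2) (s := n + 1) (2 * n) (by omega)
    rw [Nat.choose_eq_zero_of_lt (by omega : 2 * n - k < n + 1 + 2 * n), add_zero] at h
    rw [← h]
    exact Finset.sum_congr rfl fun g _ => by congr 2 <;> omega
  · rintro ⟨g, i, j⟩ - ⟨g', i', j'⟩ - hne
    refine Finset.disjoint_left.mpr ?_
    rintro ⟨X, Y⟩ hXY hXY'
    simp only [Finset.mem_product, mem_descents] at hXY hXY'
    have := hXY.2.2.height_unique hXY'.2.2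
    grind

end DescendingPaths

section RightIntervals

variable {n m m' k : ℕ} {e : ℕ → ℕ}

theorem eq_of_append_replicate_append_eq {X X' Y Y' : List Bool}
    (h : X ++ (List.replicate k false ++ true :: Y) =
      X' ++ (List.replicate k false ++ true :: Y')) (hcount : X.count true = X'.count true) :
    X = X' ∧ Y = Y' := by
  have hd (X Y : List Bool) : dBefore (X ++ (List.replicate k false ++ true :: Y)) (X.count true) =
      X.count false + k := by
    rw [← List.append_assoc, dBefore_append_of_le _ _ (by simp [List.count_replicate])]
    simp [dBefore, List.count_replicate]
  have hfalse : X.count false = X'.count false :=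
    Nat.add_right_cancel (by rw [← hd X Y, ← hd X' Y', h, hcount])
  have hlen : X.length = X'.length := by
    rw [← X.count_true_add_count_false, ← X'.count_true_add_count_false, hcount, hfalse]
  obtain ⟨hX, hY⟩ := List.append_inj h hlen
  exact ⟨hX, List.cons_injective (List.append_cancel_left hY)⟩

/-- The pairs `(x, m)` at which the right intervals of height `k` start. -/
def rightIntervalStarts (n k : ℕ) : Set (BracketVector n × ℕ) :=
  {q | q.2 < n ∧ k ≤ Nat.count (q.1.1 · = q.2) q.2}

theorem ncard_rightIntervalStarts (hk : 0 < k) :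
    (rightIntervalStarts n k).ncard = (markedWords n k).ncard := by
  refine (Set.ncard_congr (fun p (hp : p ∈ markedWords n k) =>
    (bracketEquiv n ⟨_, hp⟩, p.1.count true)) ?_ ?_ ?_).symm
  · exact fun p hp => (le_count_bracketEquiv_iff ⟨_, hp⟩ hk).mpr ⟨p.1, p.2, rfl, rfl⟩
  · intro p q hp hq h
    obtain ⟨hw, hcount⟩ := Prod.mk.inj h
    have hw := congrArg Subtype.val ((bracketEquiv n).injective hw)
    exact Prod.ext_iff.mpr (eq_of_append_replicate_append_eq hw hcount)
  · rintro ⟨x, m⟩ hq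
    obtain ⟨w, rfl⟩ := (bracketEquiv n).surjective x
    obtain ⟨X, Y, hw, rfl⟩ := (le_count_bracketEquiv_iff w hk).mp hq
    have hXY : (X, Y) ∈ markedWords n k := (congrArg (· ∈ DyckSet n) hw).mp w.2
    refine ⟨(X, Y), hXY, ?_⟩
    congr 2
    exact Subtype.ext hw.symm

theorem raiseFirst_left_inj (hm : m < e m) (hk : 0 < k) (hcount : k ≤ Nat.count (e · = m) m)
    (h : raiseFirst e m k = raiseFirst e m' k) : m = m' := by
  obtain ⟨j, -, hj, hj0⟩ := exists_count_eq_of_lt_count (hk.trans_le hcount)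
  by_contra hne
  have hjm := congrFun h j
  rw [raiseFirst_of_lt_count hj (hj0.trans_lt hk), raiseFirst_of_ne (hj.trans_ne hne), hj] at hjm
  exact hm.ne' hjm

theorem ncard_isRightInterval (hk : 0 < k) :
    {p : BracketVector n × BracketVector n | IsRightInterval k p.1 p.2}.ncard =
      (2 * n - k).choose (n + 1) := by
  obtain hkn | hkn := lt_or_ge k n
  · rw [← ncard_markedWords hkn, ← ncard_rightIntervalStarts hk]
    refine (Set.ncard_congr (fun q hq =>
      (q.1, ⟨raiseFirst q.1.1 q.2 k, isBracketVector_raiseFirst q.1.2 hq.1 k⟩)) ?_ ?_ ?_).symm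
    · exact fun q hq => ⟨q.2, hq.1, hq.2, rfl⟩
    · rintro ⟨x, m⟩ ⟨x', m'⟩ hq hq' h
      obtain ⟨rfl, h⟩ := Prod.mk.inj h
      exact Prod.ext rfl (raiseFirst_left_inj (x.2.lt_apply m) hk hq.2 (congrArg Subtype.val h))
    · rintro ⟨x, y⟩ ⟨m, hm, hcount, hy⟩
      exact ⟨(x, m), ⟨hm, hcount⟩, Prod.ext rfl (Subtype.ext hy.symm)⟩
  · rw [Nat.choose_eq_zero_of_lt (by omega), Set.ncard_eq_zero]
    exact Set.eq_empty_of_forall_notMem fun p hp => hkn.not_gt hp.lt_size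

end RightIntervals

section LinearIntervals

variable {n k : ℕ}

theorem ncard_linearInterval_eq (n : ℕ) :
    {pq : List Bool × List Bool | LinearInterval (DyckSet n) tamLE pq.1 pq.2}.ncard =
      {p : BracketVector n × BracketVector n | IsLinearInterval p.1 p.2}.ncard :=
  ncard_pairs_congr (fun _ _ h => ⟨h.1, h.2.1⟩) (linearInterval_iff_isLinearInterval tamLE_iff)

/-- The linear intervals of height `k` in the poset of bracket vectors of size `n`. -/
def linearIntervals (n k : ℕ) : Set (BracketVector n × BracketVector n) :=
  {p | IsLinearInterval p.1 p.2 ∧ HasIntervalHeight p.1 p.2 k}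

theorem ncard_linearInterval_intervalHeight_eq (n k : ℕ) :
    {pq : List Bool × List Bool | LinearInterval (DyckSet n) tamLE pq.1 pq.2 ∧
      IntervalHeight (DyckSet n) tamLE pq.1 pq.2 k}.ncard = (linearIntervals n k).ncard :=
  ncard_pairs_congr (p := fun P Q => LinearInterval (DyckSet n) tamLE P Q ∧
      IntervalHeight (DyckSet n) tamLE P Q k)
    (r := fun x y => IsLinearInterval x y ∧ HasIntervalHeight x y k)
    (fun _ _ h => ⟨h.1.1, h.1.2.1⟩) fun P Q =>
    and_congr (linearInterval_iff_isLinearInterval tamLE_iff P Q)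
      (intervalHeight_iff_hasIntervalHeight tamLE_iff P Q k)

theorem ncard_linearIntervals_zero (n : ℕ) :
    (linearIntervals n 0).ncard = (2 * n).choose n / (n + 1) := by
  have hdiag : linearIntervals n 0 = (fun x => (x, x)) '' Set.univ := by
    ext ⟨x, y⟩
    simp only [linearIntervals, Set.mem_ofPred_eq, hasIntervalHeight_zero_iff, Set.image_univ,
      Set.mem_range, Prod.mk.injEq, exists_eq_left, and_iff_right_iff_imp]
    rintro rfl
    exact isLinearInterval_self x
  rw [hdiag, Set.ncard_image_of_injective _ fun x y h => (Prod.mk.inj h).1, Set.ncard_univ,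
    ← Nat.card_congr (bracketEquiv n), Nat.card_coe_set_eq, ncard_dyckSet]

theorem ncard_linearIntervals_one (n : ℕ) :
    (linearIntervals n 1).ncard = (2 * n - 1).choose (n + 1) := by
  simp only [linearIntervals, isLinearInterval_and_hasIntervalHeight_one_iff,
    ncard_isRightInterval one_pos]

theorem ncard_linearIntervals (hk : 2 ≤ k) :
    (linearIntervals n k).ncard = 2 * (2 * n - k).choose (n + 1) := by
  have hpos : 0 < k := by omega
  set R := {p : BracketVector n × BracketVector n | IsRightInterval k p.1 p.2} with hR
  let dualPair (p : BracketVector n × BracketVector n) :=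
    (BracketVector.dual p.2, BracketVector.dual p.1)
  have hinv : Function.Involutive dualPair := fun p =>
    Prod.ext (BracketVector.dual_involutive p.1) (BracketVector.dual_involutive p.2)
  have hunion : linearIntervals n k = R ∪ dualPair '' R := by
    rw [Set.image_eq_preimage_of_inverse hinv.leftInverse hinv.rightInverse]
    exact Set.ext fun p => isLinearInterval_and_hasIntervalHeight_iff hpos
  have hdisj : Disjoint R (dualPair '' R) := by
    rw [Set.image_eq_preimage_of_inverse hinv.leftInverse hinv.rightInverse]
    exact Set.disjoint_left.mpr fun p hp => hp.not_dual hk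
  rw [hunion, Set.ncard_union_eq hdisj, Set.ncard_image_of_injective _ hinv.injective, hR,
    ncard_isRightInterval hpos, ← two_mul]

theorem sum_range_choose_sub {L r M : ℕ} (h : M ≤ L) :
    ∑ i ∈ Finset.range M, (L - 1 - i).choose r + (L - M).choose (r + 1) = L.choose (r + 1) := by
  induction M with
  | zero => simp
  | succ M ih =>
    rw [← ih (by omega), Finset.sum_range_succ, show L - M = L - (M + 1) + 1 by omega,
      Nat.choose_succ_succ, show L - 1 - M = L - (M + 1) by omega, add_assoc]

theorem sum_ncard_linearIntervals (hn : 0 < n) :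
    ∑ k ∈ Finset.range n, (linearIntervals n k).ncard =
      (2 * n).choose n / (n + 1) + (2 * n - 1).choose (n + 1) + 2 * (2 * n - 1).choose (n + 2) := by
  obtain rfl | hn := Nat.eq_or_lt_of_le (Nat.succ_le_of_lt hn)
  · simp [ncard_linearIntervals_zero, Nat.choose]
  obtain ⟨N, rfl⟩ : ∃ N, n = N + 2 := ⟨n - 2, by omega⟩
  have htail (i : ℕ) : (linearIntervals (N + 2) (i + 1 + 1)).ncard =
      2 * (2 * (N + 2) - 1 - 1 - i).choose (N + 2 + 1) := by
    rw [ncard_linearIntervals (by omega)]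
    congr 2
    omega
  have hsum : ∑ i ∈ Finset.range N, (2 * (N + 2) - 1 - 1 - i).choose (N + 2 + 1) =
      (2 * (N + 2) - 1).choose (N + 2 + 2) := by
    rw [← sum_range_choose_sub (by omega : N ≤ 2 * (N + 2) - 1),
      Nat.choose_eq_zero_of_lt (by omega : 2 * (N + 2) - 1 - N < N + 2 + 1 + 1), add_zero]
  rw [Finset.sum_range_succ', Finset.sum_range_succ', ncard_linearIntervals_zero,
    ncard_linearIntervals_one, Finset.sum_congr rfl fun i _ => htail i, ← Finset.mul_sum, hsum]
  ring

end LinearIntervals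

/-- counts of linear intervals of each height in the Tamari lattice
`Tam_n`, and the total count.  (Note: `binom (2n-1) (n-2)` is written in the symmetric
form `binom (2n-1) (n+1)` to avoid the truncation of natural subtraction at `n = 1`.) -/
theorem stmt1 (n : ℕ) (hn : 1 ≤ n) :
    {pq : List Bool × List Bool |
        LinearInterval (DyckSet n) (tamLE) pq.1 pq.2 ∧
          IntervalHeight (DyckSet n) (tamLE) pq.1 pq.2 (0)}.ncard = (2 * n).choose n / (n + 1) ∧
    {pq : List Bool × List Bool |
        LinearInterval (DyckSet n) (tamLE) pq.1 pq.2 ∧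
          IntervalHeight (DyckSet n) (tamLE) pq.1 pq.2 (1)}.ncard = (2 * n - 1).choose (n + 1) ∧
    (∀ k, 2 ≤ k → k < n →
      {pq : List Bool × List Bool |
        LinearInterval (DyckSet n) (tamLE) pq.1 pq.2 ∧
          IntervalHeight (DyckSet n) (tamLE) pq.1 pq.2 (k)}.ncard = 2 * (2 * n - k).choose (n - k - 1)) ∧
    (∀ k, n ≤ k → ∀ P Q : List Bool,
      ¬ (LinearInterval (DyckSet n) tamLE P Q ∧
          IntervalHeight (DyckSet n) tamLE P Q k)) ∧
    {pq : List Bool × List Bool |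
        LinearInterval (DyckSet n) tamLE pq.1 pq.2}.ncard
      = (2 * n).choose n / (n + 1) + (2 * n - 1).choose (n + 1)
          + 2 * (2 * n - 1).choose (n + 2) := by
  refine ⟨?_, ?_, fun k hk hkn => ?_, fun k hk P Q h => ?_, ?_⟩
  · rw [ncard_linearInterval_intervalHeight_eq, ncard_linearIntervals_zero]
  · rw [ncard_linearInterval_intervalHeight_eq, ncard_linearIntervals_one]
  · rw [ncard_linearInterval_intervalHeight_eq, ncard_linearIntervals hk,
      Nat.choose_symm_of_eq_add (by omega : 2 * n - k = n + 1 + (n - k - 1))]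
  · obtain ⟨hlin, hheight⟩ := h
    lift P to DyckSet n using hlin.1
    lift Q to DyckSet n using hlin.2.1
    rw [linearInterval_iff_isLinearInterval tamLE_iff] at hlin
    rw [intervalHeight_iff_hasIntervalHeight tamLE_iff] at hheight
    obtain ⟨l, hl, hheight'⟩ := hlin.exists_hasIntervalHeight_lt hn
    exact hk.not_gt (hheight.unique hheight' ▸ hl)
  · rw [ncard_linearInterval_eq, ← sum_ncard_linearIntervals hn]
    exact ncard_isLinearInterval_eq_sum fun x y h => h.exists_hasIntervalHeight_lt hn
end

section
/- For every n ≥ 1 and every k ≥ 0, the Tamari lattice Tam_n and the Dyck lattice Dyck_n have the same number of linear intervals of height k. -/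
/-!
Both orders are generated by the moves `A d C B → A C d B` with `C` an `ε`-excursion, that is, an up
step followed by the shortest word which compensates a rise by `ε`: for `ε = 1` these are the Tamari
rotations, and for `ε = 0` every excursion is `u` and the moves generate inclusion. An interval is
linear of height `k` exactly when at each step from its bottom only one rotation stays below its
top, and `k` rotations are made. For `k ≥ 1` such intervals are either left, from `A d^k C B` to
`A C d^k B`, or right, from `A d C₁ ⋯ C_k B` to `A C₁ ⋯ C_k d B`, and these two families meet only
for `k = 1`, where they coincide. That these intervals are linear rests on the monotonicity of a
bracket vector along rotations; that there are no others, on the commutation of rotations which do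
not interact.

The sizes of these families do not depend on `ε`. A left interval amounts to a Dyck word with a
marked factorization `A d^k u W`, since `C B` is recovered from `u W` by cutting off an excursion.
Writing `C_i = u D_i`, a right interval becomes a Dyck word `A d u^k W` with `W = D₁ ⋯ D_k B`, since
the `D_i` are cut off from `W` one after another.
-/

theorem append_eq_append_cons_iff {α : Type*} {v w v' w' : List α} {a : α} :
    v ++ w = v' ++ a :: w' ↔
      (∃ t, v' = v ++ t ∧ w = t ++ a :: w') ∨ ∃ t, v = v' ++ a :: t ∧ w' = t ++ w := by
  refine ⟨fun heq => ?_, ?_⟩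
  · rcases List.append_eq_append_iff.1 heq with ht | ⟨t, rfl, ht⟩
    · exact .inl ht
    · cases t with
      | nil => exact .inl ⟨[], by simp, by simpa using ht.symm⟩
      | cons b t =>
        obtain ⟨rfl, rfl⟩ := List.cons.inj ht
        exact .inr ⟨t, rfl, rfl⟩
  · rintro (⟨t, rfl, rfl⟩ | ⟨t, rfl, rfl⟩) <;> simp

/-- The net rise of a word: an up step rises by `ε` and a down step falls by `1`.
The uniform increment function `ε` gives the Tamari order for `ε = 1` and the Dyck order for
`ε = 0`. -/
def altitude (ε : ℕ) (w : List Bool) : ℤ := ε * w.count true - w.count false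

section Altitude

variable (ε : ℕ)

@[simp] theorem altitude_nil : altitude ε [] = 0 := by simp [altitude]

@[simp] theorem altitude_cons_true (w : List Bool) :
    altitude ε (true :: w) = ε + altitude ε w := by
  simp [altitude]; ring

@[simp] theorem altitude_cons_false (w : List Bool) :
    altitude ε (false :: w) = altitude ε w - 1 := by
  simp [altitude]; ring

@[simp] theorem altitude_append (v w : List Bool) :
    altitude ε (v ++ w) = altitude ε v + altitude ε w := by
  simp [altitude]; ring

end Altitude

theorem altitude_mono {ε ε' : ℕ} (h : ε ≤ ε') (w : List Bool) : altitude ε w ≤ altitude ε' w := by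
  rw [altitude, altitude]
  gcongr

/-- `IsDescent ε h w`: the word `w`, read from altitude `h`, reaches altitude `0` at its end and
not before. -/
inductive IsDescent (ε : ℕ) : ℕ → List Bool → Prop
  | nil : IsDescent ε 0 []
  | up {h : ℕ} {w : List Bool} : IsDescent ε (h + 1 + ε) w → IsDescent ε (h + 1) (true :: w)
  | down {h : ℕ} {w : List Bool} : IsDescent ε h w → IsDescent ε (h + 1) (false :: w)

section Descent

variable {ε h k : ℕ} {v v' w w' B B' : List Bool}

@[simp] theorem isDescent_zero_iff : IsDescent ε 0 w ↔ w = [] :=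
  ⟨fun | .nil => rfl, fun hw => hw ▸ .nil⟩

@[simp] theorem isDescent_nil_iff : IsDescent ε h [] ↔ h = 0 :=
  ⟨fun | .nil => rfl, fun hh => hh ▸ .nil⟩

@[simp] theorem isDescent_succ_cons_true_iff :
    IsDescent ε (h + 1) (true :: w) ↔ IsDescent ε (h + 1 + ε) w :=
  ⟨fun | .up hw => hw, .up⟩

@[simp] theorem isDescent_succ_cons_false_iff :
    IsDescent ε (h + 1) (false :: w) ↔ IsDescent ε h w :=
  ⟨fun | .down hw => hw, .down⟩

theorem isDescent_replicate_false (ε k : ℕ) : IsDescent ε k (List.replicate k false) := by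
  induction k with
  | zero => exact .nil
  | succ k ih => exact .down ih

theorem IsDescent.append_iff (hv : IsDescent ε h v) :
    IsDescent ε (h + k) (v ++ w) ↔ IsDescent ε k w := by
  induction hv with
  | nil => simp
  | @up h v _ ih =>
    rw [List.cons_append, Nat.add_right_comm, isDescent_succ_cons_true_iff, ← ih]
    congr! 1
    lia
  | @down h v _ ih => rw [List.cons_append, Nat.add_right_comm, isDescent_succ_cons_false_iff, ih]

theorem IsDescent.append_inj (hv : IsDescent ε h v) (hv' : IsDescent ε h v')
    (heq : v ++ B = v' ++ B') : v = v' ∧ B = B' := by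
  induction hv generalizing v' with
  | nil => cases hv'; exact ⟨rfl, heq⟩
  | up _ ih =>
    cases hv' with
    | up hv' => simpa using ih hv' (by simpa using heq)
    | down => simp at heq
  | down _ ih =>
    cases hv' with
    | up => simp at heq
    | down hv' => simpa using ih hv' (by simpa using heq)

theorem IsDescent.altitude_eq (hw : IsDescent ε h w) : altitude ε w = -h := by
  induction hw with
  | nil => simp
  | up _ ih => rw [altitude_cons_true, ih]; push_cast; ring
  | down _ ih => rw [altitude_cons_false, ih]; push_cast; ring

theorem IsDescent.altitude_take_pos (hw : IsDescent ε h w) {m : ℕ} (hm : m < w.length) :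
    0 < h + altitude ε (w.take m) := by
  induction hw generalizing m with
  | nil => simp at hm
  | @up h w _ ih =>
    cases m with
    | zero => simp
    | succ m =>
      have := ih (Nat.lt_of_succ_lt_succ hm)
      simp only [List.take_succ_cons, altitude_cons_true]
      lia
  | @down h w _ ih =>
    cases m with
    | zero => simp
    | succ m =>
      have := ih (Nat.lt_of_succ_lt_succ hm)
      simp only [List.take_succ_cons, altitude_cons_false]
      lia

theorem isDescent_of_altitude_take_ne_zero (halt : altitude ε w = -h)
    (hne : ∀ m < w.length, h + altitude ε (w.take m) ≠ 0) : IsDescent ε h w := by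
  induction w generalizing h with
  | nil => simpa using halt
  | cons a w ih =>
    cases h with
    | zero => simpa using hne 0 (by simp)
    | succ h =>
      have hne' (m : ℕ) (hm : m < w.length) := hne (m + 1) (by simpa using hm)
      cases a
      · simp only [altitude_cons_false, List.take_succ_cons] at halt hne'
        exact .down (ih (by lia) fun m hm hzero => hne' m hm (by lia))
      · simp only [altitude_cons_true, List.take_succ_cons] at halt hne'
        exact .up (ih (by lia) fun m hm hzero => hne' m hm (by lia))

theorem exists_isDescent_append (hw : altitude ε w ≤ -h) :
    ∃ v B, w = v ++ B ∧ IsDescent ε h v := by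
  induction w generalizing h with
  | nil => exact ⟨[], [], rfl, by simpa using hw⟩
  | cons a w ih =>
    cases h with
    | zero => exact ⟨[], _, rfl, .nil⟩
    | succ h =>
      cases a
      · rw [altitude_cons_false] at hw
        obtain ⟨v, B, rfl, hv⟩ := ih (h := h) (by lia)
        exact ⟨_, B, rfl, .down hv⟩
      · rw [altitude_cons_true] at hw
        obtain ⟨v, B, rfl, hv⟩ := ih (h := h + 1 + ε) (by lia)
        exact ⟨_, B, rfl, .up hv⟩

theorem IsDescent.exists_append (hv : IsDescent ε (h + k) v) :
    ∃ v₁ v₂, v = v₁ ++ v₂ ∧ IsDescent ε h v₁ ∧ IsDescent ε k v₂ := by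
  obtain ⟨v₁, v₂, rfl, hv₁⟩ := exists_isDescent_append (ε := ε) (h := h) (w := v) (by
    rw [hv.altitude_eq]; push_cast; lia)
  exact ⟨v₁, v₂, rfl, hv₁, hv₁.append_iff.1 hv⟩

theorem IsDescent.exists_suffix (hv : IsDescent ε h (v ++ w)) :
    ∃ m, IsDescent ε m w ∧ ∀ w', IsDescent ε m w' → IsDescent ε h (v ++ w') := by
  induction v generalizing h with
  | nil => exact ⟨h, hv, fun _ => id⟩
  | cons a v ih =>
    cases hv with
    | up hv =>
      obtain ⟨m, hw, hm⟩ := ih hv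
      exact ⟨m, hw, fun w' hw' => .up (hm w' hw')⟩
    | down hv =>
      obtain ⟨m, hw, hm⟩ := ih hv
      exact ⟨m, hw, fun w' hw' => .down (hm w' hw')⟩

end Descent

/-- The excursions of up steps: an up step followed by the shortest word which compensates it.
For `ε = 1` these are the prime Dyck words, and for `ε = 0` the single word `u`. -/
def IsExcursion (ε : ℕ) (C : List Bool) : Prop :=
  ∃ D, C = true :: D ∧ IsDescent ε ε D

/-- The words which end at their initial altitude and never go below it; equivalently, the words
which reach altitude `-1` for the first time when a down step is appended to them. -/
def IsBalanced (ε : ℕ) (M : List Bool) : Prop :=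
  IsDescent ε 1 (M ++ [false])

section Excursion

variable {ε h k : ℕ} {A B B' C C' D M W X Z : List Bool}

theorem isExcursion_cons_true_iff : IsExcursion ε (true :: D) ↔ IsDescent ε ε D := by
  simp [IsExcursion]

theorem IsExcursion.isDescent_append_iff (hC : IsExcursion ε C) :
    IsDescent ε (h + 1) (C ++ W) ↔ IsDescent ε (h + 1) W := by
  obtain ⟨D, rfl, hD⟩ := hC
  rw [List.cons_append, isDescent_succ_cons_true_iff, Nat.add_comm, hD.append_iff]

theorem IsExcursion.append_inj (hC : IsExcursion ε C) (hC' : IsExcursion ε C')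
    (heq : C ++ B = C' ++ B') : C = C' ∧ B = B' := by
  obtain ⟨D, rfl, hD⟩ := hC
  obtain ⟨D', rfl, hD'⟩ := hC'
  simpa using hD.append_inj hD' (by simpa using heq)

theorem isBalanced_nil : IsBalanced ε [] := .down .nil

theorem IsExcursion.isBalanced_append (hC : IsExcursion ε C) (hM : IsBalanced ε M) :
    IsBalanced ε (C ++ M) := by
  rw [IsBalanced, List.append_assoc]
  exact hC.isDescent_append_iff.2 hM

theorem isBalanced_flatten {Cs : List (List Bool)} (hCs : ∀ C ∈ Cs, IsExcursion ε C) :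
    IsBalanced ε Cs.flatten := by
  induction Cs with
  | nil => exact isBalanced_nil
  | cons C Cs ih =>
    rw [List.forall_mem_cons] at hCs
    exact hCs.1.isBalanced_append (ih hCs.2)

theorem IsExcursion.isBalanced (hC : IsExcursion ε C) : IsBalanced ε C := by
  simpa using hC.isBalanced_append isBalanced_nil

theorem IsDescent.exists_matching (hX : IsDescent ε k (X ++ false :: Z)) :
    (∃ h ≤ k, IsDescent ε h (X ++ [false])) ∨
      ∃ X₁ X₂ h, X = X₁ ++ true :: X₂ ∧ h ≤ ε ∧ IsDescent ε h (X₂ ++ [false]) := by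
  induction X generalizing k with
  | nil =>
    cases hX with
    | down => exact .inl ⟨1, by lia, .down .nil⟩
  | cons a X ih =>
    cases hX with
    | @up k _ hX =>
      rcases ih hX with ⟨h, hk, hh⟩ | ⟨X₁, X₂, h, rfl, hε, hh⟩
      · rcases le_or_gt h ε with hε | hε
        · exact .inr ⟨[], X, h, rfl, hε, hh⟩
        · obtain ⟨j, rfl⟩ := Nat.exists_eq_add_of_lt hε
          refine .inl ⟨j + 1, by lia, .up ?_⟩
          rwa [show j + 1 + ε = ε + j + 1 by lia]
      · exact .inr ⟨true :: X₁, X₂, h, rfl, hε, hh⟩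
    | down hX =>
      rcases ih hX with ⟨h, hk, hh⟩ | ⟨X₁, X₂, h, rfl, hε, hh⟩
      · exact .inl ⟨h + 1, by lia, .down hh⟩
      · exact .inr ⟨false :: X₁, X₂, h, rfl, hε, hh⟩

theorem IsBalanced.exists_matching (hM : IsBalanced ε (X ++ false :: Z)) :
    ∃ X₁ X₂ h, X = X₁ ++ true :: X₂ ∧ h ≤ ε ∧ IsDescent ε h (X₂ ++ [false]) := by
  rw [IsBalanced, List.append_assoc, List.cons_append] at hM
  rcases hM.exists_matching with ⟨h, hle, hX⟩ | hX
  · interval_cases h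
    · simp at hX
    · have heq := (hX.append_inj (B := Z ++ [false]) (B' := []) hM (by simp)).2
      simp at heq
  · exact hX

end Excursion

section DyckOrder

variable {n : ℕ} {A A' P Q R X X' Y Y' N N' B B' : List Bool}

theorem prefHeight_eq (w : List Bool) (j : ℕ) : prefHeight w j = altitude 1 (w.take j) := by
  simp [prefHeight, altitude]

theorem prefHeight_cons_succ (a : Bool) (w : List Bool) (j : ℕ) :
    prefHeight (a :: w) (j + 1) = altitude 1 [a] + prefHeight w j := by
  rw [prefHeight_eq, prefHeight_eq, List.take_succ_cons, ← altitude_append, List.singleton_append]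

theorem prefHeight_length_add (v w : List Bool) (j : ℕ) :
    prefHeight (v ++ w) (v.length + j) = altitude 1 v + prefHeight w j := by
  simp [prefHeight_eq, List.take_append, List.take_of_length_le]

theorem dyckLE_refl (P : List Bool) : dyckLE P P := fun _ => le_rfl

theorem dyckLE.trans (h : dyckLE P Q) (h' : dyckLE Q R) : dyckLE P R :=
  fun j => (h j).trans (h' j)

theorem dyckLE_cons_iff (a : Bool) : dyckLE (a :: P) (a :: Q) ↔ dyckLE P Q := by
  refine ⟨fun h j => ?_, fun h j => ?_⟩
  · simpa only [prefHeight_cons_succ, add_le_add_iff_left] using h (j + 1)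
  · cases j with
    | zero => simp [prefHeight_eq]
    | succ j => simpa only [prefHeight_cons_succ, add_le_add_iff_left] using h j

theorem dyckLE_append_left_iff (A : List Bool) : dyckLE (A ++ P) (A ++ Q) ↔ dyckLE P Q := by
  induction A with
  | nil => rfl
  | cons a A ih => rw [List.cons_append, List.cons_append, dyckLE_cons_iff, ih]

theorem dyckLE.antisymm (h : dyckLE P Q) (h' : dyckLE Q P) : P = Q := by
  have hhead := le_antisymm (h 1) (h' 1)
  induction P generalizing Q with
  | nil => cases Q with
    | nil => rfl
    | cons b Q => cases b <;> simp [prefHeight_eq] at hhead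
  | cons a P ih => cases Q with
    | nil => cases a <;> simp [prefHeight_eq] at hhead
    | cons b Q =>
      obtain rfl : a = b := by cases a <;> cases b <;> simp [prefHeight_eq] at hhead ⊢
      rw [dyckLE_cons_iff] at h h'
      rw [ih h h' (le_antisymm (h 1) (h' 1))]

theorem dyckLE_move_down (A C B : List Bool) :
    dyckLE (A ++ false :: (C ++ B)) (A ++ (C ++ false :: B)) := by
  rw [dyckLE_append_left_iff]
  induction C with
  | nil => exact dyckLE_refl _
  | cons a C ih =>
    refine dyckLE.trans (fun j => ?_) ((dyckLE_cons_iff a).2 ih)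
    cases a with
    | false => exact le_rfl
    | true =>
      match j with
      | 0 => simp [prefHeight_eq]
      | 1 => simp [prefHeight_eq]
      | j + 2 => simp [prefHeight_cons_succ]

theorem not_dyckLE_of_perm (hN : N.Perm N') :
    ¬ dyckLE (N ++ true :: X) (N' ++ false :: X') := by
  intro h
  have hlt := h (N.length + 1)
  rw [prefHeight_length_add, hN.length_eq, prefHeight_length_add, altitude, altitude,
    hN.count_eq, hN.count_eq] at hlt
  simp [prefHeight_eq] at hlt

theorem eq_of_first_difference
    (hP : A ++ false :: X = A' ++ false :: X') (hQ : A ++ true :: Y = A' ++ true :: Y') :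
    A = A' := by
  rcases append_eq_append_cons_iff.1 hP with ⟨T, rfl, -⟩ | ⟨T, rfl, -⟩
  · cases T <;> simp_all
  · simp at hQ

theorem exists_eq_append_cons_of_dyckLE (hN : N.Perm N')
    (heq : A ++ (N ++ B) = A' ++ false :: X) (hle : dyckLE (A' ++ true :: Y) (A ++ (N' ++ B))) :
    ∃ N₁ N₂, N = N₁ ++ false :: N₂ ∧ A' = A ++ N₁ ∧ X = N₂ ++ B := by
  rcases append_eq_append_cons_iff.1 heq with ⟨T, rfl, hT⟩ | ⟨T, rfl, -⟩
  · rcases append_eq_append_cons_iff.1 hT with ⟨U, rfl, rfl⟩ | ⟨U, rfl, rfl⟩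
    · simp only [List.append_assoc, dyckLE_append_left_iff] at hle
      simp only [← List.append_assoc] at hle
      exact absurd hle (not_dyckLE_of_perm (hN.append_right U))
    · exact ⟨T, U, rfl, rfl, rfl⟩
  · rw [List.append_assoc, dyckLE_append_left_iff] at hle
    exact absurd hle (not_dyckLE_of_perm (N := []) .rfl)

end DyckOrder

/-- `RotatesAt ε A P R`: the word `R` is obtained from `P` by exchanging the down step which
follows the prefix `A` with the excursion after it. -/
def RotatesAt (ε : ℕ) (A P R : List Bool) : Prop :=
  ∃ C B, IsExcursion ε C ∧ P = A ++ false :: (C ++ B) ∧ R = A ++ (C ++ false :: B)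

/-- The rotations which generate the order associated with `ε`, at any valley. -/
def Rotation (ε : ℕ) (P R : List Bool) : Prop :=
  ∃ A, RotatesAt ε A P R

/-- The order generated by rotations: the Tamari order for `ε = 1`, the Dyck order for `ε = 0`. -/
def RotLE (ε : ℕ) : List Bool → List Bool → Prop :=
  Relation.ReflTransGen (Rotation ε)

section Rotation

variable {ε n : ℕ} {A A' B C P Q R : List Bool}

theorem IsExcursion.rotatesAt (hC : IsExcursion ε C) (A B : List Bool) :
    RotatesAt ε A (A ++ false :: (C ++ B)) (A ++ (C ++ false :: B)) :=
  ⟨C, B, hC, rfl, rfl⟩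

theorem RotatesAt.exists_eq_append (h : RotatesAt ε A P R) :
    ∃ X Y, P = A ++ false :: true :: X ∧ R = A ++ true :: Y := by
  obtain ⟨_, B, ⟨D, rfl, -⟩, rfl, rfl⟩ := h
  exact ⟨D ++ B, D ++ false :: B, rfl, rfl⟩

theorem RotatesAt.prefix_unique (h : RotatesAt ε A P R) (h' : RotatesAt ε A' P R) : A = A' := by
  obtain ⟨X, Y, rfl, rfl⟩ := h.exists_eq_append
  obtain ⟨X', Y', hP, hR⟩ := h'.exists_eq_append
  exact eq_of_first_difference hP hR

theorem RotatesAt.right_unique (h : RotatesAt ε A P Q) (h' : RotatesAt ε A P R) : Q = R := by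
  obtain ⟨C, B, hC, rfl, rfl⟩ := h
  obtain ⟨C', B', hC', hP, rfl⟩ := h'
  obtain ⟨rfl, rfl⟩ := hC.append_inj hC' (by simpa using hP)
  rfl

theorem RotatesAt.rotation (h : RotatesAt ε A P R) : Rotation ε P R := ⟨A, h⟩

theorem Rotation.rotLE (h : Rotation ε P R) : RotLE ε P R := .single h

theorem RotLE.trans (h : RotLE ε P Q) (h' : RotLE ε Q R) : RotLE ε P R :=
  Relation.ReflTransGen.trans h h'

theorem Rotation.ne (h : Rotation ε P R) : P ≠ R := by
  obtain ⟨A, h⟩ := h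
  obtain ⟨X, Y, rfl, rfl⟩ := h.exists_eq_append
  simp

theorem Rotation.dyckLE (h : Rotation ε P R) : dyckLE P R := by
  obtain ⟨A, C, B, -, rfl, rfl⟩ := h
  exact dyckLE_move_down A C B

theorem RotLE.dyckLE (h : RotLE ε P Q) : dyckLE P Q := by
  induction h with
  | refl => exact dyckLE_refl _
  | tail _ h ih => exact ih.trans h.dyckLE

theorem RotLE.antisymm (h : RotLE ε P Q) (h' : RotLE ε Q P) : P = Q :=
  h.dyckLE.antisymm h'.dyckLE

theorem Rotation.perm (h : Rotation ε P R) : P.Perm R := by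
  obtain ⟨A, C, B, -, rfl, rfl⟩ := h
  exact List.Perm.append_left A List.perm_middle.symm

theorem isDyckWord_iff_prefHeight {w : List Bool} :
    IsDyckWord n w ↔ w.count true = n ∧ w.count false = n ∧ ∀ j, 0 ≤ prefHeight w j := by
  refine and_congr_right fun _ => and_congr_right fun _ => ⟨fun h j => ?_, fun h p hp => ?_⟩
  · rw [prefHeight, sub_nonneg, Nat.cast_le]
    exact h _ (List.take_prefix j w)
  · rw [List.prefix_iff_eq_take.1 hp]
    simpa only [prefHeight, sub_nonneg, Nat.cast_le] using h p.length

theorem Rotation.mem_dyckSet (h : Rotation ε P R) (hP : P ∈ DyckSet n) : R ∈ DyckSet n := by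
  obtain ⟨htrue, hfalse, hpos⟩ := isDyckWord_iff_prefHeight.1 hP
  exact isDyckWord_iff_prefHeight.2 ⟨h.perm.count_eq _ ▸ htrue, h.perm.count_eq _ ▸ hfalse,
    fun j => (hpos j).trans (h.dyckLE j)⟩

end Rotation

/-- The number of up steps in the shortest prefix of a word which descends by `h`, or in the
whole word if there is no such prefix. -/
def upsBeforeDescent (ε : ℕ) : ℕ → List Bool → ℕ
  | 0, _ => 0
  | _ + 1, [] => 0
  | h + 1, true :: w => upsBeforeDescent ε (h + 1 + ε) w + 1
  | h + 1, false :: w => upsBeforeDescent ε h w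

/-- The number of up steps which follow the up step of index `i` before the word descends by `h`.
For `ε = h = 1` this is the classical bracket vector of the Tamari lattice; here it is monotone
for every `h ≤ ε`. -/
def bracketVector (ε h : ℕ) : List Bool → ℕ → ℕ
  | [], _ => 0
  | true :: w, 0 => upsBeforeDescent ε h w
  | true :: w, i + 1 => bracketVector ε h w i
  | false :: w, i => bracketVector ε h w i

section BracketVector

variable {ε h k : ℕ} {A B B' C D M P Q R V V' W W' X Z : List Bool}

@[simp] theorem upsBeforeDescent_zero (w : List Bool) : upsBeforeDescent ε 0 w = 0 := by
  rw [upsBeforeDescent]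

theorem IsDescent.upsBeforeDescent_append (hD : IsDescent ε h D) :
    upsBeforeDescent ε (h + k) (D ++ W) = D.count true + upsBeforeDescent ε k W := by
  induction hD with
  | nil => simp
  | @up h D _ ih =>
    rw [List.cons_append, Nat.add_right_comm, upsBeforeDescent, Nat.add_right_comm h k,
      Nat.add_right_comm (h + 1), ih, List.count_cons_self]
    ring
  | @down h D _ ih =>
    rw [List.cons_append, Nat.add_right_comm, upsBeforeDescent, ih]
    simp

theorem IsDescent.upsBeforeDescent_append_of_le (hD : IsDescent ε k D) (hle : h ≤ k)
    (W W' : List Bool) : upsBeforeDescent ε h (D ++ W) = upsBeforeDescent ε h (D ++ W') := by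
  obtain ⟨j, rfl⟩ := Nat.exists_eq_add_of_le hle
  obtain ⟨D₁, D₂, rfl, hD₁, -⟩ := hD.exists_append
  have hups (W : List Bool) : upsBeforeDescent ε h (D₁ ++ D₂ ++ W) = D₁.count true := by
    rw [List.append_assoc]
    simpa using hD₁.upsBeforeDescent_append (k := 0) (W := D₂ ++ W)
  rw [hups, hups]

theorem IsExcursion.upsBeforeDescent_append (hC : IsExcursion ε C) :
    upsBeforeDescent ε (h + 1) (C ++ W) = C.count true + upsBeforeDescent ε (h + 1) W := by
  obtain ⟨D, rfl, hD⟩ := hC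
  rw [List.cons_append, upsBeforeDescent, Nat.add_comm (h + 1), hD.upsBeforeDescent_append,
    List.count_cons_self]
  ring

theorem IsExcursion.upsBeforeDescent_insert (hC : IsExcursion ε C)
    (hX : IsDescent ε h (X ++ [false])) :
    upsBeforeDescent ε h (X ++ (C ++ W)) = C.count true + upsBeforeDescent ε h (X ++ W) := by
  induction X generalizing h with
  | nil =>
    cases hX with
    | down => exact hC.upsBeforeDescent_append
  | cons a X ih =>
    cases hX with
    | up hX =>
      rw [List.cons_append, List.cons_append, upsBeforeDescent, upsBeforeDescent, ih hX,
        Nat.add_assoc]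
    | down hX => simp only [List.cons_append, upsBeforeDescent, ih hX]

theorem IsExcursion.upsBeforeDescent_move_down_le (hC : IsExcursion ε C) (A B : List Bool) :
    upsBeforeDescent ε h (A ++ false :: (C ++ B)) ≤
      upsBeforeDescent ε h (A ++ (C ++ false :: B)) := by
  induction A generalizing h with
  | nil =>
    match h with
    | 0 => simp
    | 1 => simp [upsBeforeDescent]
    | h + 2 =>
      simp only [List.nil_append, upsBeforeDescent]
      rw [hC.upsBeforeDescent_append, hC.upsBeforeDescent_append, upsBeforeDescent]
  | cons a A ih =>
    match h, a with
    | 0, _ => simp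
    | h + 1, true => exact Nat.succ_le_succ ih
    | h + 1, false => exact ih

theorem bracketVector_append_cons_true (V W : List Bool) :
    bracketVector ε h (V ++ true :: W) (V.count true) = upsBeforeDescent ε h W := by
  induction V with
  | nil => rfl
  | cons a V ih => cases a <;> simp [bracketVector, ih]

theorem IsDescent.bracketVector_insert_false (hD : IsDescent ε k D) (hle : h ≤ ε) (B : List Bool) :
    bracketVector ε h (D ++ false :: B) = bracketVector ε h (D ++ B) := by
  induction hD with
  | nil => rfl
  | up hD ih =>
    funext i
    cases i with
    | zero => exact hD.upsBeforeDescent_append_of_le (by lia) _ _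
    | succ i => exact congrFun ih i
  | down _ ih => exact ih

theorem Rotation.bracketVector_le (hR : Rotation ε P R) (hle : h ≤ ε) :
    bracketVector ε h P ≤ bracketVector ε h R := by
  obtain ⟨A, C, B, hC, rfl, rfl⟩ := hR
  induction A with
  | nil =>
    obtain ⟨D, rfl, hD⟩ := hC
    intro i
    cases i with
    | zero => exact (hD.upsBeforeDescent_append_of_le hle _ _).le
    | succ i => exact (congrFun (hD.bracketVector_insert_false hle B) i).ge
  | cons a A ih =>
    cases a with
    | false => exact ih
    | true =>
      intro i
      cases i with
      | zero => exact hC.upsBeforeDescent_move_down_le A B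
      | succ i => exact ih i

theorem RotLE.bracketVector_le (hQ : RotLE ε P Q) (hle : h ≤ ε) :
    bracketVector ε h P ≤ bracketVector ε h Q := by
  induction hQ with
  | refl => exact le_rfl
  | tail _ hR ih => exact ih.trans (hR.bracketVector_le hle)

theorem RotLE.upsBeforeDescent_le (hQ : RotLE ε (V ++ true :: W) (V' ++ true :: W'))
    (hcount : V.count true = V'.count true) (hle : h ≤ ε) :
    upsBeforeDescent ε h W ≤ upsBeforeDescent ε h W' := by
  rw [← bracketVector_append_cons_true V, ← bracketVector_append_cons_true V', hcount]
  exact hQ.bracketVector_le hle _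

theorem IsBalanced.not_rotLE (hM : IsBalanced ε (X ++ false :: Z)) (hC : IsExcursion ε C) :
    ¬ RotLE ε (A ++ (List.replicate k false ++ (X ++ (C ++ false :: B))))
      (A ++ (X ++ false :: B')) := by
  -- The entry of the up step matching the displayed down step decreases.
  intro hle
  obtain ⟨X₁, X₂, h, rfl, hε, hX₂⟩ := hM.exists_matching
  have hups : upsBeforeDescent ε h (X₂ ++ (C ++ false :: B)) ≤
      upsBeforeDescent ε h (X₂ ++ false :: B') :=
    RotLE.upsBeforeDescent_le (V := A ++ (List.replicate k false ++ X₁)) (V' := A ++ X₁)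
      (by simpa using hle) (by simp [List.count_replicate]) hε
  have hcount (W : List Bool) : upsBeforeDescent ε h (X₂ ++ false :: W) = X₂.count true := by
    simpa using hX₂.upsBeforeDescent_append (k := 0) (W := W)
  obtain ⟨D, rfl, -⟩ := id hC
  rw [hC.upsBeforeDescent_insert hX₂, hcount, hcount] at hups
  simp at hups

theorem RotatesAt.eq_of_rotLE (hM : IsBalanced ε M)
    (hR : RotatesAt ε P (A ++ (List.replicate k false ++ (M ++ B))) R)
    (hle : RotLE ε R (A ++ (M ++ (List.replicate k false ++ B)))) :
    ∃ j, k = j + 1 ∧ P = A ++ List.replicate j false := by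
  obtain ⟨C, B', hC, hP, rfl⟩ := hR
  obtain ⟨D, rfl, -⟩ := id hC
  obtain ⟨N₁, N₂, hN, rfl, hNB⟩ := exists_eq_append_cons_of_dyckLE
    (N := List.replicate k false ++ M) (N' := M ++ List.replicate k false) (B := B)
    List.perm_append_comm (by simpa using hP) (by simpa using hle.dyckLE)
  rcases append_eq_append_cons_iff.1 hN with ⟨X, rfl, rfl⟩ | ⟨T, hT, rfl⟩
  · refine absurd ?_ (hM.not_rotLE (A := A) (k := k) (B := B')
      (B' := N₂ ++ (List.replicate k false ++ B)) hC)
    simpa using hle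
  · obtain ⟨hlen, hN₁, hT⟩ := List.append_eq_replicate_iff.1 hT.symm
    cases T with
    | nil => exact ⟨N₁.length, by simpa using hlen.symm, by rw [← hN₁]⟩
    | cons a T =>
      obtain rfl : a = false := (List.eq_replicate_iff.1 hT).2 a (by simp)
      simp at hNB

end BracketVector

/-- `UniquePath r k P Q`: on the way from `P` to `Q` every `r`-step is forced, and there are `k` of
them. For a relation without cycles this says that exactly one path leads from `P` to `Q`, and that
its length is `k`. -/
inductive UniquePath {α : Type*} (r : α → α → Prop) : ℕ → α → α → Prop
  | refl (P : α) : UniquePath r 0 P P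
  | step {k : ℕ} {P R Q : α} : r P R →
      (∀ R', r P R' → Relation.ReflTransGen r R' Q → R' = R) →
      UniquePath r k R Q → UniquePath r (k + 1) P Q

section UniquePath

open Relation

variable {α : Type*} {r : α → α → Prop} {k : ℕ} {P Q R R' : α}

theorem uniquePath_zero_iff : UniquePath r 0 P Q ↔ P = Q :=
  ⟨fun | .refl _ => rfl, fun h => h ▸ .refl P⟩

theorem UniquePath.reflTransGen (h : UniquePath r k P Q) : ReflTransGen r P Q := by
  induction h with
  | refl P => exact .refl
  | step h _ _ ih => exact .head h ih

theorem eq_or_reflTransGen_of_unique {P₁ : α}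
    (huniq : ∀ R, r P R → ReflTransGen r R Q → R = P₁) (hPR : ReflTransGen r P R)
    (hRQ : ReflTransGen r R Q) : R = P ∨ ReflTransGen r P₁ R := by
  rcases hPR.cases_head with rfl | ⟨R₁, h, h'⟩
  · exact .inl rfl
  · exact .inr (huniq R₁ h (h'.trans hRQ) ▸ h')

theorem UniquePath.total (h : UniquePath r k P Q)
    (hanti : ∀ {P Q}, ReflTransGen r P Q → ReflTransGen r Q P → P = Q)
    (hPR : ReflTransGen r P R) (hRQ : ReflTransGen r R Q) (hPR' : ReflTransGen r P R')
    (hRQ' : ReflTransGen r R' Q) : ReflTransGen r R R' ∨ ReflTransGen r R' R := by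
  induction h with
  | refl P =>
    rw [hanti hRQ hPR, hanti hRQ' hPR']
    exact .inl .refl
  | step _ huniq _ ih =>
    rcases eq_or_reflTransGen_of_unique huniq hPR hRQ with rfl | h1
    · exact .inl hPR'
    rcases eq_or_reflTransGen_of_unique huniq hPR' hRQ' with rfl | h2
    · exact .inr hPR
    exact ih h1 hRQ h2 hRQ'

end UniquePath

section Interval

open Relation

variable {S : Set (List Bool)} {le le' r : List Bool → List Bool → Prop}
  {k m : ℕ} {P Q R R' : List Bool}

theorem HasChainIn.tail (h : HasChainIn S le P Q (m + 1)) :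
    ∃ R, ltOf le P R ∧ HasChainIn S le R Q m := by
  obtain ⟨c, rfl, rfl, hS, hc⟩ := h
  exact ⟨c 1, hc 0 (by lia), fun i => c (i + 1), rfl, rfl, fun i hi => hS _ (by lia),
    fun i hi => hc _ (by lia)⟩

theorem HasChainIn.cons (hP : P ∈ S) (hPR : ltOf le P R) (h : HasChainIn S le R Q m) :
    HasChainIn S le P Q (m + 1) := by
  obtain ⟨c, rfl, rfl, hS, hc⟩ := h
  refine ⟨fun i => Nat.casesOn i P c, rfl, rfl, ?_, ?_⟩
  · rintro (_ | i) hi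
    · exact hP
    · exact hS i (by lia)
  · rintro (_ | i) hi
    · exact hPR
    · exact hc i (by lia)

theorem HasChainIn.reflTransGen (h : HasChainIn S (ReflTransGen r) P Q m) :
    ReflTransGen r P Q := by
  induction m generalizing P with
  | zero =>
    obtain ⟨c, rfl, rfl, -⟩ := h
    exact .refl
  | succ m ih =>
    obtain ⟨R, hPR, hRQ⟩ := h.tail
    exact hPR.1.trans (ih hRQ)

theorem IntervalHeight.unique (h : IntervalHeight S le P Q k) (h' : IntervalHeight S le P Q m) :
    k = m :=
  (h'.2 k h.1).antisymm (h.2 m h'.1)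

theorem UniquePath.chain_le (h : UniquePath r k P Q) (hPR : ReflTransGen r P R)
    (hR : HasChainIn S (ReflTransGen r) R Q m) : m ≤ k := by
  induction h generalizing R m with
  | refl P =>
    cases m with
    | zero => exact le_rfl
    | succ m =>
      obtain ⟨R', hlt, hR'⟩ := hR.tail
      exact absurd (hR'.reflTransGen.trans hPR) hlt.2
  | step _ huniq _ ih =>
    cases m with
    | zero => exact Nat.zero_le _
    | succ m =>
      obtain ⟨R', hlt, hR'⟩ := hR.tail
      rcases eq_or_reflTransGen_of_unique huniq (hPR.trans hlt.1) hR'.reflTransGen with rfl | hle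
      · exact absurd hPR hlt.2
      · exact Nat.succ_le_succ (ih hle hR')

theorem UniquePath.hasChainIn (hS : ∀ {P R}, r P R → P ∈ S → R ∈ S)
    (hlt : ∀ {P R}, r P R → ¬ ReflTransGen r R P) (h : UniquePath r k P Q) (hP : P ∈ S) :
    HasChainIn S (ReflTransGen r) P Q k := by
  induction h with
  | refl P => exact ⟨fun _ => P, rfl, rfl, fun _ _ => hP, fun i hi => absurd hi i.not_lt_zero⟩
  | step h _ _ ih => exact (ih (hS h hP)).cons hP ⟨.single h, hlt h⟩

theorem exists_uniquePath_of_linearInterval (hS : ∀ {P R}, r P R → P ∈ S → R ∈ S)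
    (hcov : ∀ {P R R'}, r P R → r P R' → ReflTransGen r R R' → R = R')
    (h : LinearInterval S (ReflTransGen r) P Q) : ∃ k, UniquePath r k P Q := by
  obtain ⟨hP, -, hle, htotal⟩ := h
  induction hle using ReflTransGen.head_induction_on with
  | refl => exact ⟨0, .refl Q⟩
  | @head P R hPR hRQ ih =>
    obtain ⟨k, hk⟩ := ih (hS hPR hP) fun T T' hT hT' hRT hTQ hRT' hTQ' =>
      htotal T T' hT hT' (.head hPR hRT) hTQ (.head hPR hRT') hTQ'
    refine ⟨k + 1, .step hPR (fun R' hPR' hRQ' => ?_) hk⟩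
    rcases htotal R R' (hS hPR hP) (hS hPR' hP) (.single hPR) hRQ (.single hPR') hRQ' with hle | hle
    · exact (hcov hPR hPR' hle).symm
    · exact hcov hPR' hPR hle

theorem linearInterval_and_intervalHeight_iff
    (hanti : ∀ {P Q}, ReflTransGen r P Q → ReflTransGen r Q P → P = Q)
    (hcov : ∀ {P R R'}, r P R → r P R' → ReflTransGen r R R' → R = R')
    (hne : ∀ {P R}, r P R → P ≠ R) (hS : ∀ {P R}, r P R → P ∈ S → R ∈ S) :
    LinearInterval S (ReflTransGen r) P Q ∧ IntervalHeight S (ReflTransGen r) P Q k ↔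
      P ∈ S ∧ UniquePath r k P Q := by
  have hmem (hle : ReflTransGen r P Q) (hP : P ∈ S) : Q ∈ S := by
    induction hle with
    | refl => exact hP
    | tail _ h ih => exact hS h ih
  have hheight {m : ℕ} (hP : P ∈ S) (hm : UniquePath r m P Q) :
      IntervalHeight S (ReflTransGen r) P Q m :=
    ⟨hm.hasChainIn hS (fun h h' => hne h (hanti (.single h) h')) hP, fun _ => hm.chain_le .refl⟩
  constructor
  · rintro ⟨hlin, hk⟩
    obtain ⟨m, hm⟩ := exists_uniquePath_of_linearInterval hS hcov hlin
    rw [hk.unique (hheight hlin.1 hm)]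
    exact ⟨hlin.1, hm⟩
  · rintro ⟨hP, hk⟩
    exact ⟨⟨hP, hmem hk.reflTransGen hP, hk.reflTransGen,
      fun _ _ _ _ => hk.total hanti⟩, hheight hP hk⟩

theorem linearInterval_congr (h : ∀ P ∈ S, ∀ Q ∈ S, (le P Q ↔ le' P Q)) :
    LinearInterval S le P Q ↔ LinearInterval S le' P Q := by
  refine and_congr_right fun hP => and_congr_right fun hQ => and_congr (h P hP Q hQ) ?_
  refine forall₄_congr fun R R' hR hR' => ?_
  rw [h P hP R hR, h R hR Q hQ, h P hP R' hR', h R' hR' Q hQ, h R hR R' hR', h R' hR' R hR]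

theorem hasChainIn_congr (h : ∀ P ∈ S, ∀ Q ∈ S, (le P Q ↔ le' P Q)) :
    HasChainIn S le P Q k ↔ HasChainIn S le' P Q k := by
  refine exists_congr fun c => and_congr_right fun _ => and_congr_right fun _ =>
    and_congr_right fun hS => forall₂_congr fun i hi => ?_
  have hi' := hS i hi.le
  have hi'' := hS (i + 1) hi
  rw [ltOf, ltOf, h _ hi' _ hi'', h _ hi'' _ hi']

theorem intervalHeight_congr (h : ∀ P ∈ S, ∀ Q ∈ S, (le P Q ↔ le' P Q)) :
    IntervalHeight S le P Q k ↔ IntervalHeight S le' P Q k := by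
  simp only [IntervalHeight, hasChainIn_congr h]

end Interval

/-- The pairs `A d^k C B`, `A C d^k B` with `C` an excursion: the bounds of the left intervals of
height `k`. -/
def IsLeftPair (ε k : ℕ) (P Q : List Bool) : Prop :=
  ∃ A C B, IsExcursion ε C ∧ P = A ++ (List.replicate k false ++ (C ++ B)) ∧
    Q = A ++ (C ++ (List.replicate k false ++ B))

/-- The pairs `A d C₁ ⋯ C_k B`, `A C₁ ⋯ C_k d B` with each `C_i` an excursion: the bounds of the
right intervals of height `k`. -/
def IsRightPair (ε k : ℕ) (P Q : List Bool) : Prop :=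
  ∃ (A : List Bool) (Cs : List (List Bool)) (B : List Bool), Cs.length = k ∧
    (∀ C ∈ Cs, IsExcursion ε C) ∧ P = A ++ false :: (Cs.flatten ++ B) ∧
      Q = A ++ (Cs.flatten ++ false :: B)

section Classification

variable {ε k h : ℕ} {A A' B B' C C' P Q R T V W : List Bool}

theorem IsLeftPair.uniquePath (hPQ : IsLeftPair ε k P Q) : UniquePath (Rotation ε) k P Q := by
  obtain ⟨A, C, B, hC, rfl, rfl⟩ := hPQ
  induction k generalizing B with
  | zero => exact .refl _
  | succ k ih =>
    have hfirst : RotatesAt ε (A ++ List.replicate k false)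
        (A ++ (List.replicate (k + 1) false ++ (C ++ B)))
        (A ++ (List.replicate k false ++ (C ++ false :: B))) := by
      simpa [List.replicate_succ'] using hC.rotatesAt (A ++ List.replicate k false) B
    refine .step hfirst.rotation (fun R' ⟨A₁, hR'⟩ hle => ?_) ?_
    · obtain ⟨j, hj, rfl⟩ := hR'.eq_of_rotLE hC.isBalanced hle
      obtain rfl := Nat.succ.inj hj
      exact hR'.right_unique hfirst
    · simpa [List.replicate_succ'] using ih (false :: B)

theorem IsLeftPair.rotLE (hPQ : IsLeftPair ε k P Q) : RotLE ε P Q :=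
  hPQ.uniquePath.reflTransGen

theorem IsRightPair.uniquePath (hPQ : IsRightPair ε k P Q) : UniquePath (Rotation ε) k P Q := by
  obtain ⟨A, Cs, B, rfl, hCs, rfl, rfl⟩ := hPQ
  induction Cs generalizing A with
  | nil => exact .refl _
  | cons C Cs ih =>
    have hM := isBalanced_flatten hCs
    rw [List.forall_mem_cons] at hCs
    have hfirst := hCs.1.rotatesAt A (Cs.flatten ++ B)
    refine .step (R := A ++ (C ++ false :: (Cs.flatten ++ B))) (by simpa using hfirst.rotation)
      (fun R' ⟨A₁, hR'⟩ hle => ?_) (by simpa using ih (A ++ C) hCs.2)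
    obtain ⟨j, hj, rfl⟩ := hR'.eq_of_rotLE (k := 1) hM hle
    obtain rfl := Nat.succ.inj hj
    exact hR'.right_unique (by simpa using hfirst)

theorem IsRightPair.rotLE (hPQ : IsRightPair ε k P Q) : RotLE ε P Q :=
  hPQ.uniquePath.reflTransGen

theorem IsExcursion.ne_nil (hC : IsExcursion ε C) : C ≠ [] := by
  obtain ⟨D, rfl, -⟩ := hC
  exact List.cons_ne_nil _ _

theorem IsExcursion.isDescent_move_down (hC : IsExcursion ε C)
    (hCV : IsDescent ε h (false :: (C ++ V))) : IsDescent ε h (C ++ false :: V) := by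
  cases hCV with
  | @down h _ hV =>
    cases h with
    | zero => simp [hC.ne_nil] at hV
    | succ h => exact hC.isDescent_append_iff.2 (.down (hC.isDescent_append_iff.1 hV))

theorem IsExcursion.isDescent_move_up (hC : IsExcursion ε C) (hV : V ≠ [])
    (hCV : IsDescent ε h (C ++ false :: V)) : IsDescent ε h (false :: (C ++ V)) := by
  cases h with
  | zero => simp at hCV
  | succ h =>
    rw [hC.isDescent_append_iff, isDescent_succ_cons_false_iff] at hCV
    cases h with
    | zero => exact absurd (isDescent_zero_iff.1 hCV) hV
    | succ h => exact .down (hC.isDescent_append_iff.2 hCV)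

theorem IsExcursion.exists_suffix (hC : IsExcursion ε (T ++ V)) (hT : T ≠ []) :
    ∃ m, IsDescent ε m V ∧ ∀ W, IsDescent ε m W → IsExcursion ε (T ++ W) := by
  obtain ⟨D, hD, hDε⟩ := hC
  obtain ⟨a, T, rfl⟩ := List.exists_cons_of_ne_nil hT
  obtain ⟨rfl, rfl⟩ := List.cons.inj hD
  obtain ⟨m, hV, hW⟩ := hDε.exists_suffix
  exact ⟨m, hV, fun W hWm => ⟨T ++ W, rfl, hW W hWm⟩⟩

theorem IsDescent.le_of_append (hV : IsDescent ε h V) (hVW : IsDescent ε k (V ++ W)) : h ≤ k := by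
  by_contra! hlt
  obtain ⟨j, rfl⟩ := Nat.exists_eq_add_of_lt hlt
  obtain ⟨V₁, V₂, rfl, hV₁, hV₂⟩ := IsDescent.exists_append (h := k) (k := j + 1) hV
  obtain ⟨-, h_nil⟩ := hVW.append_inj (B := []) (B' := V₂ ++ W) hV₁ (by simp)
  obtain ⟨rfl, -⟩ := List.append_eq_nil_iff.1 h_nil.symm
  simp at hV₂

theorem IsDescent.not_isExcursion_append (hV : IsDescent ε h V) (hne : V ≠ []) :
    ¬ IsExcursion ε (V ++ W) := by
  rintro ⟨D, hD, hDε⟩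
  cases hV with
  | nil => exact hne rfl
  | down => simp at hD
  | up hV =>
    obtain rfl := List.cons.inj hD |>.2
    have := hV.le_of_append hDε
    lia

theorem IsExcursion.ne_false_cons (hC : IsExcursion ε C) : C ≠ false :: V := by
  obtain ⟨D, rfl, -⟩ := hC
  simp

theorem IsExcursion.exists_rotatesAt_of_later (hC : IsExcursion ε C) (hC' : IsExcursion ε C')
    (heq : C ++ false :: B = T ++ false :: (C' ++ B')) (hT : T ≠ C) (A : List Bool) :
    ∃ A₁ R, A₁ ≠ A ∧ RotatesAt ε A₁ (A ++ false :: (C ++ B)) R ∧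
      RotLE ε R (A ++ (T ++ (C' ++ false :: B'))) := by
  rcases append_eq_append_cons_iff.1 heq with ⟨U, rfl, hU⟩ | ⟨U, rfl, hU⟩
  · obtain ⟨a, U, rfl⟩ := List.exists_cons_of_ne_nil (l := U) (by simpa using hT)
    obtain ⟨rfl, rfl⟩ := List.cons.inj hU
    refine ⟨A ++ false :: (C ++ U), A ++ false :: (C ++ (U ++ (C' ++ false :: B'))), by simp,
      by simpa using hC'.rotatesAt (A ++ false :: (C ++ U)) B', Rotation.rotLE ?_⟩
    simpa using (hC.rotatesAt A (U ++ (C' ++ false :: B'))).rotation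
  · have hT₀ : T ≠ [] := by
      rintro rfl
      exact hC.ne_false_cons rfl
    obtain ⟨m, hU', hsuffix⟩ := hC.exists_suffix hT₀
    obtain ⟨V, rfl, rfl⟩ : ∃ V, U = C' ++ V ∧ B' = V ++ false :: B := by
      rcases append_eq_append_cons_iff.1 hU with hV | ⟨V, rfl, -⟩
      · exact hV
      · have hU₀ : U ≠ [] := by
          rintro rfl
          exact hC'.ne_false_cons rfl
        cases hU' with
        | down hU' => exact absurd hC' (hU'.not_isExcursion_append hU₀)
    have hmoved := hsuffix _ (hC'.isDescent_move_down hU')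
    exact ⟨A ++ false :: T, A ++ false :: (T ++ (C' ++ false :: (V ++ B))), by simp,
      by simpa using hC'.rotatesAt (A ++ false :: T) (V ++ B),
      Rotation.rotLE (by simpa using (hmoved.rotatesAt A B).rotation)⟩

theorem IsExcursion.exists_rotatesAt_of_earlier (hC : IsExcursion ε C) (hC' : IsExcursion ε C')
    (heq : C' ++ B' = T ++ (C ++ false :: B)) (hT : T ≠ []) (A : List Bool) :
    ∃ R, RotatesAt ε A (A ++ false :: (T ++ false :: (C ++ B))) R ∧
      RotLE ε R (A ++ (C' ++ false :: B')) := by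
  obtain ⟨D, rfl, hD⟩ := id hC
  rcases append_eq_append_cons_iff.1 heq with ⟨S, rfl, rfl⟩ | ⟨S, rfl, hS⟩
  · refine ⟨_, by simpa using hC'.rotatesAt A (S ++ false :: (true :: D ++ B)), Rotation.rotLE ?_⟩
    simpa using (hC.rotatesAt (A ++ (C' ++ false :: S)) B).rotation
  · obtain ⟨m, hS', hsuffix⟩ := hC'.exists_suffix hT
    obtain ⟨V, rfl, rfl⟩ : ∃ V, S = D ++ false :: V ∧ B = V ++ B' := by
      rcases append_eq_append_cons_iff.1 hS.symm with ⟨V, rfl, -⟩ | hV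
      · exact absurd hC (hS'.not_isExcursion_append (List.cons_ne_nil _ _))
      · exact hV
    by_cases hV : V = []
    · subst hV
      have hTd : IsExcursion ε (T ++ [false]) := hsuffix _ (by
        cases m with
        | zero => simp at hS'
        | succ m => exact hC.isDescent_append_iff.1 hS')
      refine ⟨_, by simpa using hTd.rotatesAt A (true :: D ++ B'), ?_⟩
      have hleft : IsLeftPair ε 2 (A ++ (T ++ false :: false :: (true :: D ++ B')))
          (A ++ (T ++ (true :: D ++ false :: false :: B'))) :=
        ⟨A ++ T, true :: D, B', hC, by simp, by simp⟩
      simpa using hleft.rotLE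
    · have hmoved := hsuffix _ (hC.isDescent_move_up hV hS')
      refine ⟨_, by simpa using hmoved.rotatesAt A B', Rotation.rotLE ?_⟩
      simpa using (hC.rotatesAt (A ++ T) (V ++ false :: B')).rotation

theorem IsExcursion.exists_rotatesAt_of_consecutive (hC : IsExcursion ε C)
    (hC' : IsExcursion ε C') (heq : A ++ (C ++ false :: B) = A' ++ false :: (C' ++ B'))
    (hbefore : A ≠ A' ++ [false]) (hafter : A' ≠ A ++ C) :
    ∃ A₁ R, A₁ ≠ A ∧ RotatesAt ε A₁ (A ++ false :: (C ++ B)) R ∧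
      RotLE ε R (A' ++ (C' ++ false :: B')) := by
  rcases append_eq_append_cons_iff.1 heq with ⟨T, rfl, hT⟩ | ⟨T, rfl, hT⟩
  · simpa using hC.exists_rotatesAt_of_later hC' hT (by simpa using hafter) A
  · obtain ⟨R, hR, hle⟩ := hC.exists_rotatesAt_of_earlier hC' hT (by simpa using hbefore) A'
    exact ⟨A', R, by simp, by simpa using hR, hle⟩

theorem IsExcursion.exists_rotatesAt_of_suffix_down {F : List Bool}
    (hC : IsExcursion ε (F ++ [false])) (hC' : IsExcursion ε C') (A B : List Bool) :
    ∃ A₁ R, A₁ ≠ A ∧ RotatesAt ε A₁ (A ++ false :: (F ++ false :: (C' ++ B))) R ∧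
      RotLE ε R (A ++ (F ++ (C' ++ false :: false :: B))) := by
  have hF : F ≠ [] := by
    rintro rfl
    exact hC.ne_false_cons rfl
  obtain ⟨m, hm, hsuffix⟩ := hC.exists_suffix hF
  have hmoved : IsExcursion ε (F ++ (C' ++ [false])) := by
    refine hsuffix _ ?_
    cases hm with
    | down hm => exact hC'.isDescent_append_iff.2 (.down hm)
  exact ⟨A ++ false :: F, A ++ false :: (F ++ (C' ++ false :: B)), by simp,
    by simpa using hC'.rotatesAt (A ++ false :: F) B,
    Rotation.rotLE (by simpa using (hmoved.rotatesAt A B).rotation)⟩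

theorem RotatesAt.isLeftPair_or_isRightPair_of_isLeftPair (hPR : RotatesAt ε A P R)
    (huniq : ∀ A₁ R₁, RotatesAt ε A₁ P R₁ → RotLE ε R₁ Q → A₁ = A)
    (hRQ : IsLeftPair ε (k + 1) R Q) : IsLeftPair ε (k + 2) P Q ∨ IsRightPair ε (k + 2) P Q := by
  obtain ⟨C, B, hC, rfl, rfl⟩ := hPR
  obtain ⟨A', C', B', hC', heq, rfl⟩ := hRQ
  replace heq : A ++ (C ++ false :: B) =
      (A' ++ List.replicate k false) ++ false :: (C' ++ B') := by
    simpa [List.replicate_succ'] using heq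
  have hlast (j : ℕ) (B₁ : List Bool) :
      RotLE ε (A' ++ (List.replicate j false ++ (C' ++ B₁)))
        (A' ++ (C' ++ (List.replicate j false ++ B₁))) :=
    IsLeftPair.rotLE ⟨A', C', B₁, hC', rfl, rfl⟩
  by_cases hbefore : A = A' ++ List.replicate k false ++ [false]
  · subst hbefore
    obtain ⟨rfl, rfl⟩ := hC.append_inj hC' (by simpa using heq)
    exact .inl ⟨A', C, B, hC, by simp [List.replicate_succ'], by simp [List.replicate_succ']⟩
  by_cases hafter : A' ++ List.replicate k false = A ++ C
  · obtain rfl : B = C' ++ B' := by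
      rw [hafter] at heq
      simpa using heq
    cases k with
    | zero =>
      obtain rfl : A' = A ++ C := by simpa using hafter
      exact .inr ⟨A, [C, C'], B', rfl, by simp [hC, hC'], by simp, by simp⟩
    | succ k =>
      rw [List.replicate_succ', ← List.append_assoc] at hafter
      obtain ⟨F, rfl, hF⟩ : ∃ F, C = F ++ [false] ∧ A' ++ List.replicate k false = A ++ F := by
        rcases List.eq_nil_or_concat' C with rfl | ⟨F, a, rfl⟩
        · exact absurd rfl hC.ne_nil
        · rw [← List.append_assoc] at hafter
          obtain ⟨hF, ha⟩ := List.append_inj' hafter rfl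
          exact ⟨F, by rw [ha], hF⟩
      obtain ⟨A₁, R₁, hne, hR₁, hle⟩ := hC.exists_rotatesAt_of_suffix_down hC' A B'
      refine absurd (huniq A₁ R₁ (by simpa using hR₁) (hle.trans ?_)) hne
      rw [← List.append_assoc, ← hF]
      simpa [List.replicate_succ'] using hlast k (false :: false :: B')
  · obtain ⟨A₁, R₁, hne, hR₁, hle⟩ :=
      hC.exists_rotatesAt_of_consecutive hC' heq hbefore hafter
    refine absurd (huniq A₁ R₁ hR₁ (hle.trans ?_)) hne
    simpa [List.replicate_succ'] using hlast k (false :: B')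

theorem RotatesAt.isLeftPair_or_isRightPair_of_isRightPair (hPR : RotatesAt ε A P R)
    (huniq : ∀ A₁ R₁, RotatesAt ε A₁ P R₁ → RotLE ε R₁ Q → A₁ = A)
    (hRQ : IsRightPair ε (k + 1) R Q) : IsLeftPair ε (k + 2) P Q ∨ IsRightPair ε (k + 2) P Q := by
  obtain ⟨C, B, hC, rfl, rfl⟩ := hPR
  obtain ⟨A', Cs, B', hlength, hCs, heq, rfl⟩ := hRQ
  obtain ⟨C', Cs, rfl⟩ := List.exists_cons_of_length_eq_add_one hlength
  rw [List.forall_mem_cons] at hCs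
  replace heq : A ++ (C ++ false :: B) = A' ++ false :: (C' ++ (Cs.flatten ++ B')) := by
    simpa using heq
  by_cases hbefore : A = A' ++ [false]
  · subst hbefore
    obtain ⟨rfl, hB⟩ := hC.append_inj hCs.1 (by simpa using heq)
    cases Cs with
    | nil =>
      obtain rfl : k = 0 := by simpa using hlength.symm
      obtain rfl : B' = false :: B := by simpa using hB.symm
      exact .inl ⟨A', C, B, hC, by simp, by simp⟩
    | cons C₂ Cs =>
      obtain ⟨D, rfl, -⟩ := hCs.2 C₂ List.mem_cons_self
      simp at hB
  by_cases hafter : A' = A ++ C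
  · subst hafter
    obtain rfl : B = C' ++ (Cs.flatten ++ B') := by simpa using heq
    exact .inr ⟨A, C :: C' :: Cs, B', by simpa using hlength,
      by simpa [hC] using hCs, by simp, by simp⟩
  · obtain ⟨A₁, R₁, hne, hR₁, hle⟩ :=
      hC.exists_rotatesAt_of_consecutive hCs.1 heq hbefore hafter
    have hlast : IsRightPair ε Cs.length (A' ++ (C' ++ false :: (Cs.flatten ++ B')))
        (A' ++ (C' ++ (Cs.flatten ++ false :: B'))) :=
      ⟨A' ++ C', Cs, B', rfl, hCs.2, by simp, by simp⟩
    refine absurd (huniq A₁ R₁ hR₁ (hle.trans ?_)) hne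
    simpa using hlast.rotLE

theorem RotatesAt.isLeftPair (h : RotatesAt ε A P R) : IsLeftPair ε 1 P R := by
  obtain ⟨C, B, hC, rfl, rfl⟩ := h
  exact ⟨A, C, B, hC, rfl, rfl⟩

theorem isLeftPair_or_isRightPair_of_uniquePath (h : UniquePath (Rotation ε) (k + 1) P Q) :
    IsLeftPair ε (k + 1) P Q ∨ IsRightPair ε (k + 1) P Q := by
  induction k generalizing P with
  | zero =>
    obtain _ | ⟨⟨A, hPR⟩, -, hRQ⟩ := h
    cases hRQ
    exact .inl hPR.isLeftPair
  | succ k ih =>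
    obtain _ | ⟨⟨A, hPR⟩, huniq, hRQ⟩ := h
    have huniq' (A₁ R₁) (hR₁ : RotatesAt ε A₁ P R₁) (hle : RotLE ε R₁ Q) : A₁ = A := by
      obtain rfl := huniq R₁ hR₁.rotation hle
      exact hR₁.prefix_unique hPR
    rcases ih hRQ with hleft | hright
    · exact hPR.isLeftPair_or_isRightPair_of_isLeftPair huniq' hleft
    · exact hPR.isLeftPair_or_isRightPair_of_isRightPair huniq' hright

theorem uniquePath_rotation_succ_iff : UniquePath (Rotation ε) (k + 1) P Q ↔
    IsLeftPair ε (k + 1) P Q ∨ IsRightPair ε (k + 1) P Q :=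
  ⟨isLeftPair_or_isRightPair_of_uniquePath, Or.rec IsLeftPair.uniquePath IsRightPair.uniquePath⟩

theorem Rotation.eq_of_rotLE {R' : List Bool} (hR : Rotation ε P R) (hR' : Rotation ε P R')
    (hle : RotLE ε R R') : R = R' := by
  obtain ⟨A, hPR'⟩ := hR'
  obtain _ | ⟨h, huniq, hRR'⟩ := hPR'.isLeftPair.uniquePath
  cases hRR'
  exact huniq R hR hle

theorem linearInterval_and_intervalHeight_rotLE_iff {n : ℕ} :
    LinearInterval (DyckSet n) (RotLE ε) P Q ∧ IntervalHeight (DyckSet n) (RotLE ε) P Q k ↔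
      P ∈ DyckSet n ∧ UniquePath (Rotation ε) k P Q :=
  linearInterval_and_intervalHeight_iff RotLE.antisymm Rotation.eq_of_rotLE Rotation.ne
    Rotation.mem_dyckSet

end Classification

section DeltaRotation

variable {ε : ℕ} {B C V W P Q : List Bool}

theorem elev_length_add {m : ℕ} (hm : m ≤ W.length) :
    elev (fun _ => (ε : ℤ)) (V ++ W) V.length (V.length + m) = altitude ε (W.take m) := by
  induction m with
  | zero => simp [elev]
  | succ m ih =>
    have hstep : stepVal (fun _ => (ε : ℤ)) (V ++ W) (V.length + m) = altitude ε [W[m]] := by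
      have hget : (V ++ W)[V.length + m]? = some W[m] := by
        simp [List.getElem?_append_right, List.getElem?_eq_getElem hm]
      cases ha : W[m] <;> simp [stepVal, hget, ha]
    rw [elev, ← Nat.add_assoc, Finset.sum_Ico_succ_top (V.length.le_add_right m), ← elev,
      ih (Nat.le_of_succ_le hm), hstep, ← altitude_append, List.take_concat_get']

theorem isDeltaExcAt_append_iff :
    IsDeltaExcAt (fun _ => (ε : ℤ)) (V ++ (C ++ B)) V.length C ↔ IsExcursion ε C := by
  have helev {m : ℕ} (hm : m ≤ C.length) : elev (fun _ => (ε : ℤ)) (V ++ (C ++ B)) V.length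
      (V.length + m) = altitude ε (C.take m) := by
    rw [elev_length_add (by rw [List.length_append]; lia), List.take_append_of_le_length hm]
  constructor
  · rintro ⟨hhead, m, hm, hle, hC, hzero, hne⟩
    obtain rfl : m = C.length := by
      have hlength := congrArg List.length hC
      simp only [List.drop_left, List.length_append, List.length_take] at hle hlength
      lia
    obtain ⟨D, rfl⟩ : ∃ D, C = true :: D := by
      cases C with
      | nil => exact absurd hm (lt_irrefl 0)
      | cons a D => exact ⟨D, by simpa using hhead⟩
    rw [helev le_rfl, List.take_length, altitude_cons_true] at hzero
    refine ⟨D, rfl, isDescent_of_altitude_take_ne_zero (by lia) fun m hm => ?_⟩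
    have hlt : m + 1 < (true :: D).length := by simpa using hm
    have hne' := hne (m + 1) m.succ_pos hlt
    rwa [helev hlt.le, List.take_succ_cons, altitude_cons_true] at hne'
  · rintro ⟨D, rfl, hD⟩
    refine ⟨by simp, D.length + 1, by simp, by simp, by simp, ?_, fun m hm hlt => ?_⟩
    · rw [helev (by simp)]
      simp [hD.altitude_eq]
    · obtain ⟨m, rfl⟩ := Nat.exists_eq_add_one.2 hm
      rw [helev (by simpa using hlt.le), List.take_succ_cons, altitude_cons_true]
      exact (hD.altitude_take_pos (by simpa using hlt)).ne'

theorem deltaRot_iff_rotation : DeltaRot (fun _ => (ε : ℤ)) P Q ↔ Rotation ε P Q := by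
  refine exists_congr fun A => exists_congr fun C => exists_congr fun B => ?_
  have hexc : IsDeltaExcAt (fun _ => (ε : ℤ)) (A ++ false :: (C ++ B)) (A.length + 1) C ↔
      IsExcursion ε C := by
    simpa using isDeltaExcAt_append_iff (V := A ++ [false]) (C := C) (B := B)
  constructor
  · rintro ⟨rfl, hR, hC⟩
    exact ⟨hexc.1 hC, rfl, hR⟩
  · rintro ⟨hC, rfl, hR⟩
    exact ⟨rfl, hR, hexc.2 hC⟩

theorem tamLE_eq_rotLE_one : tamLE = RotLE 1 := by
  have hrel : DeltaRot (fun _ => 1) = Rotation 1 := by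
    ext P Q
    exact deltaRot_iff_rotation
  rw [tamLE, altLE, RotLE, hrel]

end DeltaRotation

section InclusionOrder

variable {n : ℕ} {P Q X : List Bool}

theorem neg_le_prefHeight (w : List Bool) (j : ℕ) : -(j : ℤ) ≤ prefHeight w j := by
  have := (List.count_le_length (a := false) (l := w.take j)).trans (List.length_take_le j w)
  rw [prefHeight]
  lia

theorem dyckLE_replicate_false_append (k : ℕ)
    (h : ∀ j, prefHeight X j - k ≤ prefHeight Q (k + j)) :
    dyckLE (List.replicate k false ++ X) Q := by
  intro i
  rcases le_total i k with hi | hi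
  · refine le_trans (le_of_eq ?_) (neg_le_prefHeight Q i)
    simp [prefHeight, List.take_append_of_le_length, hi, List.count_replicate]
  · obtain ⟨j, rfl⟩ := Nat.exists_eq_add_of_le hi
    have hj := prefHeight_length_add (List.replicate k false) X j
    rw [(isDescent_replicate_false 1 k).altitude_eq, List.length_replicate] at hj
    linarith [h j]

theorem RotLE.cons {ε : ℕ} (a : Bool) (h : RotLE ε P Q) : RotLE ε (a :: P) (a :: Q) := by
  refine Relation.ReflTransGen.lift (a :: ·) ?_ _ _ h
  rintro _ _ ⟨A, C, B, hC, rfl, rfl⟩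
  exact (hC.rotatesAt (a :: A) B).rotation

theorem rotLE_zero_of_dyckLE (hperm : P.Perm Q) (h : dyckLE P Q) : RotLE 0 P Q := by
  induction Q generalizing P with
  | nil =>
    obtain rfl := hperm.eq_nil
    exact .refl
  | cons b Q ih =>
    obtain ⟨a, P, rfl⟩ := List.exists_cons_of_length_eq_add_one hperm.length_eq
    by_cases hab : a = b
    · subst hab
      exact (ih hperm.cons_inv ((dyckLE_cons_iff a).1 h)).cons a
    obtain ⟨rfl, rfl⟩ : a = false ∧ b = true := by
      have hhead := h 1
      cases a <;> cases b <;> simp [prefHeight_eq] at hab hhead ⊢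
    obtain ⟨N, X, hX, hN⟩ := List.eq_append_cons_of_mem (hperm.mem_iff.2 List.mem_cons_self)
    obtain ⟨k, rfl⟩ : ∃ k, N = List.replicate k false :=
      ⟨N.length, List.eq_replicate_of_mem fun a ha => by cases a <;> simp_all⟩
    rw [hX] at hperm h ⊢
    have hfirst : IsLeftPair 0 k (List.replicate k false ++ true :: X)
        (true :: (List.replicate k false ++ X)) :=
      ⟨[], [true], X, ⟨[], rfl, .nil⟩, rfl, rfl⟩
    refine hfirst.rotLE.trans (RotLE.cons true
      (ih ?_ (dyckLE_replicate_false_append k fun j => ?_)))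
    · exact (List.perm_middle.symm.trans hperm).cons_inv
    · have hj := h (k + (j + 1))
      have hk := prefHeight_length_add (List.replicate k false) (true :: X) (j + 1)
      rw [(isDescent_replicate_false 1 k).altitude_eq, List.length_replicate,
        prefHeight_cons_succ] at hk
      rw [hk, ← Nat.add_assoc, prefHeight_cons_succ] at hj
      linarith

theorem dyckLE_iff_rotLE_zero (hP : P ∈ DyckSet n) (hQ : Q ∈ DyckSet n) :
    dyckLE P Q ↔ RotLE 0 P Q := by
  refine ⟨rotLE_zero_of_dyckLE (List.perm_iff_count.2 fun a => ?_), RotLE.dyckLE⟩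
  cases a
  · exact hP.2.1.trans hQ.2.1.symm
  · exact hP.1.trans hQ.1.symm

end InclusionOrder

section DyckWords

variable {n h k : ℕ} {A B V V' W X Y : List Bool}

theorem isDyckWord_iff_isBalanced : IsDyckWord n W ↔ W.count true = n ∧ IsBalanced 1 W := by
  rw [isDyckWord_iff_prefHeight]
  refine and_congr_right fun htrue => ⟨fun ⟨hfalse, hpos⟩ => ?_, fun hbal => ?_⟩
  · refine isDescent_of_altitude_take_ne_zero (by simp [altitude, htrue, hfalse]) fun m hm => ?_
    have hle : m ≤ W.length := by simpa [Nat.lt_succ_iff] using hm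
    have := hpos m
    rw [prefHeight_eq] at this
    rw [List.take_append_of_le_length hle]
    lia
  · have hfalse : W.count false = n := by
      have := hbal.altitude_eq
      rw [altitude_append, altitude_cons_false, altitude_nil, altitude, htrue] at this
      push_cast at this
      linarith
    refine ⟨hfalse, fun j => ?_⟩
    rcases lt_or_ge j W.length with hj | hj
    · have := hbal.altitude_take_pos (m := j) (by simpa using hj.le)
      rw [List.take_append_of_le_length hj.le] at this
      rw [prefHeight_eq]
      lia
    · rw [prefHeight_eq, List.take_of_length_le hj]
      simp [altitude, htrue, hfalse]

theorem altitude_one_nonpos_of_append_mem_dyckSet (h : V ++ W ∈ DyckSet n) :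
    altitude 1 W ≤ 0 := by
  obtain ⟨htrue, hfalse, hpos⟩ := isDyckWord_iff_prefHeight.1 h
  have hV := hpos V.length
  rw [prefHeight_eq, List.take_left] at hV
  have htotal : altitude 1 (V ++ W) = 0 := by simp [altitude, htrue, hfalse]
  rw [altitude_append] at htotal
  lia

theorem isDescent_append_congr {ε : ℕ} (h : ∀ m, IsDescent ε m V ↔ IsDescent ε m V') (k : ℕ) :
    IsDescent ε k (A ++ V) ↔ IsDescent ε k (A ++ V') := by
  induction A generalizing k with
  | nil => exact h k
  | cons a A ih =>
    cases k with
    | zero => simp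
    | succ k => cases a <;> simp [ih]

theorem append_mem_dyckSet_congr (hperm : X.Perm Y)
    (h : ∀ m W, IsDescent 1 (m + 1) (X ++ W) ↔ IsDescent 1 (m + 1) (Y ++ W)) :
    A ++ (X ++ B) ∈ DyckSet n ↔ A ++ (Y ++ B) ∈ DyckSet n := by
  have hperm' : (A ++ (X ++ B)).Perm (A ++ (Y ++ B)) := (hperm.append_right B).append_left A
  refine isDyckWord_iff_isBalanced.trans (Iff.trans ?_ isDyckWord_iff_isBalanced.symm)
  rw [hperm'.count_eq, IsBalanced, IsBalanced]
  refine and_congr_right fun _ => ?_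
  simp only [List.append_assoc]
  refine isDescent_append_congr (fun m => ?_) 1
  cases m with
  | zero => simp
  | succ m => exact h m (B ++ [false])

end DyckWords

section DescentSequences

variable {ε h k n : ℕ} {V W : List Bool} {Ds Ds' : List (List Bool)}

theorem flatten_append_inj {α : Type*} {p : List α → Prop} {vs vs' : List (List α)} {B B' : List α}
    (hp : ∀ {v v' B B'}, p v → p v' → v ++ B = v' ++ B' → v = v' ∧ B = B')
    (hvs : ∀ v ∈ vs, p v) (hvs' : ∀ v ∈ vs', p v) (hlength : vs.length = vs'.length)
    (heq : vs.flatten ++ B = vs'.flatten ++ B') : vs = vs' ∧ B = B' := by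
  induction vs generalizing vs' with
  | nil =>
    obtain rfl := List.length_eq_zero_iff.1 hlength.symm
    exact ⟨rfl, heq⟩
  | cons v vs ih =>
    obtain ⟨v', vs', rfl⟩ := List.exists_cons_of_length_eq_add_one hlength.symm
    rw [List.forall_mem_cons] at hvs hvs'
    obtain ⟨rfl, heq'⟩ := hp hvs.1 hvs'.1 (by simpa using heq)
    obtain ⟨rfl, rfl⟩ := ih hvs.2 hvs'.2 (by simpa using hlength) heq'
    exact ⟨rfl, rfl⟩

theorem isDescent_flatten (hDs : ∀ D ∈ Ds, IsDescent ε h D) :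
    IsDescent ε (Ds.length * h) Ds.flatten := by
  induction Ds with
  | nil => simp
  | cons D Ds ih =>
    rw [List.forall_mem_cons] at hDs
    rw [List.length_cons, Nat.succ_mul, Nat.add_comm, List.flatten_cons, hDs.1.append_iff]
    exact ih hDs.2

theorem IsDescent.exists_eq_flatten (hV : IsDescent ε (k * h) V) :
    ∃ Ds : List (List Bool), Ds.length = k ∧ (∀ D ∈ Ds, IsDescent ε h D) ∧ V = Ds.flatten := by
  induction k generalizing V with
  | zero => exact ⟨[], rfl, by simp, by simpa using hV⟩
  | succ k ih =>
    rw [Nat.succ_mul, Nat.add_comm] at hV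
    obtain ⟨D, V, rfl, hD, hV⟩ := hV.exists_append
    obtain ⟨Ds, rfl, hDs, rfl⟩ := ih hV
    exact ⟨D :: Ds, rfl, List.forall_mem_cons.2 ⟨hD, hDs⟩, rfl⟩

/-- The word `u D₁ ⋯ u D_k` made from the list `[D₁, …, D_k]`; when each `D_i` descends by `ε`,
it is a sequence of `k` excursions. -/
def arches (Ds : List (List Bool)) : List Bool := (Ds.map (true :: ·)).flatten

theorem isExcursion_of_mem_map (hDs : ∀ D ∈ Ds, IsDescent ε ε D) :
    ∀ C ∈ Ds.map (true :: ·), IsExcursion ε C := by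
  simpa [isExcursion_cons_true_iff] using hDs

theorem exists_eq_map_of_isExcursion {Cs : List (List Bool)} (hCs : ∀ C ∈ Cs, IsExcursion ε C) :
    ∃ Ds : List (List Bool), (∀ D ∈ Ds, IsDescent ε ε D) ∧ Cs = Ds.map (true :: ·) := by
  induction Cs with
  | nil => exact ⟨[], by simp, rfl⟩
  | cons C Cs ih =>
    rw [List.forall_mem_cons] at hCs
    obtain ⟨⟨D, rfl, hD⟩, hCs⟩ := hCs
    obtain ⟨Ds, hDs, rfl⟩ := ih hCs
    exact ⟨D :: Ds, List.forall_mem_cons.2 ⟨hD, hDs⟩, rfl⟩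

theorem arches_append_inj {B B' : List Bool}
    (hDs : ∀ D ∈ Ds, IsDescent ε ε D) (hDs' : ∀ D ∈ Ds', IsDescent ε ε D)
    (hlength : Ds.length = Ds'.length) (heq : arches Ds ++ B = arches Ds' ++ B') :
    Ds = Ds' ∧ B = B' := by
  obtain ⟨hmap, rfl⟩ := flatten_append_inj IsExcursion.append_inj (isExcursion_of_mem_map hDs)
    (isExcursion_of_mem_map hDs') (by simpa using hlength) heq
  exact ⟨List.map_injective_iff.2 (List.cons_injective) hmap, rfl⟩

theorem arches_perm (Ds : List (List Bool)) :
    (arches Ds).Perm (List.replicate Ds.length true ++ Ds.flatten) := by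
  induction Ds with
  | nil => rfl
  | cons D Ds ih =>
    refine List.Perm.cons true ((ih.append_left D).trans ?_)
    simpa using (List.perm_append_comm (l₁ := D)
      (l₂ := List.replicate Ds.length true)).append_right Ds.flatten

theorem isDescent_arches_append_iff {m : ℕ} (hDs : ∀ D ∈ Ds, IsDescent ε ε D) :
    IsDescent ε (m + 1) (arches Ds ++ W) ↔ IsDescent ε (m + 1) W := by
  induction Ds with
  | nil => rfl
  | cons D Ds ih =>
    rw [List.forall_mem_cons] at hDs
    refine Iff.trans ?_ ((isExcursion_cons_true_iff.2 hDs.1).isDescent_append_iff.trans (ih hDs.2))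
    simp [arches]

theorem isDescent_replicate_true_append_iff {m : ℕ} :
    IsDescent ε (m + 1) (List.replicate k true ++ W) ↔ IsDescent ε (m + 1 + k * ε) W := by
  induction k generalizing m with
  | zero => simp
  | succ k ih =>
    rw [List.replicate_succ, List.cons_append, isDescent_succ_cons_true_iff, Nat.add_right_comm, ih]
    congr! 1
    ring

theorem append_arches_mem_dyckSet_iff (hε : ε ≤ 1) (hDs : ∀ D ∈ Ds, IsDescent ε ε D) :
    V ++ (arches Ds ++ W) ∈ DyckSet n ↔
      V ++ (List.replicate Ds.length true ++ (Ds.flatten ++ W)) ∈ DyckSet n := by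
  interval_cases ε
  · have hnil : Ds = List.replicate Ds.length [] :=
      List.eq_replicate_of_mem fun D hD => isDescent_zero_iff.1 (hDs D hD)
    rw [hnil]
    simp [arches]
  · rw [append_mem_dyckSet_congr (arches_perm Ds) fun m W => ?_, List.append_assoc]
    rw [isDescent_arches_append_iff hDs, List.append_assoc, isDescent_replicate_true_append_iff,
      Nat.add_comm (m + 1), (isDescent_flatten hDs).append_iff]

end DescentSequences

section Counting

variable {ε n k : ℕ}

theorem encard_isLeftPair (hε : ε ≤ 1) :
    {PQ : List Bool × List Bool | PQ.1 ∈ DyckSet n ∧ IsLeftPair ε (k + 1) PQ.1 PQ.2}.encard =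
      {AW : List Bool × List Bool |
        AW.1 ++ (List.replicate (k + 1) false ++ true :: AW.2) ∈ DyckSet n}.encard := by
  let I : Set (List Bool × List Bool × List Bool) := {t | IsDescent ε ε t.2.1 ∧
    t.1 ++ (List.replicate (k + 1) false ++ true :: (t.2.1 ++ t.2.2)) ∈ DyckSet n}
  have hpair : Set.BijOn (fun t : List Bool × List Bool × List Bool =>
      (t.1 ++ (List.replicate (k + 1) false ++ true :: (t.2.1 ++ t.2.2)),
        t.1 ++ true :: (t.2.1 ++ (List.replicate (k + 1) false ++ t.2.2)))) I
      {PQ | PQ.1 ∈ DyckSet n ∧ IsLeftPair ε (k + 1) PQ.1 PQ.2} := by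
    refine ⟨?_, ?_, ?_⟩
    · rintro ⟨A, D, B⟩ ⟨hD, hP⟩
      exact ⟨hP, A, true :: D, B, ⟨D, rfl, hD⟩, rfl, rfl⟩
    · rintro ⟨A, D, B⟩ ⟨hD, -⟩ ⟨A', D', B'⟩ ⟨hD', -⟩ heq
      obtain ⟨hP, hQ⟩ := Prod.mk.inj heq
      obtain rfl : A = A' := eq_of_first_difference hP hQ
      obtain ⟨rfl, rfl⟩ := hD.append_inj hD' (by simpa using hP)
      rfl
    · rintro ⟨P, Q⟩ ⟨hP, A, C, B, ⟨D, rfl, hD⟩, rfl, rfl⟩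
      exact ⟨(A, D, B), ⟨hD, hP⟩, rfl⟩
  have hword : Set.BijOn (fun t : List Bool × List Bool × List Bool => (t.1, t.2.1 ++ t.2.2)) I
      {AW | AW.1 ++ (List.replicate (k + 1) false ++ true :: AW.2) ∈ DyckSet n} := by
    refine ⟨fun _ => And.right, ?_, ?_⟩
    · rintro ⟨A, D, B⟩ ⟨hD, -⟩ ⟨A', D', B'⟩ ⟨hD', -⟩ heq
      obtain ⟨rfl, heq⟩ := Prod.mk.inj heq
      obtain ⟨rfl, rfl⟩ := hD.append_inj hD' heq
      rfl
    · rintro ⟨A, W⟩ hAW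
      have hW : altitude ε W ≤ -ε := by
        have hcut := altitude_one_nonpos_of_append_mem_dyckSet
          (V := A ++ List.replicate (k + 1) false) (W := true :: W) (by simpa using hAW)
        have := altitude_mono hε W
        rw [altitude_cons_true] at hcut
        lia
      obtain ⟨D, B, rfl, hD⟩ := exists_isDescent_append hW
      exact ⟨(A, D, B), ⟨hD, hAW⟩, rfl⟩
  rw [← Set.encard_congr hpair.equiv, Set.encard_congr hword.equiv]

/-- The Dyck words of size `n` with a marked factor `d u D₁ ⋯ u D_k`, each `D_i` descending by `ε`,
recorded as `(A, [D₁, …, D_k], B)` with `A` and `B` the rest of the word on either side. -/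
def archFactorizations (ε n k : ℕ) : Set (List Bool × List (List Bool) × List Bool) :=
  {t | t.2.1.length = k ∧ (∀ D ∈ t.2.1, IsDescent ε ε D) ∧
    t.1 ++ false :: (arches t.2.1 ++ t.2.2) ∈ DyckSet n}

theorem encard_isRightPair_eq_encard_archFactorizations :
    {PQ : List Bool × List Bool | PQ.1 ∈ DyckSet n ∧ IsRightPair ε (k + 1) PQ.1 PQ.2}.encard =
      (archFactorizations ε n (k + 1)).encard := by
  have hpair : Set.BijOn (fun t : List Bool × List (List Bool) × List Bool =>
      (t.1 ++ false :: (arches t.2.1 ++ t.2.2), t.1 ++ (arches t.2.1 ++ false :: t.2.2)))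
      (archFactorizations ε n (k + 1))
      {PQ | PQ.1 ∈ DyckSet n ∧ IsRightPair ε (k + 1) PQ.1 PQ.2} := by
    refine ⟨?_, ?_, ?_⟩
    · rintro ⟨A, Ds, B⟩ ⟨hlength, hDs, hP⟩
      exact ⟨hP, A, Ds.map (true :: ·), B, by simpa using hlength, isExcursion_of_mem_map hDs,
        rfl, rfl⟩
    · rintro ⟨A, Ds, B⟩ ⟨hlength, hDs, -⟩ ⟨A', Ds', B'⟩ ⟨hlength', hDs', -⟩ heq
      obtain ⟨hP, hQ⟩ := Prod.mk.inj heq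
      obtain rfl : A = A' := by
        obtain ⟨D, Es, rfl⟩ := List.exists_cons_of_length_eq_add_one hlength
        obtain ⟨D', Es', rfl⟩ := List.exists_cons_of_length_eq_add_one hlength'
        exact eq_of_first_difference hP hQ
      obtain ⟨rfl, rfl⟩ := arches_append_inj hDs hDs' (hlength.trans hlength'.symm)
        (List.cons_injective (List.append_cancel_left hP))
      rfl
    · rintro ⟨P, Q⟩ ⟨hP, A, Cs, B, hlength, hCs, rfl, rfl⟩
      obtain ⟨Ds, hDs, rfl⟩ := exists_eq_map_of_isExcursion hCs
      exact ⟨(A, Ds, B), ⟨by simpa using hlength, hDs, hP⟩, rfl⟩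
  exact (Set.encard_congr hpair.equiv).symm

theorem encard_archFactorizations (hε : ε ≤ 1) :
    (archFactorizations ε n k).encard = {AW : List Bool × List Bool |
      AW.1 ++ false :: (List.replicate k true ++ AW.2) ∈ DyckSet n}.encard := by
  have hmem {A B : List Bool} {Ds : List (List Bool)} (hlength : Ds.length = k)
      (hDs : ∀ D ∈ Ds, IsDescent ε ε D) : A ++ false :: (arches Ds ++ B) ∈ DyckSet n ↔
        A ++ false :: (List.replicate k true ++ (Ds.flatten ++ B)) ∈ DyckSet n := by
    simpa [hlength] using append_arches_mem_dyckSet_iff (V := A ++ [false]) (W := B) hε hDs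
  have hword : Set.BijOn (fun t : List Bool × List (List Bool) × List Bool =>
      (t.1, t.2.1.flatten ++ t.2.2)) (archFactorizations ε n k)
      {AW | AW.1 ++ false :: (List.replicate k true ++ AW.2) ∈ DyckSet n} := by
    refine ⟨?_, ?_, ?_⟩
    · rintro ⟨A, Ds, B⟩ ⟨hlength, hDs, hP⟩
      exact (hmem hlength hDs).1 hP
    · rintro ⟨A, Ds, B⟩ ⟨hlength, hDs, -⟩ ⟨A', Ds', B'⟩ ⟨hlength', hDs', -⟩ heq
      obtain ⟨rfl, heq⟩ := Prod.mk.inj heq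
      obtain ⟨rfl, rfl⟩ := flatten_append_inj IsDescent.append_inj hDs hDs'
        (hlength.trans hlength'.symm) heq
      rfl
    · rintro ⟨A, W⟩ hAW
      have hW : altitude ε W ≤ -(k * ε : ℕ) := by
        have hcut := altitude_one_nonpos_of_append_mem_dyckSet (V := A ++ [false])
          (W := List.replicate k true ++ W) (by simpa using hAW)
        have hups : altitude 1 (List.replicate k true) = k := by
          simp [altitude, List.count_replicate]
        have hmono := altitude_mono hε W
        have hkε := Nat.mul_le_mul_left k hε
        rw [altitude_append, hups] at hcut
        lia
      obtain ⟨E, B, rfl, hE⟩ := exists_isDescent_append hW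
      obtain ⟨Ds, hlength, hDs, rfl⟩ := hE.exists_eq_flatten
      exact ⟨(A, Ds, B), ⟨hlength, hDs, (hmem hlength hDs).2 hAW⟩, rfl⟩
  exact Set.encard_congr hword.equiv

theorem encard_isRightPair (hε : ε ≤ 1) :
    {PQ : List Bool × List Bool | PQ.1 ∈ DyckSet n ∧ IsRightPair ε (k + 1) PQ.1 PQ.2}.encard =
      {AW : List Bool × List Bool |
        AW.1 ++ false :: (List.replicate (k + 1) true ++ AW.2) ∈ DyckSet n}.encard :=
  encard_isRightPair_eq_encard_archFactorizations.trans (encard_archFactorizations hε)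

theorem IsRightPair.isLeftPair {P Q : List Bool} (h : IsRightPair ε 1 P Q) :
    IsLeftPair ε 1 P Q := by
  obtain ⟨A, Cs, B, hlength, hCs, rfl, rfl⟩ := h
  obtain ⟨C, rfl⟩ := List.length_eq_one_iff.1 hlength
  exact ⟨A, C, B, hCs C List.mem_cons_self, by simp, by simp⟩

theorem uniquePath_rotation_one_iff {P Q : List Bool} :
    UniquePath (Rotation ε) 1 P Q ↔ IsLeftPair ε 1 P Q :=
  (uniquePath_rotation_succ_iff (k := 0)).trans (or_iff_left_of_imp IsRightPair.isLeftPair)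

theorem IsLeftPair.not_isRightPair {P Q : List Bool} (h : IsLeftPair ε (k + 2) P Q) :
    ¬ IsRightPair ε (k + 2) P Q := by
  rintro ⟨A', Cs, B', hlength, hCs, hP, hQ⟩
  obtain ⟨A, C, B, ⟨D, rfl, -⟩, rfl, rfl⟩ := h
  obtain ⟨C', Cs, rfl⟩ := List.exists_cons_of_length_eq_add_one hlength
  obtain ⟨D', rfl, -⟩ := hCs C' List.mem_cons_self
  obtain rfl : A = A' := eq_of_first_difference hP hQ
  simp [List.replicate_succ] at hP

theorem encard_uniquePath_rotation :
    {PQ : List Bool × List Bool | PQ.1 ∈ DyckSet n ∧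
        UniquePath (Rotation ε) (k + 2) PQ.1 PQ.2}.encard =
      {PQ : List Bool × List Bool | PQ.1 ∈ DyckSet n ∧ IsLeftPair ε (k + 2) PQ.1 PQ.2}.encard +
      {PQ : List Bool × List Bool | PQ.1 ∈ DyckSet n ∧ IsRightPair ε (k + 2) PQ.1 PQ.2}.encard := by
  rw [← Set.encard_union_eq]
  · simp only [uniquePath_rotation_succ_iff, and_or_left, Set.ofPred_or]
  · exact Set.disjoint_left.2 fun PQ hleft hright => hleft.2.not_isRightPair hright.2

theorem encard_uniquePath_rotation_one_eq_zero (n k : ℕ) :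
    {PQ : List Bool × List Bool | PQ.1 ∈ DyckSet n ∧
        UniquePath (Rotation 1) k PQ.1 PQ.2}.encard =
      {PQ : List Bool × List Bool | PQ.1 ∈ DyckSet n ∧
        UniquePath (Rotation 0) k PQ.1 PQ.2}.encard := by
  match k with
  | 0 => simp only [uniquePath_zero_iff]
  | 1 =>
    simp only [uniquePath_rotation_one_iff]
    rw [encard_isLeftPair le_rfl, encard_isLeftPair zero_le_one]
  | k + 2 =>
    rw [encard_uniquePath_rotation, encard_uniquePath_rotation, encard_isLeftPair le_rfl,
      encard_isLeftPair zero_le_one, encard_isRightPair le_rfl, encard_isRightPair zero_le_one]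

end Counting

/-- the Tamari lattice and the Dyck lattice of size `n` have the same
number of linear intervals of any given height `k`. -/
theorem stmt2 (n : ℕ) (hn : 1 ≤ n) (k : ℕ) :
    {pq : List Bool × List Bool |
        LinearInterval (DyckSet n) (tamLE) pq.1 pq.2 ∧
          IntervalHeight (DyckSet n) (tamLE) pq.1 pq.2 (k)}.ncard = {pq : List Bool × List Bool |
        LinearInterval (DyckSet n) (dyckLE) pq.1 pq.2 ∧
          IntervalHeight (DyckSet n) (dyckLE) pq.1 pq.2 (k)}.ncard := by
  have hdyck : ∀ P ∈ DyckSet n, ∀ Q ∈ DyckSet n, (dyckLE P Q ↔ RotLE 0 P Q) :=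
    fun P hP Q hQ => dyckLE_iff_rotLE_zero hP hQ
  simp only [tamLE_eq_rotLE_one, linearInterval_congr hdyck, intervalHeight_congr hdyck,
    linearInterval_and_intervalHeight_rotLE_iff]
  exact congrArg ENat.toNat (encard_uniquePath_rotation_one_eq_zero n k)
end
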